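/- arXiv:2307.15512 — 4 statements merged into one kernel-verified Lean document; each statement's English description precedes it below -/
import Mathlib

section
/- If k = k(n) and p = p(n) > 0 are sequences satisfying k = ω(log n) and n/k ≥ p·C(n−1, k−1) = ω(log³ n), then there exists a constant C > 0 such that with high probability (probability tending to 1 as n → ∞) the cop number of the random hypergraph G^k(n,p) satisfies c(G^k(n,p)) ≤ C · √(n/k) · log n. -/
open scoped BigOperators

/-- A `k`-uniform hypergraph on vertex set `Fin n`. -/
structure KGraph (n k : ℕ) where
  edges : Finset (Finset (Fin n))
  uniform : ∀ e ∈ edges, e.card = k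

namespace KGraph

variable {n k : ℕ}

/-- A loose path of edges from `x` to `y`: a nonempty list of edges, the first containing `x`,
the last containing `y`, with consecutive edges intersecting. -/
def IsLoosePath (G : KGraph n k) (x y : Fin n) (l : List (Finset (Fin n))) : Prop :=
  l ≠ [] ∧ (∀ e ∈ l, e ∈ G.edges) ∧ (∀ e ∈ l.head?, x ∈ e) ∧
    (∀ e ∈ l.getLast?, y ∈ e) ∧ l.Chain' (fun e f => (e ∩ f).Nonempty)

/-- Distance between two vertices: the smallest length of a loose path between them
(`0` if they are equal, `⊤` if there is no such path). -/
noncomputable def dist (G : KGraph n k) (x y : Fin n) : ℕ∞ :=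
  if x = y then 0
  else sInf ((fun l : List (Finset (Fin n)) => (l.length : ℕ∞)) '' {l | G.IsLoosePath x y l})

/-- Distance between two sets of vertices: the minimum over pairs. -/
noncomputable def setDist (G : KGraph n k) (A B : Set (Fin n)) : ℕ∞ :=
  ⨅ (x ∈ A) (y ∈ B), G.dist x y

/-- The closed `r`-th vertex-neighbourhood of a set of vertices. -/
noncomputable def vNhd (G : KGraph n k) (A : Set (Fin n)) (r : ℕ) : Set (Fin n) :=
  {v | G.setDist A {v} ≤ (r : ℕ∞)}

/-- The set of vertices covered by a set of edges. -/
def VB (B : Set (Finset (Fin n))) : Set (Fin n) :=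
  ⋃ e ∈ B, (e : Set (Fin n))

/-- The closed `r`-th vertex-neighbourhood of a set of edges. -/
noncomputable def vNhdE (G : KGraph n k) (B : Set (Finset (Fin n))) (r : ℕ) : Set (Fin n) :=
  G.vNhd (VB B) r

/-- The closed `r`-th edge-neighbourhood of a set of vertices: edges within distance `r - 1`. -/
noncomputable def eNhd (G : KGraph n k) (A : Set (Fin n)) (r : ℕ) : Set (Finset (Fin n)) :=
  {e | e ∈ G.edges ∧ G.setDist (e : Set (Fin n)) A ≤ ((r - 1 : ℕ) : ℕ∞)}

/-- The average vertex degree of `G`. -/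
noncomputable def avgDeg (G : KGraph n k) : ℝ :=
  (∑ v : Fin n, ((G.vNhd {v} 1).ncard : ℝ)) / n

/-- A `k`-graph on `n` vertices with average vertex degree `d ≥ k` is `ξ`-expanding if
(A.1) edge-neighbourhoods of vertices are not too large, (A.2) vertex-neighbourhoods of vertex
sets have size comparable to `|A| d^r`, and (A.3) vertex-neighbourhoods of edge sets are large. -/
def IsExpanding (G : KGraph n k) (ξ : ℝ) : Prop :=
  (k : ℝ) ≤ G.avgDeg ∧
  (∀ v : Fin n, ∀ r : ℕ, 1 ≤ r → G.avgDeg ^ r ≤ Real.sqrt ((n : ℝ) * k) →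
    ((G.eNhd {v} r).ncard : ℝ) ≤ ξ⁻¹ * G.avgDeg ^ r / k) ∧
  (∀ A : Set (Fin n), ∀ r : ℕ, 1 ≤ r →
    ξ * min ((A.ncard : ℝ) * G.avgDeg ^ r) (n : ℝ) ≤ ((G.vNhd A r).ncard : ℝ) ∧
    ((G.vNhd A r).ncard : ℝ) ≤ ξ⁻¹ * (A.ncard : ℝ) * G.avgDeg ^ r) ∧
  (∀ B : Set (Finset (Fin n)), B ⊆ (G.edges : Set (Finset (Fin n))) → ∀ r : ℕ, 1 ≤ r →
    ξ * min ((B.ncard : ℝ) * k * G.avgDeg ^ r) (n : ℝ) ≤ ((G.vNhdE B r).ncard : ℝ))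

/-- `CopsWin G c r` : with the cops currently on the vertices `c i`, the robber on `r`, and the
cops to move, the cops have a strategy to catch the robber. Either a cop is already on the
robber's vertex; or the cops can move (each by distance at most 1) so that a cop lands on the
robber; or the cops can move so that whatever the robber's reply, the cops still win. -/
inductive CopsWin (G : KGraph n k) {m : ℕ} : (Fin m → Fin n) → Fin n → Prop
  | caught (c : Fin m → Fin n) (r : Fin n) (i : Fin m) (h : c i = r) : CopsWin G c r
  | stepCaught (c c' : Fin m → Fin n) (r : Fin n)
      (hmove : ∀ i, G.dist (c i) (c' i) ≤ 1) (i : Fin m) (h : c' i = r) : CopsWin G c r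
  | step (c c' : Fin m → Fin n) (r : Fin n)
      (hmove : ∀ i, G.dist (c i) (c' i) ≤ 1)
      (h : ∀ r' : Fin n, G.dist r r' ≤ 1 → CopsWin G c' r') : CopsWin G c r

/-- The cop number of `G` : the least `m` such that `m` cops can be initially placed so as to
catch the robber wherever he starts. -/
noncomputable def copNumber (G : KGraph n k) : ℕ :=
  sInf {m : ℕ | ∃ c₀ : Fin m → Fin n, ∀ r₀ : Fin n, CopsWin G c₀ r₀}

/-- `G` is connected if all pairs of vertices are at finite distance. -/
def Connected (G : KGraph n k) : Prop := ∀ x y : Fin n, G.dist x y ≠ ⊤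

end KGraph

open Classical in
/-- The probability that the binomial random `k`-uniform hypergraph `G^k(n,p)` (each `k`-subset
of `[n]` an edge independently with probability `p`) satisfies the property `Q`. -/
noncomputable def ghProb (n k : ℕ) (p : ℝ) (Q : KGraph n k → Prop) : ℝ :=
  ∑ E ∈ (Finset.powersetCard k (Finset.univ : Finset (Fin n))).powerset,
    if h : ∀ e ∈ E, e.card = k then
      (if Q ⟨E, h⟩ then
        p ^ E.card * (1 - p) ^ ((Finset.powersetCard k (Finset.univ : Finset (Fin n))).card - E.card)
      else 0)
    else 0

namespace CopAux
open Finset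

/-- closed neighbourhood of a vertex set in an edge set -/
noncomputable def nb {n : ℕ} (E : Finset (Finset (Fin n))) (A : Finset (Fin n)) : Finset (Fin n) :=
  A ∪ (E.filter (fun e => ¬ Disjoint e A)).biUnion id

variable {n : ℕ} {E : Finset (Finset (Fin n))}

lemma mem_nb {A : Finset (Fin n)} {y : Fin n} :
    y ∈ nb E A ↔ y ∈ A ∨ ∃ e ∈ E, (∃ x ∈ A, x ∈ e) ∧ y ∈ e := by
  simp only [nb, mem_union, mem_biUnion, mem_filter, id, Finset.not_disjoint_iff]
  constructor
  · rintro (h | ⟨e, ⟨he, x, hx, hxA⟩, hy⟩)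
    · exact Or.inl h
    · exact Or.inr ⟨e, he, ⟨x, hxA, hx⟩, hy⟩
  · rintro (h | ⟨e, he, ⟨x, hxA, hx⟩, hy⟩)
    · exact Or.inl h
    · exact Or.inr ⟨e, ⟨he, x, hx, hxA⟩, hy⟩

lemma subset_nb (A : Finset (Fin n)) : A ⊆ nb E A := subset_union_left

lemma mem_nb_single {x y : Fin n} :
    y ∈ nb E {x} ↔ x = y ∨ ∃ e ∈ E, x ∈ e ∧ y ∈ e := by
  rw [mem_nb]; simp [eq_comm]

lemma nb_symm {x y : Fin n} : y ∈ nb E {x} ↔ x ∈ nb E {y} := by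
  rw [mem_nb_single, mem_nb_single]
  constructor <;> rintro (h | ⟨e, he, h1, h2⟩)
  · exact Or.inl h.symm
  · exact Or.inr ⟨e, he, h2, h1⟩
  · exact Or.inl h.symm
  · exact Or.inr ⟨e, he, h2, h1⟩

lemma mem_nb_iff {A : Finset (Fin n)} {y : Fin n} :
    y ∈ nb E A ↔ ∃ x ∈ A, y ∈ nb E {x} := by
  rw [mem_nb]
  constructor
  · rintro (h | ⟨e, he, ⟨x, hx, hxe⟩, hy⟩)
    · exact ⟨y, h, mem_nb_single.2 (Or.inl rfl)⟩
    · exact ⟨x, hx, mem_nb_single.2 (Or.inr ⟨e, he, hxe, hy⟩)⟩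
  · rintro ⟨x, hx, h⟩
    rcases mem_nb_single.1 h with rfl | ⟨e, he, h1, h2⟩
    · exact Or.inl hx
    · exact Or.inr ⟨e, he, ⟨x, hx, h1⟩, h2⟩

lemma nb_mono {A B : Finset (Fin n)} (h : A ⊆ B) : nb E A ⊆ nb E B := by
  intro y hy
  obtain ⟨x, hx, h1⟩ := mem_nb_iff.1 hy
  exact mem_nb_iff.2 ⟨x, h hx, h1⟩

lemma mem_iter {A : Finset (Fin n)} {y : Fin n} (r : ℕ) :
    y ∈ (nb E)^[r] A ↔ ∃ x ∈ A, y ∈ (nb E)^[r] {x} := by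
  induction r generalizing y with
  | zero => simp
  | succ r ih =>
    simp only [Function.iterate_succ_apply']
    rw [mem_nb_iff]
    constructor
    · rintro ⟨z, hz, h⟩
      obtain ⟨x, hx, h2⟩ := ih.1 hz
      exact ⟨x, hx, mem_nb_iff.2 ⟨z, h2, h⟩⟩
    · rintro ⟨x, hx, h⟩
      obtain ⟨z, hz, h2⟩ := mem_nb_iff.1 h
      exact ⟨z, ih.2 ⟨x, hx, hz⟩, h2⟩

lemma iter_symm {x y : Fin n} (r : ℕ) : y ∈ (nb E)^[r] {x} ↔ x ∈ (nb E)^[r] {y} := by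
  induction r generalizing x y with
  | zero => simp [eq_comm]
  | succ r ih =>
    rw [Function.iterate_succ_apply', Function.iterate_succ_apply, mem_nb_iff, mem_iter]
    constructor
    · rintro ⟨z, hz, h⟩
      exact ⟨z, nb_symm.1 h, ih.1 hz⟩
    · rintro ⟨z, hz, h⟩
      exact ⟨z, ih.2 h, nb_symm.1 hz⟩

lemma dist_le_one {k : ℕ} (G : KGraph n k) (x y : Fin n) (h : y ∈ nb G.edges {x}) :
    G.dist x y ≤ 1 := by
  unfold KGraph.dist
  split_ifs with hxy
  · exact bot_le
  · rcases mem_nb_single.1 h with h | ⟨e, he, h1, h2⟩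
    · exact absurd h hxy
    · apply sInf_le
      refine ⟨[e], ⟨by simp, by simpa using he, by simpa using h1, by simpa using h2, List.isChain_singleton _⟩, by simp⟩

lemma of_dist_le_one {k : ℕ} (G : KGraph n k) (x y : Fin n) (h : G.dist x y ≤ 1) :
    y ∈ nb G.edges {x} := by
  unfold KGraph.dist at h
  rw [mem_nb_single]
  split_ifs at h with hxy
  · exact Or.inl hxy
  · right
    by_contra hne
    have : (2 : ℕ∞) ≤ sInf ((fun l : List (Finset (Fin n)) => (l.length : ℕ∞)) '' {l | G.IsLoosePath x y l}) := by
      apply le_sInf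
      rintro _ ⟨l, ⟨h1, h2, h3, h4, h5⟩, rfl⟩
      match l, h1, h2, h3, h4 with
      | [e], _, h2, h3, h4 =>
        exact absurd ⟨e, h2 e (by simp), h3 e (by simp), h4 e (by simp)⟩ hne
      | _ :: _ :: l, _, _, _, _ =>
        simp only [List.length_cons]
        exact_mod_cast (by omega : 2 ≤ l.length + 1 + 1)
    have h21 := this.trans h
    exact absurd h21 (by decide)

lemma dist_self_le {k : ℕ} (G : KGraph n k) (x : Fin n) : G.dist x x ≤ 1 :=
  dist_le_one G x x (mem_nb_single.2 (Or.inl rfl))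

lemma copsWin_walk {k : ℕ} (G : KGraph n k) {m : ℕ} (t : Fin m → Fin n) (r : ℕ) :
    ∀ (c : Fin m → Fin n) (v : Fin n), (∀ i, t i ∈ (nb G.edges)^[r] {c i}) →
    (∀ u ∈ (nb G.edges)^[r] {v}, G.CopsWin t u) → G.CopsWin c v := by
  induction r with
  | zero =>
    intro c v h1 h2
    have : t = c := by funext i; simpa using h1 i
    subst this
    exact h2 v (by simp)
  | succ r ih =>
    intro c v h1 h2
    have h3 : ∀ i, ∃ z, z ∈ nb G.edges {c i} ∧ t i ∈ (nb G.edges)^[r] {z} := by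
      intro i
      have := h1 i
      rw [Function.iterate_succ_apply, mem_iter] at this
      exact this
    choose c' hc' ht using h3
    refine KGraph.CopsWin.step c c' v (fun i => dist_le_one G _ _ (hc' i)) ?_
    intro v' hv'
    refine ih c' v' ht ?_
    intro u hu
    apply h2
    rw [Function.iterate_succ_apply, mem_iter]
    exact ⟨v', of_dist_le_one G _ _ hv', hu⟩

/-- winning strategy from an assignment -/
lemma copsWin_of_assign {k : ℕ} (G : KGraph n k) {m : ℕ} (c : Fin m → Fin n) (v : Fin n) (r : ℕ)
    {ι : Type*} (J : Finset ι) (F : ι → Finset (Fin n))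
    (h1 : ∀ u ∈ (nb G.edges)^[r] {v}, ∃ j ∈ J, F j ⊆ nb G.edges {u})
    (f : J → Fin m) (hf : Function.Injective f)
    (h2 : ∀ j : J, c (f j) ∈ (nb G.edges)^[r] (F j)) : G.CopsWin c v := by
  classical
  have h3 : ∀ i, ∃ z, z ∈ (nb G.edges)^[r] {c i} ∧ (∀ j : J, f j = i → z ∈ F j) := by
    intro i
    by_cases hi : ∃ j, f j = i
    · obtain ⟨j, rfl⟩ := hi
      obtain ⟨x, hx, hx2⟩ := (mem_iter r).1 (h2 j)
      refine ⟨x, (iter_symm r).1 hx2, ?_⟩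
      intro j' hj'
      rw [hf hj']; exact hx
    · refine ⟨c i, ?_, fun j hj => absurd ⟨j, hj⟩ hi⟩
      clear h2 h1 hi
      induction r with
      | zero => simp
      | succ r ih => rw [Function.iterate_succ_apply']; exact subset_nb _ ih
  choose t ht1 ht2 using h3
  refine copsWin_walk G t r c v ht1 ?_
  intro u hu
  obtain ⟨j, hj, hF⟩ := h1 u hu
  have h4 : t (f ⟨j, hj⟩) ∈ nb G.edges {u} := hF (ht2 _ ⟨j, hj⟩ rfl)
  refine KGraph.CopsWin.stepCaught t (Function.update t (f ⟨j, hj⟩) u) u ?_ (f ⟨j, hj⟩) (by simp)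
  intro i
  by_cases hi : i = f ⟨j, hj⟩
  · subst hi
    simp only [Function.update_self]
    exact dist_le_one G _ _ (nb_symm.1 h4)
  · rw [Function.update_of_ne hi]
    exact dist_self_le G _

end CopAux

namespace CopAux
open Finset

lemma exp_le_two {z : ℝ} (h0 : 0 ≤ z) (h1 : z ≤ 1) : Real.exp z ≤ 1 + z + z ^ 2 := by
  have := Real.abs_exp_sub_one_sub_id_le (x := z) (by rw [abs_of_nonneg h0]; exact h1)
  have := (abs_le.1 this).2
  linarith

lemma sum_nonempty_pow {α : Type*} [DecidableEq α] (T : Finset α) (y : ℝ) (hy : 0 ≤ y) (h : y * T.card ≤ 1) :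
    ∑ B ∈ T.powerset.filter (fun B => B.Nonempty), y ^ B.card ≤ 2 * (y * T.card) := by
  have h1 : ∑ B ∈ T.powerset, y ^ B.card = (1 + y) ^ T.card := by
    have := Finset.prod_one_add (f := fun _ : α => y) T
    simp only [prod_const] at this
    exact this.symm
  have h2 : ∑ B ∈ T.powerset.filter (fun B => B.Nonempty), y ^ B.card + 1 ≤ ∑ B ∈ T.powerset, y ^ B.card := by
    rw [← Finset.sum_filter_add_sum_filter_not T.powerset (fun B => B.Nonempty)]
    gcongr
    have : (∅ : Finset α) ∈ T.powerset.filter (fun B => ¬ B.Nonempty) := by simp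
    calc (1:ℝ) = y ^ (∅ : Finset α).card := by simp
      _ ≤ _ := Finset.single_le_sum (f := fun B : Finset α => y ^ B.card) (fun i _ => by positivity) this
  have h3 : (1 + y) ^ T.card ≤ Real.exp (y * T.card) := by
    rw [mul_comm, Real.exp_nat_mul]
    gcongr
    linarith [Real.add_one_le_exp y]
  have h4 := exp_le_two (z := y * T.card) (by positivity) h
  have h5 : (y * T.card) ^ 2 ≤ y * T.card := by
    have : 0 ≤ y * T.card := by positivity
    nlinarith
  linarith

open Classical in
lemma count_bad {n K : ℕ} (hn : 0 < n) (S : Finset (Fin n)) (b : ℕ) :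
    ((univ.filter (fun c : Fin K → Fin n => (univ.filter (fun i => c i ∈ S)).card < b)).card : ℝ)
      ≤ (n : ℝ) ^ K * (2 ^ b * Real.exp (-(K * (S.card : ℝ) / (2 * n)))) := by
  have hn' : (0:ℝ) < n := by exact_mod_cast hn
  have h1 : ∑ c : Fin K → Fin n, ∏ i, (if c i ∈ S then (1/2 : ℝ) else 1) = (n - (S.card:ℝ) / 2) ^ K := by
    rw [← Fintype.sum_pow (fun a : Fin n => if a ∈ S then (1/2 : ℝ) else 1) K]
    congr 1
    rw [Finset.sum_ite]
    simp only [sum_const, nsmul_eq_mul, mul_one]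
    have e1 : (univ.filter (fun a => a ∈ S)) = S := by ext; simp
    have e2 : (univ.filter (fun a => a ∉ S)) = univ \ S := by ext; simp
    rw [e1, e2, Finset.card_sdiff_of_subset (subset_univ _), Nat.cast_sub (card_le_card (subset_univ _))]
    simp
    ring
  have h2 : ∀ c : Fin K → Fin n, ∏ i, (if c i ∈ S then (1/2 : ℝ) else 1)
      = (1/2) ^ (univ.filter (fun i => c i ∈ S)).card := by
    intro c
    rw [Finset.prod_ite]; simp
  have h3 : ((univ.filter (fun c : Fin K → Fin n => (univ.filter (fun i => c i ∈ S)).card < b)).card : ℝ) * (1/2)^b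
     ≤ (n - (S.card:ℝ) / 2) ^ K := by
    rw [← h1, ← nsmul_eq_mul, ← Finset.sum_const]
    calc _ ≤ ∑ c ∈ univ.filter (fun c : Fin K → Fin n => (univ.filter (fun i => c i ∈ S)).card < b),
            ∏ i, (if c i ∈ S then (1/2 : ℝ) else 1) := by
          apply Finset.sum_le_sum
          intro c hc
          rw [h2]
          have : (univ.filter (fun i => c i ∈ S)).card < b := by simpa using hc
          exact pow_le_pow_of_le_one (by norm_num) (by norm_num) this.le
      _ ≤ _ := by
          apply Finset.sum_le_sum_of_subset_of_nonneg (filter_subset _ _)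
          intro c _ _
          rw [h2]; positivity
  have hS : (S.card : ℝ) ≤ n := by
    have := card_le_univ S
    simp at this
    exact_mod_cast this
  have h4 : (n - (S.card:ℝ) / 2) ^ K ≤ (n:ℝ)^K * Real.exp (-(K * (S.card : ℝ) / (2 * n))) := by
    have : -(K * (S.card : ℝ) / (2 * n)) = K * (-(S.card : ℝ) / (2 * n)) := by ring
    rw [this, Real.exp_nat_mul, ← mul_pow]
    apply pow_le_pow_left₀ (by linarith)
    have := Real.add_one_le_exp (-(S.card : ℝ) / (2 * n))
    calc (n:ℝ) - (S.card:ℝ) / 2 = n * (-(S.card : ℝ) / (2 * n) + 1) := by field_simp; ring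
      _ ≤ _ := by gcongr
  have h5 : (2:ℝ)^b * (1/2)^b = 1 := by rw [← mul_pow]; norm_num
  calc _ = ((univ.filter (fun c : Fin K → Fin n => (univ.filter (fun i => c i ∈ S)).card < b)).card : ℝ) * (1/2)^b * 2^b := by
        rw [mul_assoc, mul_comm ((1/2:ℝ)^b), h5, mul_one]
    _ ≤ ((n:ℝ)^K * Real.exp (-(K * (S.card : ℝ) / (2 * n)))) * 2^b := by
        exact mul_le_mul_of_nonneg_right (h3.trans h4) (by positivity)
    _ = _ := by ring

open Classical in
lemma exists_placement {n K : ℕ} (hn : 0 < n) {ι : Type} (J : Fin n → Finset ι)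
    (R : ι → Finset (Fin n)) (x : ℝ)
    (h1 : ∀ v, ∀ B ⊆ J v, B.Nonempty → x * B.card ≤ K * ((B.biUnion R).card : ℝ) / n)
    (h2 : ∀ v, 2 * Real.exp (-(x / 2)) * ((J v).card : ℝ) ≤ 1 / (4 * n)) :
    ∃ c : Fin K → Fin n, ∀ v, ∃ f : J v → Fin K, Function.Injective f ∧ ∀ j : J v, c (f j) ∈ R j := by
  have hn' : (1:ℝ) ≤ n := by exact_mod_cast hn
  set y := 2 * Real.exp (-(x / 2)) with hy
  have hy0 : 0 ≤ y := by positivity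
  set bad : Fin n → Finset ι → Finset (Fin K → Fin n) := fun v B =>
    univ.filter (fun c : Fin K → Fin n => (univ.filter (fun i => c i ∈ B.biUnion R)).card < B.card)
  have hbad : ∀ v, ∀ B ⊆ J v, B.Nonempty → ((bad v B).card : ℝ) ≤ (n:ℝ)^K * y ^ B.card := by
    intro v B hB hne
    refine (count_bad hn (B.biUnion R) B.card).trans ?_
    gcongr
    rw [hy, mul_pow, ← Real.exp_nat_mul]
    gcongr
    have := h1 v B hB hne
    have e : K * ((B.biUnion R).card : ℝ) / (2 * n) = (K * ((B.biUnion R).card : ℝ) / n) / 2 := by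
      field_simp
    rw [e]; linarith
  set Bad := (univ : Finset (Fin n)).biUnion (fun v => ((J v).powerset.filter (fun B => B.Nonempty)).biUnion (bad v))
  have hB : (Bad.card : ℝ) < (n:ℝ)^K := by
    calc (Bad.card : ℝ) ≤ ∑ v : Fin n, ∑ B ∈ (J v).powerset.filter (fun B => B.Nonempty), ((bad v B).card : ℝ) := by
          have h := (Finset.card_biUnion_le (s := (univ : Finset (Fin n))) (t := fun v => ((J v).powerset.filter (fun B => B.Nonempty)).biUnion (bad v)))
          have h' : ∑ v : Fin n, (((J v).powerset.filter (fun B => B.Nonempty)).biUnion (bad v)).card ≤ ∑ v : Fin n, ∑ B ∈ (J v).powerset.filter (fun B => B.Nonempty), (bad v B).card :=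
            Finset.sum_le_sum (fun v _ => Finset.card_biUnion_le)
          exact_mod_cast h.trans h'
      _ ≤ ∑ v : Fin n, (n:ℝ)^K * (1 / (2 * n)) := by
          apply Finset.sum_le_sum
          intro v _
          calc _ ≤ ∑ B ∈ (J v).powerset.filter (fun B => B.Nonempty), (n:ℝ)^K * y ^ B.card := by
                apply Finset.sum_le_sum
                intro B hB
                simp only [mem_filter, mem_powerset] at hB
                exact hbad v B hB.1 hB.2
            _ ≤ _ := by
                rw [← Finset.mul_sum]
                gcongr
                have h4 : (1:ℝ) / (4 * n) ≤ 1 := by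
                  rw [div_le_one (by positivity)]; linarith
                refine (sum_nonempty_pow (J v) y hy0 ((h2 v).trans h4)).trans ?_
                have := h2 v
                calc 2 * (y * (J v).card) ≤ 2 * (1 / (4 * n)) := by linarith
                  _ = _ := by field_simp; norm_num
      _ = (n:ℝ)^K / 2 := by
          simp; field_simp
      _ < _ := by
          have : (0:ℝ) < (n:ℝ)^K := by positivity
          linarith
  have hex : ∃ c, c ∉ Bad := by
    by_contra hcon
    push Not at hcon
    have : Bad = univ := by ext c; simp [hcon c]
    rw [this] at hB
    simp at hB
  obtain ⟨c, hc⟩ := hex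
  refine ⟨c, fun v => ?_⟩
  have hall := (Finset.all_card_le_biUnion_card_iff_exists_injective
    (fun j : J v => univ.filter (fun i => c i ∈ R j))).1 ?_
  · obtain ⟨f, hf, h⟩ := hall
    refine ⟨f, hf, fun j => ?_⟩
    simpa using h j
  · intro s
    by_cases hs : s.Nonempty
    swap
    · rw [not_nonempty_iff_eq_empty] at hs; subst hs; simp
    set B : Finset ι := s.map (Function.Embedding.subtype _)
    have hcB : c ∉ bad v B := by
      intro h
      apply hc
      simp only [Bad, mem_biUnion, mem_univ, true_and, mem_filter, mem_powerset]
      refine ⟨v, B, ⟨?_, ?_⟩, h⟩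
      · intro j hj
        simp only [B, mem_map] at hj
        obtain ⟨j', _, rfl⟩ := hj
        exact j'.2
      · exact hs.map
    simp only [bad, mem_filter, mem_univ, true_and, not_lt] at hcB
    calc s.card = B.card := by simp [B]
      _ ≤ _ := hcB
      _ ≤ _ := by
        apply Finset.card_le_card
        intro i hi
        simp only [mem_filter, mem_univ, true_and, mem_biUnion, B, mem_map] at hi ⊢
        obtain ⟨_, ⟨j, hj, rfl⟩, h⟩ := hi
        exact ⟨j, hj, h⟩

end CopAux

namespace CopAux
open Finset

lemma weak_ext {α : Type*} (A : Finset α) (hA : A.Nonempty) (f : Finset α → ℕ) (x N : ℝ)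
    (hx : 0 < x) (hxN : x ≤ N) (hmono : ∀ B ⊆ A, f B ≤ f A)
    (h : ∀ B ⊆ A, B.Nonempty → (B.card : ℝ) * x ≤ N → (B.card : ℝ) * x / 8 ≤ f B) :
    min ((A.card : ℝ) * x) N / 16 ≤ f A := by
  by_cases hc : (A.card : ℝ) * x ≤ N
  · have h1 := h A (Subset.refl _) hA hc
    have : min ((A.card : ℝ) * x) N ≤ (A.card : ℝ) * x := min_le_left _ _
    have h0 : 0 ≤ (A.card : ℝ) * x := by positivity
    linarith
  · push Not at hc
    have h1 : 1 ≤ N / x := by rwa [one_le_div hx]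
    have h2 : 1 ≤ ⌊N / x⌋₊ := by rw [Nat.one_le_floor_iff]; exact h1
    have h3 : ⌊N / x⌋₊ ≤ A.card := by
      have : N / x ≤ A.card := by rw [div_le_iff₀ hx]; exact hc.le
      exact Nat.floor_le_of_le this
    obtain ⟨B, hB, hBc⟩ := Finset.exists_subset_card_eq h3
    have h4 : (⌊N / x⌋₊ : ℝ) ≤ N / x := Nat.floor_le (by linarith)
    have h5 : N / x < ⌊N / x⌋₊ + 1 := Nat.lt_floor_add_one _
    have h6 : (1:ℝ) ≤ (⌊N / x⌋₊ : ℝ) := by exact_mod_cast h2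
    have h7 : N / x ≤ 2 * (⌊N / x⌋₊ : ℝ) := by linarith
    rw [div_le_iff₀ hx] at h7
    rw [le_div_iff₀ hx] at h4
    have h8 := h B hB (by rw [← card_pos]; omega) (by rw [hBc]; exact h4)
    have h9 : (f B : ℝ) ≤ f A := by exact_mod_cast hmono B hB
    rw [hBc] at h8
    have : min ((A.card : ℝ) * x) N ≤ N := min_le_right _ _
    linarith

structure Good (n k : ℕ) (L D : ℝ) (E : Finset (Finset (Fin n))) : Prop where
  g1 : ∀ v, ((E.filter (fun e => v ∈ e)).card : ℝ) ≤ (1 + 2 / L) * D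
  g2 : ∀ A : Finset (Fin n), A.Nonempty → (A.card : ℝ) * (k * D) ≤ n / L →
    (1 - 9 / L) * (A.card * (k * D)) ≤ (nb E A).card
  g3 : ∀ A : Finset (Fin n), A.Nonempty → (A.card : ℝ) * (k * D) ≤ n →
    (A.card * (k * D)) / 8 ≤ (nb E A).card
  g4 : ∀ B ⊆ E, B.Nonempty → (B.card : ℝ) * k ≤ n →
    (B.card : ℝ) * k / 8 ≤ (B.biUnion id).card

variable {n k : ℕ} {L D : ℝ} {E : Finset (Finset (Fin n))}

lemma Good.weak (h : Good n k L D E) (hd : 0 < k * D) (hdn : k * D ≤ n)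
    (A : Finset (Fin n)) (hA : A.Nonempty) :
    min ((A.card : ℝ) * (k * D)) n / 16 ≤ (nb E A).card :=
  weak_ext A hA (fun A => (nb E A).card) _ _ hd hdn (fun _ hB => card_le_card (nb_mono hB))
    (fun B _ hB hc => h.g3 B hB hc)

lemma Good.edges (h : Good n k L D E) (hk : 0 < k) (hdn : k ≤ n)
    (B : Finset (Finset (Fin n))) (hBE : B ⊆ E) (hA : B.Nonempty) :
    min ((B.card : ℝ) * k) n / 16 ≤ (B.biUnion id).card :=
  weak_ext B hA (fun A => (A.biUnion id).card) _ _ (by exact_mod_cast hk) (by exact_mod_cast hdn)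
    (fun _ hB => card_le_card (biUnion_subset_biUnion_of_subset_left _ hB))
    (fun B' hB' hB hc => h.g4 B' (hB'.trans hBE) hB hc)

lemma iter_nonempty {A : Finset (Fin n)} (hA : A.Nonempty) (r : ℕ) : ((nb E)^[r] A).Nonempty := by
  induction r with
  | zero => simpa
  | succ r ih => rw [Function.iterate_succ_apply']; exact ih.mono (subset_nb _)

lemma Good.iter (h : Good n k L D E) (hL : 100 ≤ L) (hd : 16 * L ≤ k * D) (hdn : k * D ≤ n)
    (A : Finset (Fin n)) (hA : A.Nonempty) (i : ℕ) :
    min ((1 - 9 / L) ^ i * (A.card * (k * D) ^ i)) (n / (k * D)) ≤ (((nb E)^[i] A).card : ℝ) := by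
  set d : ℝ := k * D with hdd
  have hd0 : 0 < d := by linarith
  have hL0 : 0 < L := by linarith
  have hn0 : (0:ℝ) < n := by linarith
  have h9 : 9 / L ≤ 9/100 := by
    rw [div_le_div_iff₀ hL0 (by norm_num)]; linarith
  have hnd : (n:ℝ) / d ≤ n / 1600 := by
    gcongr; linarith
  induction i with
  | zero => simp
  | succ i ih =>
    rw [Function.iterate_succ_apply']
    set S := (nb E)^[i] A
    have hS : S.Nonempty := iter_nonempty hA i
    by_cases hc : (S.card : ℝ) * d ≤ n / L
    · have h2 := h.g2 S hS hc
      rcases min_le_iff.1 ih with ih | ih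
      · refine (min_le_left _ _).trans (le_trans ?_ h2)
        calc (1 - 9 / L) ^ (i+1) * (A.card * d ^ (i+1)) =
            (1 - 9 / L) * ((1 - 9 / L) ^ i * (A.card * d ^ i) * d) := by ring
          _ ≤ _ := by
            apply mul_le_mul_of_nonneg_left _ (by linarith)
            exact mul_le_mul_of_nonneg_right ih hd0.le
      · exfalso
        rw [div_le_iff₀ hd0] at ih
        have : (n:ℝ) / L ≤ n / 100 := by gcongr
        linarith
    · push Not at hc
      have h2 := h.weak hd0 hdn S hS
      refine (min_le_right _ _).trans (le_trans ?_ h2)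
      have h3 : (n:ℝ) / L ≤ min (S.card * d) n := by
        refine le_min hc.le ?_
        exact div_le_self hn0.le (by linarith)
      have h4 : (n:ℝ) / d ≤ n / (16 * L) := by gcongr
      calc _ ≤ _ := h4
        _ = n / L / 16 := by field_simp
        _ ≤ _ := by gcongr

lemma Good.iter_succ (h : Good n k L D E) (hL : 100 ≤ L) (hd : 16 * L ≤ k * D) (hdn : k * D ≤ n)
    (A : Finset (Fin n)) (hA : A.Nonempty) (i : ℕ) (hi : (i:ℝ) ≤ L) :
    Real.exp (-18) / 16 * min ((A.card : ℝ) * (k * D) ^ (i+1)) n ≤ (((nb E)^[i+1] A).card : ℝ) := by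
  have h1 := h.iter hL hd hdn A hA i
  set d : ℝ := k * D with hdd
  have hd0 : 0 < d := by linarith
  have hL0 : 0 < L := by linarith
  have hn0 : (0:ℝ) < n := by linarith
  rw [Function.iterate_succ_apply']
  set S := (nb E)^[i] A
  have hS : S.Nonempty := iter_nonempty hA i
  have h2 := h.weak hd0 hdn S hS
  refine le_trans ?_ h2
  have h9 : 9 / L ≤ 9/100 := by
    rw [div_le_div_iff₀ hL0 (by norm_num)]; linarith
  have h90 : 0 ≤ 9 / L := by positivity
  have h3 : Real.exp (-18) ≤ (1 - 9 / L) ^ i := by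
    have : Real.exp (-(18 / L)) ≤ 1 - 9 / L := by
      rw [Real.exp_neg, inv_le_comm₀ (Real.exp_pos _) (by linarith)]
      have e1 : (18:ℝ)/L = 2 * (9 / L) := by ring
      have e2 := Real.add_one_le_exp (18 / L)
      refine le_trans ?_ e2
      rw [e1]
      rw [inv_le_iff_one_le_mul₀ (by linarith)]
      nlinarith
    calc Real.exp (-18) ≤ Real.exp (i * (-(18 / L))) := by
          apply Real.exp_le_exp.2
          have : (i:ℝ) * (18 / L) ≤ 18 := by
            rw [← mul_div_assoc, div_le_iff₀ hL0]; linarith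
          linarith
      _ = Real.exp (-(18 / L)) ^ i := by rw [Real.exp_nat_mul]
      _ ≤ _ := by gcongr
  have h18 : Real.exp (-18) ≤ 1 := Real.exp_le_one_iff.2 (by norm_num)
  have e0 := Real.exp_pos (-18)
  suffices Real.exp (-18) * min ((A.card : ℝ) * d ^ (i+1)) n ≤ min ((S.card : ℝ) * d) n by linarith
  have hm1 : min ((A.card : ℝ) * d ^ (i+1)) n ≤ (A.card : ℝ) * d ^ (i+1) := min_le_left _ _
  have hm2 : min ((A.card : ℝ) * d ^ (i+1)) (n:ℝ) ≤ n := min_le_right _ _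
  have hmn : Real.exp (-18) * min ((A.card : ℝ) * d ^ (i+1)) n ≤ n := by
    calc _ ≤ Real.exp (-18) * n := by gcongr
      _ ≤ 1 * n := by gcongr
      _ = n := one_mul _
  refine le_min ?_ hmn
  rcases min_le_iff.1 h1 with h1 | h1
  · calc _ ≤ Real.exp (-18) * ((A.card : ℝ) * d ^ (i+1)) := by gcongr
      _ ≤ (1 - 9 / L) ^ i * ((A.card : ℝ) * d ^ (i+1)) := by gcongr
      _ = (1 - 9 / L) ^ i * ((A.card : ℝ) * d ^ i) * d := by ring
      _ ≤ _ := by gcongr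
  · rw [div_le_iff₀ hd0] at h1
    exact hmn.trans h1

/-- upper bounds -/
lemma Good.edge_upper (h : Good n k L D E) (A : Finset (Fin n)) :
    ((E.filter (fun e => ¬ Disjoint e A)).card : ℝ) ≤ (1 + 2 / L) * D * A.card := by
  have : E.filter (fun e => ¬ Disjoint e A) ⊆ A.biUnion (fun v => E.filter (fun e => v ∈ e)) := by
    intro e he
    simp only [mem_filter, Finset.not_disjoint_iff, mem_biUnion] at he ⊢
    obtain ⟨he, v, h1, h2⟩ := he
    exact ⟨v, h2, he, h1⟩
  calc _ ≤ ((A.biUnion (fun v => E.filter (fun e => v ∈ e))).card : ℝ) := by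
        exact_mod_cast card_le_card this
    _ ≤ ∑ v ∈ A, ((E.filter (fun e => v ∈ e)).card : ℝ) := by exact_mod_cast card_biUnion_le
    _ ≤ ∑ v ∈ A, (1 + 2 / L) * D := sum_le_sum (fun v _ => h.g1 v)
    _ = _ := by simp; ring

lemma nb_eq (hiso : ∀ v, ∃ e ∈ E, v ∈ e) (A : Finset (Fin n)) :
    nb E A = (E.filter (fun e => ¬ Disjoint e A)).biUnion id := by
  apply union_eq_right.2
  intro v hv
  obtain ⟨e, he, hve⟩ := hiso v
  simp only [mem_biUnion, mem_filter, Finset.not_disjoint_iff, id]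
  exact ⟨e, ⟨he, v, hve, hv⟩, hve⟩

lemma Good.iter_upper (h : Good n k L D E) (hE : ∀ e ∈ E, e.card = k) (hL : 0 < L) (hD : 0 < D)
    (hiso : ∀ v, ∃ e ∈ E, v ∈ e) (v : Fin n) (r : ℕ) :
    (((nb E)^[r] {v}).card : ℝ) ≤ ((1 + 2 / L) * D * k) ^ r := by
  induction r with
  | zero => simp
  | succ r ih =>
    rw [Function.iterate_succ_apply']
    set S := (nb E)^[r] {v}
    have h1 := h.edge_upper S
    rw [nb_eq hiso]
    calc _ ≤ (((E.filter (fun e => ¬ Disjoint e S)).card * k : ℕ) : ℝ) := by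
          norm_cast
          apply Finset.card_biUnion_le_card_mul
          intro e he
          exact (hE e (mem_filter.1 he).1).le
      _ ≤ (1 + 2 / L) * D * S.card * k := by push_cast; gcongr
      _ ≤ (1 + 2 / L) * D * ((1 + 2 / L) * D * k) ^ r * k := by gcongr
      _ = _ := by ring

lemma Good.isolated (h : Good n k L D E) (hd : 16 ≤ k * D) (hdn : k * D ≤ n) (v : Fin n) :
    ∃ e ∈ E, v ∈ e := by
  have h1 := h.g3 {v} (by simp) (by simpa using hdn)
  simp only [card_singleton, Nat.cast_one, one_mul] at h1
  have h2 : 1 < (nb E {v}).card := by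
    have : (1:ℝ) < ((nb E {v}).card : ℝ) := by linarith
    exact_mod_cast this
  obtain ⟨y, hy, hne⟩ := Finset.exists_mem_ne h2 v
  rcases mem_nb_single.1 hy with h3 | ⟨e, he, h3, _⟩
  · exact absurd h3.symm hne
  · exact ⟨e, he, h3⟩

end CopAux

namespace CopAux
open Finset

/-- the expansion constant -/
noncomputable def xi : ℝ := Real.exp (-18) / 256

lemma xi_pos : 0 < xi := by unfold xi; positivity

variable {n k : ℕ}

lemma exp_two_le : Real.exp 2 ≤ 8 := by
  have h := Real.exp_one_lt_d9
  have : Real.exp 2 = Real.exp 1 ^ 2 := by rw [← Real.exp_nat_mul]; norm_num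
  rw [this]
  have := Real.exp_pos 1
  nlinarith

lemma copNumber_le_of (G : KGraph n k) (L Q : ℝ) (hL : L = Real.log n) (hL1 : 100 ≤ L)
    (hQ : 1 ≤ Q) (hnQ : (n:ℝ) = k * Q ^ 2) (hk : 1 ≤ k)
    (K : ℕ) (hK : 80 / xi * Q * L ≤ K) (r : ℕ) {ι : Type} (J : Fin n → Finset ι) (F : ι → Finset (Fin n))
    (h1 : ∀ v, ∀ u ∈ (nb G.edges)^[r] {v}, ∃ j ∈ J v, F j ⊆ nb G.edges {u})
    (h2 : ∀ v, ((J v).card : ℝ) ≤ 8 * Q)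
    (h3 : ∀ v, ∀ B ⊆ J v, B.Nonempty →
      xi * min (B.card * (k * Q)) n ≤ ((nb G.edges)^[r] (B.biUnion F)).card) :
    G.copNumber ≤ K := by
  classical
  have hk' : (1:ℝ) ≤ k := by exact_mod_cast hk
  have hn1 : (1:ℝ) ≤ n := by rw [hnQ]; nlinarith
  have hn : 0 < n := by
    have : (0:ℝ) < n := by linarith
    exact_mod_cast this
  have hexpL : Real.exp L = n := by rw [hL, Real.exp_log (by linarith)]
  have hn100 : (100:ℝ) ≤ n := by
    rw [← hexpL]; have := Real.add_one_le_exp L; linarith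
  have hxi := xi_pos
  have hQn : Q ≤ n := by rw [hnQ]; nlinarith
  suffices hs : ∃ c : Fin K → Fin n, ∀ v, ∃ f : J v → Fin K, Function.Injective f ∧
      ∀ j : J v, c (f j) ∈ (nb G.edges)^[r] (F j) by
    obtain ⟨c, hc⟩ := hs
    apply Nat.sInf_le
    refine ⟨c, fun v => ?_⟩
    obtain ⟨f, hf, hfR⟩ := hc v
    exact copsWin_of_assign G c v r (J v) F (h1 v) f hf hfR
  refine exists_placement (K := K) hn J (fun j => (nb G.edges)^[r] (F j)) (10 * L) ?_ ?_
  · intro v B hB hne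
    have hb := h3 v B hB hne
    have hsub : (nb G.edges)^[r] (B.biUnion F) ⊆ B.biUnion (fun j => (nb G.edges)^[r] (F j)) := by
      intro y hy
      obtain ⟨x, hx, hy⟩ := (mem_iter r).1 hy
      obtain ⟨j, hj, hx⟩ := mem_biUnion.1 hx
      exact mem_biUnion.2 ⟨j, hj, (mem_iter r).2 ⟨x, hx, hy⟩⟩
    have hb2 : (((nb G.edges)^[r] (B.biUnion F)).card : ℝ) ≤ ((B.biUnion (fun j => (nb G.edges)^[r] (F j))).card : ℝ) := by
      exact_mod_cast card_le_card hsub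
    have hbQ : (B.card : ℝ) ≤ 8 * Q := le_trans (by exact_mod_cast card_le_card hB) (h2 v)
    have hmin : (B.card : ℝ) * (k * Q) / 8 ≤ min (B.card * (k * Q)) (n:ℝ) := by
      have h0 : 0 ≤ (B.card : ℝ) * (k * Q) := by positivity
      refine le_min (by linarith) ?_
      rw [hnQ]
      have : (B.card : ℝ) * (k * Q) ≤ 8 * Q * (k * Q) := by gcongr
      nlinarith
    have hn0 : (0:ℝ) < n := by linarith
    rw [le_div_iff₀ hn0]
    calc 10 * L * B.card * n = (80 / xi * Q * L) * (xi * ((B.card : ℝ) * (k * Q) / 8)) := by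
          rw [hnQ]; field_simp; ring
      _ ≤ K * (xi * min (B.card * (k * Q)) (n:ℝ)) := by gcongr
      _ ≤ _ := by gcongr; exact hb.trans hb2
  · intro v
    have e5 : Real.exp (-(10 * L / 2)) = 1 / (n:ℝ) ^ 5 := by
      have : -(10 * L / 2) = -((5:ℕ) * L) := by push_cast; ring
      rw [this, Real.exp_neg, Real.exp_nat_mul, hexpL]; simp
    rw [e5]
    calc 2 * (1 / (n:ℝ)^5) * ((J v).card : ℝ) ≤ 2 * (1 / (n:ℝ)^5) * (8 * n) := by
          gcongr; exact (h2 v).trans (by linarith)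
      _ ≤ 1 / (4 * (n:ℝ)) := by
          have h64 : (64:ℝ) ≤ (n:ℝ)^3 := by
            calc (64:ℝ) ≤ 100^3 := by norm_num
              _ ≤ _ := by gcongr
          have e : 2 * (1 / (n:ℝ)^5) * (8 * n) = 16 / (n:ℝ)^4 := by field_simp; norm_num
          rw [e, div_le_div_iff₀ (by positivity) (by positivity)]
          nlinarith

lemma copNumber_le (G : KGraph n k) (L D Q : ℝ) (hL : L = Real.log n) (hL1 : 100 ≤ L)
    (hQ : 1 ≤ Q) (hnQ : (n:ℝ) = k * Q ^ 2) (hk : 1 ≤ k) (hD : 100 * L ≤ D) (hdn : k * D ≤ n)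
    (hg : Good n k L D G.edges) (K : ℕ) (hK : 80 / xi * Q * L ≤ K) : G.copNumber ≤ K := by
  have hk' : (1:ℝ) ≤ k := by exact_mod_cast hk
  have hD0 : 0 < D := by linarith
  have hL0 : 0 < L := by linarith
  have hn1 : (1:ℝ) ≤ n := by rw [hnQ]; nlinarith
  have hDd : D ≤ k * D := by nlinarith
  have hiso : ∀ v, ∃ e ∈ G.edges, v ∈ e := hg.isolated (by linarith) hdn
  have hkn : k ≤ n := by
    have : (k:ℝ) ≤ n := by nlinarith
    exact_mod_cast this
  set d : ℝ := k * D with hd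
  have hd1 : 1 < d := by linarith
  have hkQ : 1 ≤ k * Q := by nlinarith
  obtain ⟨r, hr1, hr2⟩ := exists_nat_pow_near hkQ hd1
  have hexpL : Real.exp L = n := by rw [hL, Real.exp_log (by linarith)]
  have hrL : (r:ℝ) ≤ L := by
    rw [← Real.exp_le_exp, hexpL]
    calc Real.exp r = Real.exp 1 ^ r := by rw [← Real.exp_nat_mul]; simp
      _ ≤ d ^ r := by
        gcongr
        have := Real.exp_one_lt_d9
        linarith
      _ ≤ k * Q := hr1
      _ ≤ n := by rw [hnQ]; gcongr; nlinarith
  have hpow : (1 + 2 / L) ^ r ≤ 8 := by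
    refine le_trans ?_ exp_two_le
    calc (1 + 2 / L) ^ r ≤ (Real.exp (2 / L)) ^ r := by
          gcongr; linarith [Real.add_one_le_exp (2 / L)]
      _ = Real.exp (r * (2 / L)) := by rw [Real.exp_nat_mul]
      _ ≤ _ := by
        apply Real.exp_le_exp.2
        rw [← mul_div_assoc, div_le_iff₀ hL0]; linarith
  have hxi : xi = Real.exp (-18) / 16 / 16 := by unfold xi; ring
  have hxi16 : xi ≤ Real.exp (-18) / 16 := by
    rw [hxi]; have := Real.exp_pos (-18); linarith
  have hxi0 := xi_pos
  have hup : ∀ v, ∀ i : ℕ, (((nb G.edges)^[i] {v}).card : ℝ) ≤ (1 + 2 / L) ^ i * d ^ i := by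
    intro v i
    refine (hg.iter_upper G.uniform hL0 hD0 hiso v i).trans (le_of_eq ?_)
    rw [← mul_pow, hd]; ring
  by_cases hc : Q ≤ d ^ r
  · -- edge targets
    cases r with
    | zero =>
      exfalso
      have hQ1 : Q = 1 := le_antisymm (by simpa using hc) hQ
      rw [hQ1] at hnQ
      nlinarith
    | succ r =>
      refine copNumber_le_of G L Q hL hL1 hQ hnQ hk K hK (r+1)
        (fun v => G.edges.filter (fun e => ¬ Disjoint e ((nb G.edges)^[r] {v}))) id ?_ ?_ ?_
      · intro v u hu
        rw [Function.iterate_succ_apply', nb_eq hiso] at hu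
        obtain ⟨e, he, hue⟩ := mem_biUnion.1 hu
        refine ⟨e, he, ?_⟩
        intro y hy
        exact mem_nb_single.2 (Or.inr ⟨e, (mem_filter.1 he).1, hue, hy⟩)
      · intro v
        calc _ ≤ (1 + 2 / L) * D * (((nb G.edges)^[r] {v}).card : ℝ) := hg.edge_upper _
          _ ≤ (1 + 2 / L) * D * ((1 + 2 / L) ^ r * d ^ r) := by gcongr; exact hup v r
          _ = (1 + 2 / L) ^ (r+1) * (d ^ (r+1) / k) := by
              rw [pow_succ d, pow_succ (1 + 2 / L)]
              have : d ^ r * d / k = d ^ r * D := by rw [hd]; field_simp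
              rw [this]; ring
          _ ≤ 8 * (k * Q / k) := by gcongr
          _ = 8 * Q := by field_simp
      · intro v B hB hne
        have hBE : B ⊆ G.edges := hB.trans (filter_subset _ _)
        have h1 := hg.edges (by omega) hkn B hBE hne
        have hVne : (B.biUnion id).Nonempty := by
          rw [← card_pos]
          have hb1 : (1:ℝ) ≤ B.card := by exact_mod_cast hne.card_pos
          have : (0:ℝ) < min ((B.card : ℝ) * k) n / 16 := by
            have : (0:ℝ) < min ((B.card : ℝ) * k) n := lt_min (by nlinarith) (by linarith)
            linarith
          exact_mod_cast this.trans_le h1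
        have h2 := hg.iter_succ hL1 (by linarith) hdn _ hVne r (by push_cast at hrL; linarith)
        refine le_trans ?_ h2
        rw [hxi, ← hd]
        have e0 := Real.exp_pos (-18)
        have hdr : 1 ≤ d ^ (r+1) := one_le_pow₀ hd1.le
        have : min ((B.card : ℝ) * (k * Q)) n / 16 ≤ min (((B.biUnion id).card : ℝ) * d ^ (r+1)) n := by
          refine le_min ?_ ?_
          · rcases le_total ((B.card : ℝ) * k) n with h | h
            · rw [min_eq_left h] at h1
              calc _ ≤ (B.card : ℝ) * (k * Q) / 16 := by gcongr; exact min_le_left _ _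
                _ = (B.card : ℝ) * k / 16 * Q := by ring
                _ ≤ _ := by gcongr
            · rw [min_eq_right h] at h1
              calc _ ≤ (n:ℝ) / 16 := by gcongr; exact min_le_right _ _
                _ ≤ _ := h1
                _ ≤ _ := le_mul_of_one_le_right (by positivity) hdr
          · calc _ ≤ (n:ℝ) / 16 := by gcongr; exact min_le_right _ _
              _ ≤ _ := by linarith
        calc _ = Real.exp (-18) / 16 * (min ((B.card : ℝ) * (k * Q)) n / 16) := by ring
          _ ≤ _ := by gcongr
  · push Not at hc
    refine copNumber_le_of G L Q hL hL1 hQ hnQ hk K hK r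
      (fun v => (nb G.edges)^[r] {v}) (fun u => nb G.edges {u}) ?_ ?_ ?_
    · intro v u hu
      exact ⟨u, hu, Subset.refl _⟩
    · intro v
      calc _ ≤ _ := hup v r
        _ ≤ 8 * Q := by gcongr
    · intro v B hB hne
      have h2 := hg.iter_succ hL1 (by linarith) hdn B hne r hrL
      have e : B.biUnion (fun u => nb G.edges {u}) = nb G.edges B := by
        ext y; rw [mem_nb_iff]; simp
      rw [e, ← Function.iterate_succ_apply]
      refine le_trans ?_ h2
      have : 0 ≤ min ((B.card : ℝ) * (k * Q)) (n:ℝ) := le_min (by positivity) (by linarith)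
      calc _ ≤ Real.exp (-18) / 16 * min ((B.card : ℝ) * (k * Q)) (n:ℝ) := by gcongr
        _ ≤ _ := by gcongr

end CopAux

namespace CopAux
open Finset

section prob
set_option linter.unusedSectionVars false
variable {α : Type*} [DecidableEq α]

noncomputable def wt (P : Finset α) (p : ℝ) (E : Finset α) : ℝ :=
  p ^ E.card * (1 - p) ^ (P.card - E.card)

open Classical in
noncomputable def Pr (P : Finset α) (p : ℝ) (Q : Finset α → Prop) : ℝ :=
  ∑ E ∈ P.powerset, if Q E then wt P p E else 0

variable {P : Finset α} {p : ℝ}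

lemma wt_nonneg (h0 : 0 ≤ p) (h1 : p ≤ 1) (E : Finset α) : 0 ≤ wt P p E := by
  have : 0 ≤ 1 - p := by linarith
  unfold wt; positivity

lemma sum_wt_gen (T : Finset α) (hT : T ⊆ P) (x : ℝ) :
    ∑ E ∈ P.powerset, x ^ (E ∩ T).card * wt P p E = (1 - p + x * p) ^ T.card := by
  have h := Finset.prod_add (fun e => p * (if e ∈ T then x else 1)) (fun _ => 1 - p) P
  have h1 : ∏ e ∈ P, (p * (if e ∈ T then x else 1) + (1 - p)) = (1 - p + x * p) ^ T.card := by
    calc _ = ∏ e ∈ P, (if e ∈ T then (1 - p + x * p) else 1) := by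
          apply prod_congr rfl
          intro e _
          split_ifs <;> ring
      _ = _ := by
          rw [Finset.prod_ite]
          simp only [prod_const, one_pow, mul_one]
          congr 2
          ext e; simp; exact fun h => hT h
  rw [← h1, h]
  apply sum_congr rfl
  intro E hE
  rw [mem_powerset] at hE
  rw [prod_mul_distrib, prod_const, prod_const, Finset.prod_ite, prod_const, prod_const_one, mul_one,
    card_sdiff_of_subset hE, Finset.filter_mem_eq_inter]
  unfold wt; ring

lemma Pr_superset (T : Finset α) (hT : T ⊆ P) :
    Pr P p (fun E => T ⊆ E) = p ^ T.card := by
  classical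
  have h := Finset.prod_add (fun _ => p) (fun e => if e ∈ T then 0 else 1 - p) P
  have h1 : ∏ e ∈ P, (p + (if e ∈ T then 0 else 1 - p)) = p ^ T.card := by
    calc _ = ∏ e ∈ P, (if e ∈ T then p else 1) := by
          apply prod_congr rfl
          intro e _
          split_ifs <;> ring
      _ = _ := by
          rw [Finset.prod_ite]
          simp only [prod_const, one_pow, mul_one]
          congr 2
          ext e; simp; exact fun h => hT h
  rw [← h1, h]
  unfold Pr
  apply sum_congr rfl
  intro E hE
  rw [mem_powerset] at hE
  rw [prod_const]
  split_ifs with hTE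
  · unfold wt
    rw [← card_sdiff_of_subset hE]
    congr 1
    rw [← prod_const]
    apply prod_congr rfl
    intro e he
    rw [if_neg]
    intro heT
    exact (mem_sdiff.1 he).2 (hTE heT)
  · obtain ⟨e, heT, heE⟩ := Finset.not_subset.1 hTE
    symm
    apply mul_eq_zero_of_right
    apply Finset.prod_eq_zero (i := e)
    · exact mem_sdiff.2 ⟨hT heT, heE⟩
    · simp [heT]

lemma Pr_true : Pr P p (fun _ => True) = 1 := by
  have := sum_wt_gen (P := P) (p := p) ∅ (by simp) 1
  simp at this
  simpa [Pr] using this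

lemma Pr_disjoint (T : Finset α) (hT : T ⊆ P) :
    Pr P p (fun E => Disjoint E T) = (1 - p) ^ T.card := by
  have := sum_wt_gen (P := P) (p := p) T hT 0
  simp only [zero_mul, add_zero] at this
  rw [← this]
  unfold Pr
  apply sum_congr rfl
  intro E _
  split_ifs with h
  · rw [disjoint_iff_inter_eq_empty.1 h]; simp
  · have : (E ∩ T).card ≠ 0 := by
      rw [Ne, card_eq_zero]
      exact fun h' => h (disjoint_iff_inter_eq_empty.2 h')
    rw [zero_pow this, zero_mul]

lemma Pr_nonneg (h0 : 0 ≤ p) (h1 : p ≤ 1) (Q : Finset α → Prop) : 0 ≤ Pr P p Q := by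
  classical
  unfold Pr
  apply sum_nonneg
  intro E _
  split_ifs
  · exact wt_nonneg h0 h1 E
  · exact le_rfl

lemma Pr_mono (h0 : 0 ≤ p) (h1 : p ≤ 1) {Q R : Finset α → Prop} (h : ∀ E ⊆ P, Q E → R E) :
    Pr P p Q ≤ Pr P p R := by
  classical
  unfold Pr
  apply sum_le_sum
  intro E hE
  have := wt_nonneg (P := P) h0 h1 E
  by_cases hQ : Q E
  · rw [if_pos hQ, if_pos (h E (mem_powerset.1 hE) hQ)]
  · rw [if_neg hQ]; split_ifs <;> simp [this]

lemma Pr_exists_le (h0 : 0 ≤ p) (h1 : p ≤ 1) {ι : Type*} (I : Finset ι) (Q : ι → Finset α → Prop) :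
    Pr P p (fun E => ∃ i ∈ I, Q i E) ≤ ∑ i ∈ I, Pr P p (Q i) := by
  classical
  unfold Pr
  rw [sum_comm]
  apply sum_le_sum
  intro E hE
  have hw := wt_nonneg (P := P) h0 h1 E
  split_ifs with h
  · obtain ⟨i, hi, hQ⟩ := h
    calc wt P p E = (if Q i E then wt P p E else 0) := by rw [if_pos hQ]
      _ ≤ _ := single_le_sum (f := fun i => if Q i E then wt P p E else 0)
        (fun j _ => by split_ifs <;> simp [hw]) hi
  · apply sum_nonneg
    intro j _
    split_ifs <;> simp [hw]

lemma Pr_or_le (h0 : 0 ≤ p) (h1 : p ≤ 1) (Q R : Finset α → Prop) :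
    Pr P p (fun E => Q E ∨ R E) ≤ Pr P p Q + Pr P p R := by
  classical
  unfold Pr
  rw [← sum_add_distrib]
  apply sum_le_sum
  intro E hE
  have hw := wt_nonneg (P := P) h0 h1 E
  by_cases hQ : Q E <;> by_cases hR : R E <;> simp [hQ, hR, hw]

lemma Pr_not (Q : Finset α → Prop) : Pr P p Q = 1 - Pr P p (fun E => ¬ Q E) := by
  classical
  have := Pr_true (P := P) (p := p)
  rw [← this]
  unfold Pr
  rw [← sum_sub_distrib]
  apply sum_congr rfl
  intro E _
  by_cases hQ : Q E <;> simp [hQ]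

/-- Chernoff upper tail -/
lemma Pr_upper (h0 : 0 ≤ p) (h1 : p ≤ 1) (T : Finset α) (hT : T ⊆ P) (eps : ℝ) (he0 : 0 ≤ eps)
    (he1 : eps ≤ 1) :
    Pr P p (fun E => (1 + 2 * eps) * (p * T.card) < (E ∩ T).card) ≤ Real.exp (-(eps ^ 2 * (p * T.card))) := by
  classical
  set D := p * T.card with hD
  have hDn : 0 ≤ D := by positivity
  have h := sum_wt_gen (P := P) (p := p) T hT (Real.exp eps)
  have hexp : Real.exp (eps * ((1 + 2 * eps) * D)) * Pr P p (fun E => (1 + 2 * eps) * D < (E ∩ T).card)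
      ≤ (1 - p + Real.exp eps * p) ^ T.card := by
    rw [← h]
    unfold Pr
    rw [mul_sum]
    apply sum_le_sum
    intro E _
    have hw := wt_nonneg (P := P) h0 h1 E
    split_ifs with hc
    · gcongr
      rw [← Real.exp_nat_mul, mul_comm]
      apply Real.exp_le_exp.2
      gcongr
    · rw [mul_zero]; positivity
  have h2 : (1 - p + Real.exp eps * p) ^ T.card ≤ Real.exp (D * (eps + eps ^ 2)) := by
    have e1 := exp_le_two he0 he1
    have e3 : 1 ≤ Real.exp eps := Real.one_le_exp he0
    calc _ ≤ (Real.exp (p * (eps + eps ^ 2))) ^ T.card := by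
          apply pow_le_pow_left₀ (by nlinarith)
          have := Real.add_one_le_exp (p * (eps + eps ^ 2))
          nlinarith
      _ = _ := by rw [← Real.exp_nat_mul, hD]; congr 1; ring
  have h3 := hexp.trans h2
  have h4 : Real.exp (D * (eps + eps ^ 2)) = Real.exp (eps * ((1 + 2 * eps) * D)) * Real.exp (-(eps ^ 2 * D)) := by
    rw [← Real.exp_add]; congr 1; ring
  rw [h4] at h3
  exact le_of_mul_le_mul_left h3 (Real.exp_pos _)

end prob
end CopAux

namespace CopAux
open Finset

lemma choose_ratio (n w s : ℕ) (h : w + s < n) :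
    (n.choose s : ℝ) ≤ ((n - w).choose s : ℝ) * Real.exp (s * (w / (n - w - s))) := by
  set t : ℝ := w / (n - w - s) with ht
  have hws : (w:ℝ) + s < n := by exact_mod_cast h
  have hpos : (0:ℝ) < n - w - s := by linarith
  suffices H : ∀ i ≤ s, (n.choose i : ℝ) ≤ ((n - w).choose i : ℝ) * Real.exp (i * t) from H s le_rfl
  intro i
  induction i with
  | zero => intro _; simp
  | succ i ih =>
    intro hi
    have ih := ih (by omega)
    have e1 : (n.choose (i+1) : ℝ) * (i+1) = n.choose i * (n - i) := by
      have := Nat.choose_succ_right_eq n i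
      rw [← Nat.cast_sub (by omega)]
      exact_mod_cast this
    have e2 : ((n-w).choose (i+1) : ℝ) * (i+1) = (n-w).choose i * (n - w - i) := by
      have := Nat.choose_succ_right_eq (n-w) i
      rw [← Nat.cast_sub (by omega), ← Nat.cast_sub (by omega)]
      exact_mod_cast this
    have his : (i:ℝ) ≤ s := by exact_mod_cast (by omega : i ≤ s)
    have hi1 : (0:ℝ) < (i:ℝ) + 1 := by positivity
    have e3 : (n:ℝ) - i ≤ (n - w - i) * Real.exp t := by
      have h1 := Real.add_one_le_exp t
      have h2 : (w:ℝ) ≤ (n - w - i) * t := by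
        rw [ht, ← mul_div_assoc, le_div_iff₀ hpos]
        have : (0:ℝ) ≤ w := by positivity
        nlinarith
      have h3 : (0:ℝ) ≤ n - w - i := by linarith
      nlinarith
    refine le_of_mul_le_mul_right ?_ hi1
    rw [e1]
    have e4 : Real.exp (((i+1 : ℕ) : ℝ) * t) = Real.exp (i * t) * Real.exp t := by
      rw [← Real.exp_add]; congr 1; push_cast; ring
    rw [e4]
    calc (n.choose i : ℝ) * (n - i) ≤ (((n - w).choose i : ℝ) * Real.exp (i * t)) * ((n - w - i) * Real.exp t) := by
          apply mul_le_mul ih e3 (by linarith) (by positivity)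
      _ = (((n-w).choose i : ℝ) * (n - w - i)) * (Real.exp (i * t) * Real.exp t) := by ring
      _ = _ := by rw [← e2]; ring

lemma choose_sub_lower (m j t : ℕ) (h : t ≤ m + 1) :
    ((m+1).choose (j+1) : ℝ) * (1 - t * ((j+1) / (m+1))) ≤ ((m + 1 - t).choose (j+1) : ℝ) := by
  have e : ((m+1).choose (j+1) : ℝ) * ((j+1) / (m+1)) = m.choose j := by
    have := Nat.add_one_mul_choose_eq m j
    have h' : ((m:ℝ)+1) * m.choose j = (m+1).choose (j+1) * (j+1) := by exact_mod_cast this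
    have : (0:ℝ) < (m:ℝ)+1 := by positivity
    field_simp
    linarith
  have H : ∀ t ≤ m + 1, (m+1).choose (j+1) ≤ (m+1-t).choose (j+1) + t * m.choose j := by
    intro t
    induction t with
    | zero => intro _; simp
    | succ t ih =>
      intro ht
      have ih := ih (by omega)
      have e1 : m + 1 - t = (m - t) + 1 := by omega
      have e2 : m + 1 - (t+1) = m - t := by omega
      rw [e1, Nat.choose_succ_succ (m - t)] at ih
      simp only [Nat.succ_eq_add_one] at ih
      rw [e2]
      have : (m-t).choose j ≤ m.choose j := Nat.choose_le_choose j (by omega)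
      nlinarith
  have h1 := H t h
  have h2 : ((m+1).choose (j+1) : ℝ) ≤ (m+1-t).choose (j+1) + t * m.choose j := by exact_mod_cast h1
  rw [← e] at h2
  nlinarith

lemma choose_le_pow_ratio (n w k : ℕ) (h : w ≤ n) :
    (w.choose k : ℝ) * n ^ k ≤ n.choose k * w ^ k := by
  have hwn : (w:ℝ) ≤ n := by exact_mod_cast h
  induction k with
  | zero => simp
  | succ i ih =>
    by_cases hi : w ≤ i
    · rw [Nat.choose_eq_zero_of_lt (by omega)]; simp; positivity
    push Not at hi
    have e1 : (n.choose (i+1) : ℝ) * (i+1) = n.choose i * (n - i) := by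
      have := Nat.choose_succ_right_eq n i
      rw [← Nat.cast_sub (by omega)]
      exact_mod_cast this
    have e2 : (w.choose (i+1) : ℝ) * (i+1) = w.choose i * (w - i) := by
      have := Nat.choose_succ_right_eq w i
      rw [← Nat.cast_sub (by omega)]
      exact_mod_cast this
    have hiw : (i:ℝ) ≤ w := by exact_mod_cast hi.le
    have hi1 : (0:ℝ) < (i:ℝ) + 1 := by positivity
    refine le_of_mul_le_mul_right ?_ hi1
    calc (w.choose (i+1) : ℝ) * n^(i+1) * (i+1) = (w.choose i * n^i) * ((w - i) * n) := by
          rw [pow_succ]; linear_combination (n:ℝ)^i * n * e2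
      _ ≤ (n.choose i * w^i) * ((n - i) * w) := by
          have hi0 : (0:ℝ) ≤ i := by positivity
          apply mul_le_mul ih (by nlinarith) _ (by positivity)
          apply mul_nonneg (by linarith) (by positivity)
      _ = _ := by rw [pow_succ]; linear_combination -(w:ℝ)^i * w * e1

variable {n k : ℕ} {p : ℝ}

/-- all possible edges -/
def allE (n k : ℕ) : Finset (Finset (Fin n)) := powersetCard k univ

lemma card_cross (hk : 2 ≤ k) (A S : Finset (Fin n)) (hAS : Disjoint A S) :
    A.card * S.card * (n - A.card - S.card).choose (k - 2) ≤
      ((allE n k).filter (fun e => ¬ Disjoint e A ∧ ¬ Disjoint e S)).card := by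
  have hc : (univ \ (A ∪ S)).card = n - A.card - S.card := by
    rw [card_sdiff_of_subset (subset_univ _), card_union_of_disjoint hAS]; simp; omega
  have : A.card * S.card * (n - A.card - S.card).choose (k - 2) =
      (A ×ˢ S ×ˢ powersetCard (k-2) (univ \ (A ∪ S))).card := by
    rw [card_product, card_product, card_powersetCard, hc]; ring
  rw [this]
  have key : ∀ x ∈ A, ∀ y ∈ S, ∀ f ⊆ univ \ (A ∪ S),
      (insert x (insert y f)) ∩ A = {x} ∧ (insert x (insert y f)) ∩ S = {y} ∧
      (insert x (insert y f)) \ (A ∪ S) = f := by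
    intro x hx y hy f hf
    have hxS : x ∉ S := Finset.disjoint_left.1 hAS hx
    have hyA : y ∉ A := Finset.disjoint_right.1 hAS hy
    have hfA : ∀ z ∈ f, z ∉ A ∧ z ∉ S := by
      intro z hz
      have := hf hz
      simp at this
      exact this
    refine ⟨?_, ?_, ?_⟩
    · ext z; simp only [mem_inter, mem_insert, mem_singleton]
      constructor
      · rintro ⟨rfl | rfl | h, hz⟩
        · rfl
        · exact absurd hz hyA
        · exact absurd hz (hfA z h).1
      · rintro rfl; exact ⟨Or.inl rfl, hx⟩
    · ext z; simp only [mem_inter, mem_insert, mem_singleton]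
      constructor
      · rintro ⟨rfl | rfl | h, hz⟩
        · exact absurd hz hxS
        · rfl
        · exact absurd hz (hfA z h).2
      · rintro rfl; exact ⟨Or.inr (Or.inl rfl), hy⟩
    · ext z; simp only [mem_sdiff, mem_insert, mem_union]
      constructor
      · rintro ⟨rfl | rfl | h, hz⟩
        · exact absurd (Or.inl hx) hz
        · exact absurd (Or.inr hy) hz
        · exact h
      · intro h
        exact ⟨Or.inr (Or.inr h), fun h' => h'.elim (hfA z h).1 (hfA z h).2⟩
  apply Finset.card_le_card_of_injOn (fun q => insert q.1 (insert q.2.1 q.2.2))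
  · rintro ⟨x, y, f⟩ hq
    simp only [coe_product, Set.mem_prod, mem_coe, mem_powersetCard] at hq
    obtain ⟨hx, hy, hf, hfc⟩ := hq
    have hxS : x ∉ S := Finset.disjoint_left.1 hAS hx
    have hfA : ∀ z ∈ f, z ∉ A ∧ z ∉ S := by
      intro z hz
      have := hf hz
      simp at this
      exact this
    have hyf : y ∉ f := fun h => (hfA y h).2 hy
    have hxf : x ∉ insert y f := by
      rw [mem_insert]
      rintro (rfl | h)
      · exact hxS hy
      · exact (hfA x h).1 hx
    simp only [coe_filter, Set.mem_ofPred_eq, allE, mem_powersetCard, subset_univ, true_and,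
      Finset.not_disjoint_iff]
    refine ⟨?_, ⟨x, by simp, hx⟩, ⟨y, by simp, hy⟩⟩
    rw [card_insert_of_notMem hxf, card_insert_of_notMem hyf, hfc]; omega
  · rintro ⟨x, y, f⟩ hq ⟨x', y', f'⟩ hq' heq
    simp only [coe_product, Set.mem_prod, mem_coe, mem_powersetCard] at hq hq'
    simp only at heq
    obtain ⟨a1, a2, a3⟩ := key x hq.1 y hq.2.1 f hq.2.2.1
    obtain ⟨b1, b2, b3⟩ := key x' hq'.1 y' hq'.2.1 f' hq'.2.2.1
    rw [heq] at a1 a2 a3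
    have c1 := singleton_injective (a1.symm.trans b1)
    have c2 := singleton_injective (a2.symm.trans b2)
    have c3 := a3.symm.trans b3
    rw [c1, c2, c3]

lemma Pr_avoid (h0 : 0 ≤ p) (h1 : p ≤ 1) (hk : 2 ≤ k) (A S : Finset (Fin n)) :
    Pr (allE n k) p (fun E => Disjoint S (nb E A)) ≤
      (1 - p) ^ (A.card * S.card * (n - A.card - S.card).choose (k - 2)) := by
  by_cases hAS : Disjoint A S
  · set T := (allE n k).filter (fun e => ¬ Disjoint e A ∧ ¬ Disjoint e S) with hT
    calc _ ≤ Pr (allE n k) p (fun E => Disjoint E T) := by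
          apply Pr_mono h0 h1
          intro E hE hd
          rw [Finset.disjoint_left]
          intro e he heT
          rw [hT, mem_filter, Finset.not_disjoint_iff, Finset.not_disjoint_iff] at heT
          obtain ⟨_, ⟨x, hx, hxA⟩, ⟨y, hy, hyS⟩⟩ := heT
          exact Finset.disjoint_left.1 hd hyS (mem_nb.2 (Or.inr ⟨e, he, ⟨x, hxA, hx⟩, hy⟩))
      _ = (1 - p) ^ T.card := Pr_disjoint T (filter_subset _ _)
      _ ≤ _ := by
        apply pow_le_pow_of_le_one (by linarith) (by linarith)
        exact card_cross hk A S hAS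
  · have : Pr (allE n k) p (fun E => Disjoint S (nb E A)) ≤ Pr (allE n k) p (fun _ => False) := by
      apply Pr_mono h0 h1
      intro E _ hd
      exact hAS ((hd.mono_right (subset_nb A)).symm)
    refine this.trans ?_
    have : Pr (allE n k) p (fun _ => False) = 0 := by simp [Pr]
    rw [this]
    have : 0 ≤ 1 - p := by linarith
    positivity

lemma Pr_nb_small (h0 : 0 ≤ p) (h1 : p ≤ 1) (hk : 2 ≤ k) (A : Finset (Fin n)) (w s : ℕ) :
    Pr (allE n k) p (fun E => (nb E A).card ≤ w) * ((n - w).choose s : ℝ) ≤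
      (n.choose s : ℝ) * (1 - p) ^ (A.card * s * (n - A.card - s).choose (k - 2)) := by
  classical
  calc _ ≤ ∑ S ∈ powersetCard s (univ : Finset (Fin n)), Pr (allE n k) p (fun E => Disjoint S (nb E A)) := by
        unfold Pr
        rw [sum_comm, sum_mul]
        apply sum_le_sum
        intro E _
        have hw := wt_nonneg (P := allE n k) h0 h1 E
        split_ifs with hc
        · have hc' : (nb E A).card ≤ w := hc
          refine le_of_le_of_eq (b := ∑ S ∈ (powersetCard s (univ : Finset (Fin n))).filter
              (fun S => Disjoint S (nb E A)), wt (allE n k) p E) ?_ ?_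
          swap
          · rw [sum_filter]
            apply sum_congr rfl
            intro S _
            by_cases hS : Disjoint S (nb E A) <;> simp [hS]
          rw [sum_const, nsmul_eq_mul, mul_comm]
          gcongr
          calc (n - w).choose s ≤ (n - (nb E A).card).choose s := Nat.choose_le_choose s (by omega)
            _ = (powersetCard s (univ \ nb E A)).card := by
                rw [card_powersetCard, card_sdiff_of_subset (subset_univ _)]; simp
            _ ≤ _ := by
                apply card_le_card
                intro S hS
                rw [mem_powersetCard] at hS
                rw [mem_filter, mem_powersetCard]
                refine ⟨⟨subset_univ _, hS.2⟩, ?_⟩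
                rw [Finset.disjoint_left]
                intro x hx
                exact (mem_sdiff.1 (hS.1 hx)).2
        · rw [zero_mul]
          apply sum_nonneg
          intro S _
          split_ifs <;> simp [hw]
    _ ≤ ∑ S ∈ powersetCard s (univ : Finset (Fin n)), (1 - p) ^ (A.card * s * (n - A.card - s).choose (k - 2)) := by
        apply sum_le_sum
        intro S hS
        have := Pr_avoid h0 h1 hk A S
        rw [(mem_powersetCard.1 hS).2] at this
        exact this
    _ = _ := by simp

end CopAux

namespace CopAux
open Finset

variable {n k : ℕ} {p : ℝ}

lemma pN_lower (h0 : 0 ≤ p) (hk : 3 ≤ k) (hkn : k ≤ n) (a s : ℕ) (has : a + s + 2 ≤ n)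
    (hask : ((a:ℝ) + s) * (k / n) ≤ 1) (D : ℝ) (hD : D = p * ((n-1).choose (k-1) : ℕ)) :
    a * D * (s * (((k:ℝ) - 1) / n)) * (1 - (a + s) * ((k:ℝ) / n)) ≤
      p * ((a * s * (n - a - s).choose (k - 2) : ℕ) : ℝ) := by
  obtain ⟨j, rfl⟩ : ∃ j, k = j + 3 := ⟨k - 3, by omega⟩
  obtain ⟨m, rfl⟩ : ∃ m, n = m + 3 := ⟨n - 3, by omega⟩
  have e1 := choose_sub_lower m j (a + s) (by omega)
  have e2 : ((m + 1 - (a+s)).choose (j+1)) ≤ (m + 3 - a - s).choose (j+1) :=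
    Nat.choose_le_choose _ (by omega)
  have e2' : (((m + 1 - (a+s)).choose (j+1) : ℕ) : ℝ) ≤ ((m + 3 - a - s).choose (j+1) : ℕ) := by exact_mod_cast e2
  have e3 := Nat.add_one_mul_choose_eq (m+1) (j+1)
  have e3' : ((m:ℝ) + 2) * ((m+1).choose (j+1) : ℕ) = ((m+2).choose (j+2) : ℕ) * ((j:ℝ) + 2) := by
    have : ((m + 1 + 1 : ℕ) : ℝ) * ((m+1).choose (j+1) : ℕ) = ((m+1+1).choose (j+1+1) : ℕ) * ((j + 1 + 1 : ℕ) : ℝ) := by exact_mod_cast e3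
    push_cast at this
    linarith
  have hjm : (j:ℝ) ≤ m := by exact_mod_cast (by omega : j ≤ m)
  have hj0 : (0:ℝ) ≤ j := by positivity
  have f1 : ((j:ℝ)+1)/(m+1) ≤ ((j + 3 : ℕ) : ℝ) / ((m + 3 : ℕ) : ℝ) := by
    push_cast
    rw [div_le_div_iff₀ (by positivity) (by positivity)]
    nlinarith
  have hk1 : j + 3 - 1 = j + 2 := by omega
  have hn1 : m + 3 - 1 = m + 2 := by omega
  have hk2 : j + 3 - 2 = j + 1 := by omega
  rw [hk1, hn1] at hD
  rw [hk2]
  set X : ℝ := (((m+1).choose (j+1) : ℕ) : ℝ) with hX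
  set Y : ℝ := (((m+2).choose (j+2) : ℕ) : ℝ) with hY
  set Z : ℝ := (((m + 3 - a - s).choose (j+1) : ℕ) : ℝ) with hZ
  have hX0 : 0 ≤ X := by positivity
  have hY0 : 0 ≤ Y := by positivity
  set q : ℝ := ((j + 3 : ℕ) : ℝ) / ((m + 3 : ℕ) : ℝ) with hq
  have hq0 : 0 ≤ 1 - ((a:ℝ) + s) * q := by linarith
  have g1 : X * (1 - (a + s) * q) ≤ Z := by
    refine le_trans ?_ (e1.trans e2')
    push_cast
    gcongr
  have g2 : Y * ((((j + 3 : ℕ) : ℝ) - 1) / ((m + 3 : ℕ) : ℝ)) ≤ X := by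
    have : X = Y * (((j:ℝ) + 2) / (m + 2)) := by
      field_simp; linarith
    rw [this]
    apply mul_le_mul_of_nonneg_left _ hY0
    push_cast
    rw [div_le_div_iff₀ (by positivity) (by positivity)]
    nlinarith
  rw [hD]
  push_cast
  push_cast at g2
  calc _ = (p * a * s) * ((Y * (((j:ℝ) + 3 - 1) / ((m:ℝ) + 3))) * (1 - ((a:ℝ) + s) * q)) := by ring
    _ ≤ (p * a * s) * (X * (1 - ((a:ℝ) + s) * q)) := by gcongr
    _ ≤ (p * a * s) * Z := by gcongr
    _ = _ := by ring

lemma nb_tail (h0 : 0 ≤ p) (h1 : p ≤ 1) (hk : 3 ≤ k) (hkn : k ≤ n) (A : Finset (Fin n)) (w s : ℕ)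
    (has : A.card + s + 2 ≤ n) (hws : w + s < n)
    (hask : ((A.card:ℝ) + s) * (k / n) ≤ 1) (D : ℝ) (hD : D = p * ((n-1).choose (k-1) : ℕ)) :
    Pr (allE n k) p (fun E => (nb E A).card ≤ w) ≤
      Real.exp (s * (w / (n - w - s)) -
        A.card * D * (s * (((k:ℝ) - 1) / n)) * (1 - (A.card + s) * ((k:ℝ) / n))) := by
  have a1 := Pr_nb_small (k := k) h0 h1 (by omega) A w s
  have a2 := choose_ratio n w s hws
  have a3 := pN_lower h0 hk hkn A.card s has hask D hD
  set N := A.card * s * (n - A.card - s).choose (k - 2)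
  have a4 : (1 - p) ^ N ≤ Real.exp (-(p * (N:ℝ))) := by
    have : -(p * (N:ℝ)) = N * (-p) := by ring
    rw [this, Real.exp_nat_mul]
    apply pow_le_pow_left₀ (by linarith)
    linarith [Real.add_one_le_exp (-p)]
  have hpos : (0:ℝ) < ((n - w).choose s : ℝ) := by
    have : 0 < (n - w).choose s := Nat.choose_pos (by omega)
    exact_mod_cast this
  refine le_of_mul_le_mul_right ?_ hpos
  refine a1.trans ?_
  rw [Real.exp_sub, div_eq_mul_inv, ← Real.exp_neg]
  calc _ ≤ (((n - w).choose s : ℝ) * Real.exp (s * (w / (n - w - s)))) * Real.exp (-(p * (N:ℝ))) := by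
        gcongr
    _ ≤ (((n - w).choose s : ℝ) * Real.exp (s * (w / (n - w - s)))) *
        Real.exp (-(A.card * D * (s * (((k:ℝ) - 1) / n)) * (1 - (A.card + s) * ((k:ℝ) / n)))) := by gcongr
    _ = _ := by ring

/-- common bundle of numeric hypotheses -/
structure Par (n k : ℕ) (p L D : ℝ) : Prop where
  p0 : 0 ≤ p
  p1 : p ≤ 1
  hL : L = Real.log n
  L100 : 100 ≤ L
  hkL : 100 * L ≤ k
  hD : D = p * ((n-1).choose (k-1) : ℕ)
  hDL : 100 * L ^ 3 ≤ D
  hdn : k * D ≤ n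

variable {L D : ℝ}

set_option maxHeartbeats 800000 in
lemma Par.tail (P : Par n k p L D) (A : Finset (Fin n)) (hA : A.Nonempty) (w : ℕ) (eta th : ℝ)
    (he0 : 0 < eta) (he1 : eta ≤ 1/4) (hLe : 1 ≤ eta * L)
    (hw : (w:ℝ) ≤ th * (A.card * (k * D)))
    (hth : 0 ≤ th)
    (hwn : th * (A.card * (k * D)) ≤ 1/4 * n)
    (hgap : ∀ x, eta ≤ x → x ≤ 2 * eta → th / (1 - th * (A.card * (k * D)) / n - eta) + 3 * L / (x * D) ≤
        (1 - 1 / 100 * eta) * (1 - (1/100 * eta + x)))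
    (haD : (A.card : ℝ) * (k * D) ≤ n) :
    Pr (allE n k) p (fun E => (nb E A).card ≤ w) ≤ Real.exp (-(3 * L)) ^ A.card := by
  have hL0 := P.L100
  have hkL := P.hkL
  have hDL := P.hDL
  have hdn := P.hdn
  have hD100 : 10000 * L ≤ D := by
    have : L * 10000 ≤ L * L ^ 2 := by gcongr; nlinarith
    nlinarith
  have hD0 : 0 < D := by linarith
  have hk0 : (0:ℝ) < k := by linarith
  have hn0 : (0:ℝ) < n := by nlinarith
  have hA1 : 1 ≤ (A.card : ℝ) := by exact_mod_cast hA.card_pos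
  obtain ⟨a, ha⟩ : ∃ a : ℝ, a = (A.card : ℝ) := ⟨_, rfl⟩
  rw [← ha] at hA1 hw hwn hgap haD
  have ha1 := hA1
  have hnk : D ≤ n / k := by rw [le_div_iff₀ hk0]; linarith
  have heD : 1 ≤ eta * n / k := by
    rw [mul_div_assoc]
    calc 1 ≤ eta * L := hLe
      _ ≤ eta * (n / k) := by gcongr; linarith
  obtain ⟨s, hs1, hs2⟩ : ∃ s : ℕ, eta * n / k ≤ s ∧ (s:ℝ) ≤ 2 * (eta * n / k) := by
    refine ⟨⌈eta * n / k⌉₊, Nat.le_ceil _, ?_⟩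
    have := Nat.ceil_lt_add_one (a := eta * n / k) (by linarith)
    linarith
  obtain ⟨x, hx⟩ : ∃ x : ℝ, x = s * k / n := ⟨_, rfl⟩
  have hx1 : eta ≤ x := by
    rw [hx, le_div_iff₀ hn0]
    rw [div_le_iff₀ hk0] at hs1
    exact hs1
  have hx2 : x ≤ 2 * eta := by
    rw [hx, div_le_iff₀ hn0]
    rw [← mul_div_assoc, le_div_iff₀ hk0] at hs2
    linarith
  have hx0 : 0 < x := by linarith
  have hsx : (s:ℝ) = x * n / k := by rw [hx]; field_simp
  have hk1e : 1 / (k:ℝ) ≤ 1/100 * eta := by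
    rw [div_le_iff₀ hk0]
    nlinarith
  have hsn : (s:ℝ) ≤ eta * n := by
    rw [hsx, mul_div_assoc]
    have : (n:ℝ) / k ≤ n * (1/100 * eta) := by
      rw [div_eq_mul_one_div]; gcongr
    calc x * (n / k) ≤ (2 * eta) * (n * (1/100 * eta)) := by gcongr
      _ = (eta * n) * (2/100 * eta) := by ring
      _ ≤ (eta * n) * 1 := by gcongr; linarith
      _ = _ := by ring
  have han : a * (k / n) ≤ 1/100 * eta := by
    have h1 : a * (k / n) ≤ 1 / D := by
      rw [← mul_div_assoc, div_le_div_iff₀ hn0 hD0]; linarith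
    refine h1.trans ?_
    rw [div_le_iff₀ hD0]
    nlinarith
  have hak : a ≤ 1/4 * n := by
    rw [← mul_div_assoc, div_le_iff₀ hn0] at han
    have : a * 1 ≤ a * k := by gcongr; linarith
    nlinarith
  have hxk : (s:ℝ) * (k / n) = x := by rw [hx]; ring
  have hkn : k ≤ n := by
    have : (k:ℝ) ≤ n := by nlinarith
    exact_mod_cast this
  have hn100 : (8:ℝ) ≤ n := by
    have : (k:ℝ) ≤ n := by exact_mod_cast hkn
    linarith
  have hk3 : 3 ≤ k := by
    have : (3:ℝ) ≤ k := by linarith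
    exact_mod_cast this
  have hsn4 : (s:ℝ) ≤ 1/4 * n := hsn.trans (by gcongr)
  have has : A.card + s + 2 ≤ n := by
    have : a + s + 2 ≤ (n:ℝ) := by linarith
    rw [ha] at this
    exact_mod_cast this
  have hws : w + s < n := by
    have : (w:ℝ) + s < n := by linarith
    exact_mod_cast this
  have hT := nb_tail P.p0 P.p1 hk3 hkn A w s has hws
    (by rw [← ha, add_mul, hxk]; linarith) D P.hD
  refine hT.trans ?_
  rw [← Real.exp_nat_mul]
  apply Real.exp_le_exp.2
  rw [← ha, add_mul, hxk]
  obtain ⟨y, hy⟩ : ∃ y : ℝ, y = th * (a * (k * D)) / n := ⟨_, rfl⟩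
  rw [← hy] at hgap
  have hy1 : y ≤ 1/4 := by rw [hy, div_le_iff₀ hn0]; exact hwn
  have hwy : (w:ℝ) ≤ y * n := by rw [hy, div_mul_cancel₀ _ hn0.ne']; exact hw
  have hden : n * (1 - y - eta) ≤ (n:ℝ) - w - s := by
    have : (n:ℝ) * (1 - y - eta) = n - y * n - eta * n := by ring
    linarith
  have hden0 : 0 < n * (1 - y - eta) := by apply mul_pos hn0; linarith
  have t1 : (s:ℝ) * (w / (n - w - s)) ≤ x * (a * D) * (th / (1 - y - eta)) := by
    calc (s:ℝ) * (w / (n - w - s)) ≤ s * ((th * (a * (k * D))) / (n * (1 - y - eta))) := by gcongr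
      _ = x * (a * D) * (th / (1 - y - eta)) := by
        have h1 : 1 - y - eta ≠ 0 := by
          intro h; rw [h] at hden0; simp at hden0
        rw [hx]; field_simp
  have t2 : a * D * (s * (((k:ℝ) - 1) / n)) * (1 - (a * (k / n) + x)) ≥
      x * (a * D) * ((1 - 1/100 * eta) * (1 - (1/100 * eta + x))) := by
    have e : (s * (((k:ℝ) - 1) / n)) = x * (1 - 1 / k) := by rw [hx]; field_simp
    rw [e]
    have h1 : 0 ≤ 1 - (1/100 * eta + x) := by linarith
    calc _ ≤ x * (a * D) * ((1 - 1/k) * (1 - (a * (k / n) + x))) := by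
          apply mul_le_mul_of_nonneg_left _ (by positivity)
          apply mul_le_mul (by linarith) (by linarith) h1
          linarith
      _ = _ := by ring
  have g := hgap x hx1 hx2
  have hxaD : 0 < x * (a * D) := by positivity
  have g2 := mul_le_mul_of_nonneg_left g hxaD.le
  have e3 : x * (a * D) * (3 * L / (x * D)) = a * (3 * L) := by field_simp
  rw [mul_add, e3] at g2
  linarith

lemma Par.strong (P : Par n k p L D) (A : Finset (Fin n)) (hA : A.Nonempty)
    (haD : (A.card : ℝ) * (k * D) ≤ n / L) :
    Pr (allE n k) p (fun E => ((nb E A).card : ℝ) < (1 - 9 / L) * (A.card * (k * D)))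
      ≤ Real.exp (-(3 * L)) ^ A.card := by
  have hL0 := P.L100
  have hkL := P.hkL
  have hDL := P.hDL
  have hL00 : 0 < L := by linarith
  have hn0 : (0:ℝ) ≤ n := by positivity
  have hn1 : (0:ℝ) < n := by
    have h1 := P.hdn
    have : 0 < D := by have : 0 < L^3 := by positivity
                       linarith
    have : 0 < k * D := by apply mul_pos (by linarith) this
    linarith
  have hD0 : 0 < D := by have : 0 < L^3 := by positivity
                         linarith
  have hk0 : (0:ℝ) < k := by linarith
  set eta := 1 / L with he
  have h9 : 9 / L = 9 * eta := by rw [he]; ring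
  have he1 : eta ≤ 1/100 := by rw [he]; apply one_div_le_one_div_of_le (by norm_num) hL0
  have he0 : 0 < eta := by positivity
  have heL : eta * L = 1 := by rw [he]; field_simp
  have hnL : (n:ℝ) / L = eta * n := by rw [he]; ring
  rw [hnL] at haD
  rw [h9]
  have hpos : 0 ≤ (A.card : ℝ) * (k * D) := by positivity
  have hth : 0 ≤ 1 - 9 * eta := by linarith
  have hthn : (1 - 9 * eta) * (A.card * (k * D)) ≤ eta * n := by nlinarith
  refine le_trans (Pr_mono P.p0 P.p1 ?_) (P.tail A hA ⌊(1 - 9 * eta) * (A.card * (k * D))⌋₊ eta (1 - 9 * eta)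
    he0 (by linarith) heL.ge (Nat.floor_le (by positivity)) hth (by nlinarith) ?_ (by nlinarith))
  · intro E _ h
    exact Nat.le_floor h.le
  · intro x hx1 hx2
    set y := (1 - 9 * eta) * (A.card * (k * D)) / n with hy
    have hy1 : y ≤ eta := by rw [hy, div_le_iff₀ hn1]; exact hthn
    have h1 : (1 - 9 * eta) / (1 - y - eta) ≤ 1 - 7 * eta := by
      rw [div_le_iff₀ (by linarith)]
      nlinarith
    have h2 : 3 * L / (x * D) ≤ eta := by
      rw [div_le_iff₀ (by apply mul_pos (by linarith) hD0)]
      calc 3 * L ≤ 100 * L := by linarith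
        _ = eta * (eta * (100 * L^3)) := by
            have : eta * (eta * (100 * L^3)) = (eta * L) * (eta * L) * 100 * L := by ring
            rw [this, heL]; ring
        _ ≤ eta * (x * D) := by
            have hx0 : 0 ≤ x := by linarith
            gcongr
    nlinarith

lemma Par.weak (P : Par n k p L D) (A : Finset (Fin n)) (hA : A.Nonempty)
    (haD : (A.card : ℝ) * (k * D) ≤ n) :
    Pr (allE n k) p (fun E => ((nb E A).card : ℝ) < (A.card * (k * D)) / 8)
      ≤ Real.exp (-(3 * L)) ^ A.card := by
  have hL0 := P.L100
  have hkL := P.hkL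
  have hDL := P.hDL
  have hL00 : 0 < L := by linarith
  have hD100 : 10000 * L ≤ D := by
    have : L * 10000 ≤ L * L ^ 2 := by gcongr; nlinarith
    nlinarith
  have hD0 : 0 < D := by linarith
  have hk0 : (0:ℝ) < k := by linarith
  have hn1 : (0:ℝ) < n := by
    have h1 := P.hdn
    have : 0 < k * D := by positivity
    linarith
  have hpos : 0 ≤ (A.card : ℝ) * (k * D) := by positivity
  have e8 : (A.card : ℝ) * (k * D) / 8 = 1/8 * ((A.card : ℝ) * (k * D)) := by ring
  rw [e8]
  refine le_trans (Pr_mono P.p0 P.p1 ?_) (P.tail A hA ⌊1/8 * (A.card * (k * D))⌋₊ (1/4) (1/8)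
    (by norm_num) (by norm_num) (by linarith) (Nat.floor_le (by positivity)) (by norm_num) (by linarith) ?_ haD)
  · intro E _ h
    exact Nat.le_floor h.le
  · intro x hx1 hx2
    set y := 1/8 * (A.card * (k * D)) / n with hy
    have hy1 : y ≤ 1/8 := by rw [hy, div_le_iff₀ hn1]; linarith
    have h1 : 1/8 / (1 - y - 1/4) ≤ 1/5 := by
      rw [div_le_iff₀ (by linarith)]
      nlinarith
    have h2 : 3 * L / (x * D) ≤ 1/100 := by
      rw [div_le_iff₀ (by apply mul_pos (by linarith) hD0)]
      nlinarith
    nlinarith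

end CopAux

namespace CopAux
open Finset

variable {n k : ℕ} {p L D : ℝ}

lemma Par.L0 (P : Par n k p L D) : 0 < L := by linarith [P.L100]
lemma Par.k0 (P : Par n k p L D) : (0:ℝ) < k := by linarith [P.L100, P.hkL]
lemma Par.D0 (P : Par n k p L D) : 0 < D := by
  have h1 := P.L0
  have : 0 < L ^ 3 := by positivity
  linarith [P.hDL]
lemma Par.n0 (P : Par n k p L D) : (0:ℝ) < n := by
  have := mul_pos P.k0 P.D0
  linarith [P.hdn]
lemma Par.expL (P : Par n k p L D) : Real.exp L = n := by
  rw [P.hL, Real.exp_log P.n0]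
lemma Par.kn (P : Par n k p L D) : (k:ℝ) ≤ n := by
  have h1 : 1 ≤ D := by
    have : 1 ≤ L ^ 3 := one_le_pow₀ (by linarith [P.L100])
    linarith [P.hDL]
  have := P.hdn
  have := P.k0
  nlinarith
lemma Par.exp_neg (P : Par n k p L D) (j : ℕ) : Real.exp (-(j * L)) = 1 / (n:ℝ) ^ j := by
  rw [Real.exp_neg, Real.exp_nat_mul, P.expL, one_div]
lemma Par.n1 (P : Par n k p L D) : (1:ℝ) ≤ n := by
  have h1 := P.kn
  linarith [P.hkL, P.L100]

lemma card_star (hk : 1 ≤ k) (v : Fin n) :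
    ((allE n k).filter (fun e => v ∈ e)).card = (n - 1).choose (k - 1) := by
  have : (allE n k).filter (fun e => v ∈ e) =
      (powersetCard (k-1) (univ.erase v)).image (fun f => insert v f) := by
    ext e
    simp only [allE, mem_filter, mem_powersetCard, mem_image, subset_univ, true_and]
    constructor
    · rintro ⟨h1, h2⟩
      refine ⟨e.erase v, ⟨erase_subset_erase _ (subset_univ _), ?_⟩, insert_erase h2⟩
      rw [card_erase_of_mem h2, h1]
    · rintro ⟨f, ⟨h1, h2⟩, rfl⟩
      have hv : v ∉ f := fun h => by simpa using h1 h
      refine ⟨?_, mem_insert_self _ _⟩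
      rw [card_insert_of_notMem hv, h2]; omega
  rw [this, card_image_of_injOn, card_powersetCard, card_erase_of_mem (mem_univ _)]
  · simp
  · intro f hf g hg hfg
    have hvf : v ∉ f := fun h => by simpa using (mem_powersetCard.1 hf).1 h
    have hvg : v ∉ g := fun h => by simpa using (mem_powersetCard.1 hg).1 h
    have := congrArg (fun e => e.erase v) hfg
    simpa [erase_insert hvf, erase_insert hvg] using this

lemma Par.bad1 (P : Par n k p L D) :
    Pr (allE n k) p (fun E => ¬ ∀ v, ((E.filter (fun e => v ∈ e)).card:ℝ) ≤ (1+2/L)*D) ≤ 1 / n := by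
  have hk1 : 1 ≤ k := by exact_mod_cast P.k0
  have hL0 := P.L0
  calc _ ≤ Pr (allE n k) p (fun E => ∃ v ∈ (univ : Finset (Fin n)),
        (1+2/L)*D < ((E.filter (fun e => v ∈ e)).card:ℝ)) := by
        apply Pr_mono P.p0 P.p1
        intro E _ h
        push Not at h
        obtain ⟨v, hv⟩ := h
        exact ⟨v, mem_univ _, hv⟩
    _ ≤ ∑ v ∈ (univ : Finset (Fin n)), Pr (allE n k) p (fun E =>
        (1+2/L)*D < ((E.filter (fun e => v ∈ e)).card:ℝ)) := Pr_exists_le P.p0 P.p1 _ _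
    _ ≤ ∑ v ∈ (univ : Finset (Fin n)), 1 / (n:ℝ)^2 := by
        apply sum_le_sum
        intro v _
        have hu := Pr_upper P.p0 P.p1 ((allE n k).filter (fun e => v ∈ e)) (filter_subset _ _) (1/L)
          (by positivity) (by rw [div_le_one hL0]; linarith [P.L100])
        rw [card_star hk1, ← P.hD] at hu
        calc _ ≤ _ := Pr_mono P.p0 P.p1 (R := fun E => (1 + 2 * (1/L)) * D < ((E ∩ (allE n k).filter (fun e => v ∈ e)).card : ℝ)) ?_
          _ ≤ _ := hu
          _ ≤ Real.exp (-((2:ℕ) * L)) := by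
            apply Real.exp_le_exp.2
            have e1 : (1/L)^2 * (100 * L^3) = 100 * L := by field_simp
            have : (1/L)^2 * (100 * L^3) ≤ (1/L)^2 * D := by gcongr; exact P.hDL
            push_cast
            linarith
          _ = _ := P.exp_neg 2
        intro E hE h
        have : E ∩ (allE n k).filter (fun e => v ∈ e) = E.filter (fun e => v ∈ e) := by
          ext e
          simp only [mem_inter, mem_filter]
          exact ⟨fun h => ⟨h.1, h.2.2⟩, fun h => ⟨h.1, hE h.1, h.2⟩⟩
        rw [this]
        have e2 : 2 * (1/L) = 2/L := by ring
        rw [e2]; exact h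
    _ = _ := by
        have := P.n0
        simp
        field_simp

lemma Par.union_nonempty (P : Par n k p L D) (R : Finset (Fin n) → Finset (Finset (Fin n)) → Prop)
    (h : ∀ A : Finset (Fin n), A.Nonempty → Pr (allE n k) p (R A) ≤ Real.exp (-(3 * L)) ^ A.card) :
    Pr (allE n k) p (fun E => ∃ A : Finset (Fin n), A.Nonempty ∧ R A E) ≤ 2 / n := by
  classical
  have hn1 := P.n1
  have hn0 := P.n0
  have e3 : Real.exp (-(3 * L)) = 1 / (n:ℝ)^3 := by
    have := P.exp_neg 3
    exact_mod_cast this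
  calc _ ≤ Pr (allE n k) p (fun E => ∃ A ∈ (univ : Finset (Fin n)).powerset.filter (·.Nonempty), R A E) := by
        apply Pr_mono P.p0 P.p1
        rintro E _ ⟨A, h1, h2⟩
        exact ⟨A, by simp [h1], h2⟩
    _ ≤ ∑ A ∈ (univ : Finset (Fin n)).powerset.filter (·.Nonempty), Pr (allE n k) p (R A) :=
        Pr_exists_le P.p0 P.p1 _ _
    _ ≤ ∑ A ∈ (univ : Finset (Fin n)).powerset.filter (·.Nonempty), (1 / (n:ℝ)^3) ^ A.card := by
        apply sum_le_sum
        intro A hA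
        rw [← e3]
        exact h A (mem_filter.1 hA).2
    _ ≤ 2 * ((1 / (n:ℝ)^3) * (univ : Finset (Fin n)).card) := by
        apply sum_nonempty_pow _ _ (by positivity)
        simp only [card_univ, Fintype.card_fin]
        rw [one_div_mul_eq_div, div_le_one (by positivity)]
        nlinarith [mul_le_mul hn1 hn1 (by norm_num) hn0.le]
    _ ≤ _ := by
        simp only [card_univ, Fintype.card_fin]
        rw [one_div_mul_eq_div, ← mul_div_assoc, div_le_div_iff₀ (by positivity) hn0]
        nlinarith [mul_le_mul hn1 hn1 (by norm_num) hn0.le]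

lemma Par.bad2 (P : Par n k p L D) :
    Pr (allE n k) p (fun E => ¬ ∀ A : Finset (Fin n), A.Nonempty → (A.card:ℝ)*(k*D) ≤ n/L →
      (1-9/L)*(A.card*(k*D)) ≤ (nb E A).card) ≤ 2 / n := by
  refine le_trans (Pr_mono P.p0 P.p1 ?_) (P.union_nonempty
    (fun A E => (A.card:ℝ)*(k*D) ≤ n/L ∧ ((nb E A).card : ℝ) < (1-9/L)*(A.card*(k*D))) ?_)
  · intro E _ h
    push Not at h
    obtain ⟨A, h1, h2, h3⟩ := h
    exact ⟨A, h1, h2, h3⟩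
  · intro A hA
    by_cases h : (A.card:ℝ)*(k*D) ≤ n/L
    · simpa [h] using P.strong A hA h
    · have : Pr (allE n k) p (fun _ => False) = 0 := by simp [Pr]
      simp only [h, false_and, this]
      positivity

lemma Par.bad3 (P : Par n k p L D) :
    Pr (allE n k) p (fun E => ¬ ∀ A : Finset (Fin n), A.Nonempty → (A.card:ℝ)*(k*D) ≤ n →
      (A.card*(k*D))/8 ≤ (nb E A).card) ≤ 2 / n := by
  refine le_trans (Pr_mono P.p0 P.p1 ?_) (P.union_nonempty
    (fun A E => (A.card:ℝ)*(k*D) ≤ n ∧ ((nb E A).card : ℝ) < (A.card*(k*D))/8) ?_)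
  · intro E _ h
    push Not at h
    obtain ⟨A, h1, h2, h3⟩ := h
    exact ⟨A, h1, h2, h3⟩
  · intro A hA
    by_cases h : (A.card:ℝ)*(k*D) ≤ n
    · simpa [h] using P.weak A hA h
    · have : Pr (allE n k) p (fun _ => False) = 0 := by simp [Pr]
      simp only [h, false_and, this]
      positivity

end CopAux

namespace CopAux
open Finset

variable {n k : ℕ} {p L D : ℝ}

lemma Par.pN (P : Par n k p L D) : p * (n.choose k : ℝ) ≤ Real.exp (2 * L) := by
  have hk0 := P.k0
  have hn0 := P.n0
  have hn1 : 1 ≤ n := by exact_mod_cast P.n1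
  have hk1 : 1 ≤ k := by exact_mod_cast P.k0
  have e := Nat.add_one_mul_choose_eq (n-1) (k-1)
  rw [Nat.sub_add_cancel hn1, Nat.sub_add_cancel hk1] at e
  have e' : (n:ℝ) * ((n-1).choose (k-1) : ℕ) = (n.choose k : ℝ) * k := by exact_mod_cast e
  have h2 : p * (n.choose k : ℝ) * k = n * D := by
    rw [P.hD, mul_assoc, ← e']; ring
  have hk1' : (1:ℝ) ≤ k := by exact_mod_cast hk1
  have hD := P.D0
  have hDn : D ≤ n := by nlinarith [P.hdn]
  have e2 : Real.exp (2 * L) = (n:ℝ) * n := by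
    rw [two_mul, Real.exp_add, P.expL]
  rw [e2]
  have h3 : 0 ≤ p * (n.choose k : ℝ) := mul_nonneg P.p0 (by positivity)
  calc p * (n.choose k : ℝ) ≤ p * (n.choose k : ℝ) * k := le_mul_of_one_le_right h3 hk1'
    _ = n * D := h2
    _ ≤ n * n := by gcongr

lemma Par.num4 (P : Par n k p L D) (b w : ℕ) (hb : 1 ≤ b) (hbk : b * k ≤ n) (hw : 8 * w ≤ b * k) :
    (n.choose w : ℝ) * ((w.choose k : ℝ) * p) ^ b ≤ Real.exp (-(3 * L)) := by
  have hn0 := P.n0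
  have hk0 := P.k0
  have hb1 : (1:ℝ) ≤ b := by exact_mod_cast hb
  have hbk' : (b:ℝ) * k ≤ n := by exact_mod_cast hbk
  have hw' : 8 * (w:ℝ) ≤ b * k := by exact_mod_cast hw
  obtain ⟨z, hz⟩ : ∃ z : ℝ, z = b * k / (8 * n) := ⟨_, rfl⟩
  have hz0 : 0 < z := by rw [hz]; positivity
  have hz8 : z ≤ 1/8 := by rw [hz, div_le_div_iff₀ (by positivity) (by norm_num)]; linarith
  have hzn : z * n = b * k / 8 := by rw [hz]; field_simp
  have hwz : (w:ℝ) ≤ z * n := by rw [hzn]; linarith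
  have h1 : (n.choose w : ℝ) * z ^ w ≤ Real.exp (b * k / 8) := by
    calc (n.choose w : ℝ) * z ^ w ≤ (z + 1) ^ n := by
          rw [add_pow]
          have hmem : w ∈ range (n+1) := by rw [mem_range]; omega
          refine le_trans (le_of_eq ?_) (single_le_sum (f := fun m => z ^ m * 1 ^ (n - m) * (n.choose m : ℝ))
            (fun i _ => by positivity) hmem)
          simp [mul_comm]
      _ ≤ Real.exp z ^ n := by
          gcongr
          exact Real.add_one_le_exp z
      _ = Real.exp (b * k / 8) := by rw [← Real.exp_nat_mul, mul_comm, hzn]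
  have h2 : (w.choose k : ℝ) ≤ n.choose k * z ^ k := by
    have := choose_le_pow_ratio n w k (by omega)
    have h3 : (w.choose k : ℝ) * n ^ k ≤ (n.choose k * z ^ k) * n ^ k := by
      refine this.trans ?_
      rw [mul_assoc, ← mul_pow]
      gcongr
    exact le_of_mul_le_mul_right h3 (by positivity)
  have hp0 := P.p0
  have h4 : ((w.choose k : ℝ) * p) ^ b ≤ (Real.exp (2 * L) * z ^ k) ^ b := by
    refine pow_le_pow_left₀ (by positivity) ?_ b
    calc (w.choose k : ℝ) * p ≤ (n.choose k * z ^ k) * p := by gcongr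
      _ = (p * n.choose k) * z ^ k := by ring
      _ ≤ _ := by gcongr; exact P.pN
  have hz2 : z ≤ Real.exp (-2) := by
    rw [Real.exp_neg]
    refine hz8.trans ?_
    rw [one_div]
    exact inv_anti₀ (Real.exp_pos _) exp_two_le
  obtain ⟨m, hm⟩ : ∃ m, k * b = w + m := ⟨k * b - w, by
    have : b * k = k * b := mul_comm _ _
    omega⟩
  have hm' : (k:ℝ) * b = w + m := by exact_mod_cast hm
  have h5 : z ^ m ≤ Real.exp (m * (-2)) := by
    rw [Real.exp_nat_mul]
    gcongr
  calc _ ≤ (n.choose w : ℝ) * (Real.exp (2 * L) * z ^ k) ^ b := by gcongr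
    _ = ((n.choose w : ℝ) * z ^ w) * Real.exp (b * (2 * L)) * z ^ m := by
        rw [mul_pow, ← pow_mul, hm, pow_add, Real.exp_nat_mul]; ring
    _ ≤ Real.exp (b * k / 8) * Real.exp (b * (2 * L)) * Real.exp (m * (-2)) := by gcongr
    _ = Real.exp (b * k / 8 + b * (2 * L) + m * (-2)) := by rw [Real.exp_add, Real.exp_add]
    _ ≤ _ := by
        apply Real.exp_le_exp.2
        have h6 : (b:ℝ) * (100 * L) ≤ b * k := by gcongr; exact P.hkL
        have h7 : 1 * L ≤ b * L := by
          have := P.L0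
          gcongr
        linarith

lemma Par.bad4b (P : Par n k p L D) (b : ℕ) (hb : 1 ≤ b) (hbk : b * k ≤ n) :
    Pr (allE n k) p (fun E => ∃ B ⊆ E, B.card = b ∧ ((B.biUnion id).card : ℝ) < b * k / 8) ≤
      Real.exp (-(3 * L)) := by
  classical
  have hp0 := P.p0
  obtain ⟨w, hw⟩ : ∃ w, w = b * k / 8 := ⟨_, rfl⟩
  refine le_trans ?_ (P.num4 b w hb hbk (by omega))
  have hsub : ∀ W : Finset (Fin n), powersetCard k W ⊆ allE n k := fun W =>
    powersetCard_mono (subset_univ _)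
  calc _ ≤ Pr (allE n k) p (fun E => ∃ i ∈ (powersetCard w (univ : Finset (Fin n))).sigma
          (fun W => powersetCard b (powersetCard k W)), i.2 ⊆ E) := by
        apply Pr_mono P.p0 P.p1
        rintro E hE ⟨B, hB, hBb, hBw⟩
        have h8 : 8 * (B.biUnion id).card < b * k := by
          have : 8 * ((B.biUnion id).card : ℝ) < b * k := by linarith
          exact_mod_cast this
        obtain ⟨W, hW1, hW2⟩ := exists_superset_card_eq (s := B.biUnion id) (n := w)
          (by omega) (by simp; omega)
        refine ⟨⟨W, B⟩, ?_, hB⟩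
        simp only [mem_sigma, mem_powersetCard, subset_univ, true_and]
        refine ⟨hW2, ?_, hBb⟩
        intro e he
        rw [mem_powersetCard]
        refine ⟨fun x hx => hW1 (mem_biUnion.2 ⟨e, he, hx⟩), ?_⟩
        exact (mem_powersetCard.1 (hE (hB he))).2
    _ ≤ _ := Pr_exists_le P.p0 P.p1 _ _
    _ = ∑ i ∈ (powersetCard w (univ : Finset (Fin n))).sigma
          (fun W => powersetCard b (powersetCard k W)), p ^ b := by
        apply sum_congr rfl
        rintro ⟨W, B⟩ h
        simp only [mem_sigma, mem_powersetCard] at h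
        rw [Pr_superset _ (h.2.1.trans (hsub W)), h.2.2]
    _ = ∑ W ∈ powersetCard w (univ : Finset (Fin n)), (((w.choose k).choose b : ℕ) : ℝ) * p ^ b := by
        rw [sum_sigma]
        apply sum_congr rfl
        intro W hW
        rw [sum_const, card_powersetCard, card_powersetCard, (mem_powersetCard.1 hW).2, nsmul_eq_mul]
    _ = (n.choose w : ℝ) * ((((w.choose k).choose b : ℕ) : ℝ) * p ^ b) := by
        rw [sum_const, card_powersetCard, nsmul_eq_mul]; simp
    _ ≤ _ := by
        rw [mul_pow]
        gcongr
        exact_mod_cast Nat.choose_le_pow (w.choose k) b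

lemma Par.bad4 (P : Par n k p L D) :
    Pr (allE n k) p (fun E => ¬ ∀ B ⊆ E, B.Nonempty → (B.card : ℝ) * k ≤ n →
      (B.card : ℝ) * k / 8 ≤ (B.biUnion id).card) ≤ 1 / n := by
  classical
  have hn0 := P.n0
  have hn1 := P.n1
  have hk1 : 1 ≤ k := by exact_mod_cast P.k0
  calc _ ≤ Pr (allE n k) p (fun E => ∃ b ∈ (Icc 1 n).filter (fun b => b * k ≤ n),
          ∃ B ⊆ E, B.card = b ∧ ((B.biUnion id).card : ℝ) < b * k / 8) := by
        apply Pr_mono P.p0 P.p1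
        intro E _ h
        push Not at h
        obtain ⟨B, h1, h2, h3, h4⟩ := h
        have h3' : B.card * k ≤ n := by exact_mod_cast h3
        refine ⟨B.card, ?_, B, h1, rfl, h4⟩
        rw [mem_filter, mem_Icc]
        exact ⟨⟨h2.card_pos, le_trans (Nat.le_mul_of_pos_right _ hk1) h3'⟩, h3'⟩
    _ ≤ _ := Pr_exists_le P.p0 P.p1 _ _
    _ ≤ ∑ b ∈ (Icc 1 n).filter (fun b => b * k ≤ n), Real.exp (-(3 * L)) := by
        apply sum_le_sum
        intro b hb
        rw [mem_filter, mem_Icc] at hb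
        exact P.bad4b b hb.1.1 hb.2
    _ ≤ ∑ b ∈ Icc 1 n, Real.exp (-(3 * L)) :=
        sum_le_sum_of_subset_of_nonneg (filter_subset _ _) (fun _ _ _ => (Real.exp_pos _).le)
    _ ≤ _ := by
        have e3 : Real.exp (-(3 * L)) = 1 / (n:ℝ)^3 := by
          have := P.exp_neg 3
          exact_mod_cast this
        rw [sum_const, e3, Nat.card_Icc, nsmul_eq_mul, Nat.add_sub_cancel, ← mul_div_assoc,
          div_le_div_iff₀ (by positivity) hn0]
        nlinarith [mul_le_mul hn1 hn1 (by norm_num) hn0.le]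

lemma Par.good (P : Par n k p L D) : 1 - 6 / n ≤ Pr (allE n k) p (Good n k L D) := by
  rw [Pr_not]
  have h : Pr (allE n k) p (fun E => ¬ Good n k L D E) ≤ 1 / n + (2 / n + (2 / n + 1 / n)) := by
    refine le_trans (Pr_mono P.p0 P.p1 ?_) ((Pr_or_le P.p0 P.p1 _ _).trans (add_le_add P.bad1
      ((Pr_or_le P.p0 P.p1 _ _).trans (add_le_add P.bad2
      ((Pr_or_le P.p0 P.p1 _ _).trans (add_le_add P.bad3 P.bad4))))))
    intro E _ h
    by_contra hc
    push Not at hc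
    exact h ⟨hc.1, hc.2.1, hc.2.2.1, hc.2.2.2⟩
  have : (1:ℝ) / n + (2 / n + (2 / n + 1 / n)) = 6 / n := by ring
  linarith

lemma ghProb_ge (h0 : 0 ≤ p) (h1 : p ≤ 1) (R : Finset (Finset (Fin n)) → Prop) (Q : KGraph n k → Prop)
    (h : ∀ G : KGraph n k, R G.edges → Q G) : Pr (allE n k) p R ≤ ghProb n k p Q := by
  classical
  unfold Pr ghProb
  apply sum_le_sum
  intro E hE
  have hu : ∀ e ∈ E, e.card = k := fun e he => (mem_powersetCard.1 (mem_powerset.1 hE he)).2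
  rw [dif_pos hu]
  have hw := wt_nonneg (P := allE n k) h0 h1 E
  by_cases hR : R E
  · rw [if_pos hR, if_pos (h ⟨E, hu⟩ hR)]
    exact le_rfl
  · rw [if_neg hR]
    split_ifs
    · exact hw
    · exact le_rfl

lemma ghProb_le_one (h0 : 0 ≤ p) (h1 : p ≤ 1) (Q : KGraph n k → Prop) : ghProb n k p Q ≤ 1 := by
  classical
  rw [← Pr_true (P := allE n k) (p := p)]
  unfold Pr ghProb
  apply sum_le_sum
  intro E hE
  have hw := wt_nonneg (P := allE n k) h0 h1 E
  rw [if_pos trivial]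
  split_ifs
  · exact le_rfl
  · exact hw
  · exact hw

lemma Par.final (P : Par n k p L D) :
    1 - 6 / n ≤ ghProb n k p (fun G =>
          (G.copNumber : ℝ) ≤ (80/xi + 1) * Real.sqrt ((n : ℝ) / k) * Real.log n) := by
  refine P.good.trans (ghProb_ge P.p0 P.p1 _ _ ?_)
  intro G hG
  have hk0 := P.k0
  have hn0 := P.n0
  have hL := P.L100
  have hxi := xi_pos
  rw [← P.hL]
  obtain ⟨Q, hQ⟩ : ∃ Q, Q = Real.sqrt ((n : ℝ) / k) := ⟨_, rfl⟩
  rw [← hQ]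
  have hQ2 : Q ^ 2 = n / k := by rw [hQ, Real.sq_sqrt (by positivity)]
  have hQ1 : 1 ≤ Q := by
    rw [hQ, Real.one_le_sqrt, one_le_div hk0]
    exact P.kn
  have hL3 : L * 1 ≤ L * L ^ 2 := by gcongr; nlinarith
  have := copNumber_le G L D Q P.hL hL hQ1 (by rw [hQ2]; field_simp) (by exact_mod_cast hk0)
    (by nlinarith [P.hDL]) P.hdn hG ⌈80/xi*Q*L⌉₊ (Nat.le_ceil _)
  have h2 : (G.copNumber : ℝ) ≤ ⌈80/xi*Q*L⌉₊ := by exact_mod_cast this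
  have h3 := Nat.ceil_lt_add_one (a := 80/xi*Q*L) (by positivity)
  have h4 : 1 ≤ Q * L := by nlinarith
  have h5 : (80/xi + 1) * Q * L = 80/xi*Q*L + Q * L := by ring
  linarith

end CopAux

/-- whp the cop number of `G^k(n,p)` is at most `C √(n/k) log n`. -/
theorem whp_Gknp_cop_number (k : ℕ → ℕ) (p : ℕ → ℝ) (hp : ∀ n, 0 < p n)
    (hk : Filter.Tendsto (fun n => (k n : ℝ) / Real.log n) Filter.atTop Filter.atTop)
    (hub : ∀ᶠ n in Filter.atTop,
      p n * (((n - 1).choose (k n - 1) : ℕ) : ℝ) ≤ (n : ℝ) / k n)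
    (hlb : Filter.Tendsto
      (fun n => p n * (((n - 1).choose (k n - 1) : ℕ) : ℝ) / Real.log n ^ 3)
      Filter.atTop Filter.atTop) :
    ∃ C : ℝ, 0 < C ∧
      Filter.Tendsto
        (fun n => ghProb n (k n) (p n) (fun G =>
          (G.copNumber : ℝ) ≤ C * Real.sqrt ((n : ℝ) / k n) * Real.log n))
        Filter.atTop (nhds 1) := by
  have hxi := CopAux.xi_pos
  refine ⟨80/CopAux.xi + 1, by positivity, ?_⟩
  have hlog : ∀ᶠ n : ℕ in Filter.atTop, 100 ≤ Real.log n :=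
    (Real.tendsto_log_atTop.comp tendsto_natCast_atTop_atTop).eventually_ge_atTop 100
  have hpar : ∀ᶠ n in Filter.atTop, CopAux.Par n (k n) (p n) (Real.log n)
      (p n * (((n - 1).choose (k n - 1) : ℕ) : ℝ)) := by
    filter_upwards [hlog, hub, hk.eventually_ge_atTop 100, hlb.eventually_ge_atTop 100] with n h1 h2 h3 h4
    have hL0 : 0 < Real.log n := by linarith
    rw [le_div_iff₀ hL0] at h3
    rw [le_div_iff₀ (by positivity)] at h4
    have hk0 : (0:ℝ) < k n := by linarith
    have hk1 : (10000:ℝ) ≤ k n := by linarith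
    have hk1' : 10000 ≤ k n := by exact_mod_cast hk1
    have h5 := h2
    rw [le_div_iff₀ hk0] at h5
    have hD1 : 100 ≤ p n * (((n - 1).choose (k n - 1) : ℕ) : ℝ) := by
      have : 1 ≤ Real.log n ^ 3 := one_le_pow₀ (by linarith)
      linarith
    have hkn : 100 * (k n : ℝ) ≤ n := by nlinarith
    have hkn' : 100 * k n ≤ n := by exact_mod_cast hkn
    have hp1 : p n ≤ 1 := by
      have hc : n - 1 ≤ (n - 1).choose (k n - 1) := by
        have hind : ∀ r, r + 1 ≤ (n - 1) / 2 → n - 1 ≤ (n - 1).choose (r + 1) := by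
          intro r
          induction r with
          | zero => intro _; simp
          | succ r ih =>
            intro hr
            exact (ih (by omega)).trans (Nat.choose_le_succ_of_lt_half_left (by omega))
        have := hind (k n - 2) (by omega)
        rwa [show k n - 2 + 1 = k n - 1 by omega] at this
      have hc' : (n:ℝ) - 1 ≤ ((n - 1).choose (k n - 1) : ℕ) := by
        have : n ≤ (n - 1).choose (k n - 1) + 1 := by omega
        have : (n:ℝ) ≤ ((n - 1).choose (k n - 1) : ℕ) + 1 := by exact_mod_cast this
        linarith
      by_contra hlt
      push Not at hlt
      have h6 : (n:ℝ) / k n ≤ n / 10000 := by gcongr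
      have h7 : 1 * (((n - 1).choose (k n - 1) : ℕ) : ℝ) ≤ p n * (((n - 1).choose (k n - 1) : ℕ) : ℝ) := by
        gcongr
      linarith
    exact ⟨(hp n).le, hp1, rfl, h1, h3, rfl, h4, by linarith⟩
  refine tendsto_of_tendsto_of_tendsto_of_le_of_le' (g := fun n : ℕ => 1 - 6 / (n:ℝ)) (h := fun _ => 1)
    ?_ tendsto_const_nhds ?_ ?_
  · have : Filter.Tendsto (fun n : ℕ => 6 / (n:ℝ)) Filter.atTop (nhds 0) :=
      tendsto_const_div_atTop_nhds_zero_nat 6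
    simpa using this.const_sub 1
  · filter_upwards [hpar] with n P using P.final
  · filter_upwards [hpar] with n P using CopAux.ghProb_le_one P.p0 P.p1 _
end

section
/- Let k ≥ 2 be an integer, let 0 < ξ ≤ 1, let G be a ξ-expanding k-graph on n ≥ 20 vertices with average vertex degree d = d(G), and let j ∈ ℕ with j ≥ 2 and n^{1/(2j−1)} ≤ d ≤ (n/k)^{1/(2j−2)}. Then there exists a subset Y ⊆ V(G) with |Y| ≤ 20 · ξ^{-2} · d^{j−1} · ⌈(n/d^{2j−1}) · log n⌉ such that for every vertex v ∈ V(G) there exists an injection f : N_V^{j−1}(v) → Y with dist(x, f(x)) ≤ j for every x ∈ N_V^{j−1}(v). -/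
open scoped BigOperators

namespace CopAux

open Finset

lemma mgf {n : ℕ} (p s : ℝ) (N : Finset (Fin n)) (hp0 : 0 ≤ p) (hp1 : p ≤ 1) :
    ∑ Y ∈ (univ : Finset (Fin n)).powerset,
      p ^ Y.card * (1 - p) ^ (n - Y.card) * Real.exp (s * ((Y ∩ N).card : ℝ))
      ≤ Real.exp (p * N.card * (Real.exp s - 1)) := by
  classical
  have h1 : ∑ Y ∈ (univ : Finset (Fin n)).powerset,
      p ^ Y.card * (1 - p) ^ (n - Y.card) * Real.exp (s * ((Y ∩ N).card : ℝ))
      = ∏ i : Fin n, (p * (if i ∈ N then Real.exp s else 1) + (1 - p)) := by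
    rw [Finset.prod_add]
    refine Finset.sum_congr rfl fun Y _ => ?_
    rw [Finset.prod_mul_distrib, Finset.prod_const, Finset.prod_const, Finset.prod_ite_mem,
      Finset.prod_const, ← Finset.compl_eq_univ_sdiff, Finset.card_compl, Fintype.card_fin,
      mul_comm s, Real.exp_nat_mul]
    ring
  rw [h1]
  have h2 : Real.exp (p * N.card * (Real.exp s - 1))
      = ∏ i : Fin n, (if i ∈ N then Real.exp (p * (Real.exp s - 1)) else 1) := by
    rw [Finset.prod_ite_mem, Finset.prod_const, Finset.univ_inter, ← Real.exp_nat_mul]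
    congr 1; ring
  rw [h2]
  refine Finset.prod_le_prod (fun i _ => ?_) (fun i _ => ?_)
  · have : 0 ≤ (if i ∈ N then Real.exp s else 1) := by split_ifs <;> positivity
    have := mul_nonneg hp0 this
    linarith
  · split_ifs
    · have := Real.add_one_le_exp (p * (Real.exp s - 1))
      linarith
    · linarith

lemma wsum {n : ℕ} (p : ℝ) :
    ∑ Y ∈ (univ : Finset (Fin n)).powerset, p ^ Y.card * (1 - p) ^ (n - Y.card) = 1 := by
  have := Finset.sum_pow_mul_eq_add_pow p (1 - p) (univ : Finset (Fin n))
  simpa using this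

lemma exists_good {n : ℕ} (hn : 20 ≤ n) (p M L : ℝ) (hp1 : p ≤ 1)
    (hM : 20 ≤ M) (hpM : p * n = M / 2)
    (hL : 1 + Real.log n / 3 ≤ L)
    (B : Fin n → Finset (Fin n)) (hB : ∀ v, ((B v).card : ℝ) ≤ L)
    (F : Finset (Fin n) → Finset (Fin n))
    (hF : ∀ v, ∀ A ⊆ B v, A.Nonempty →
      10 * A.card * Real.log n ≤ p * (F A).card ∨ 10 * L ≤ p * (F A).card) :
    ∃ Y : Finset (Fin n), (Y.card : ℝ) ≤ M ∧
      ∀ v, ∀ A ⊆ B v, A.Nonempty → A.card ≤ (Y ∩ F A).card := by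
  classical
  have hn0 : (20 : ℝ) ≤ n := by exact_mod_cast hn
  have hp0 : 0 ≤ p := by
    by_contra h
    push Not at h
    have : p * n < 0 := mul_neg_of_neg_of_pos h (by linarith)
    linarith
  have hlog : 1 ≤ Real.log n := by
    rw [Real.le_log_iff_exp_le (by linarith)]
    have := Real.exp_one_lt_d9
    linarith
  have he1 := Real.exp_one_lt_d9
  have he2 := Real.exp_one_gt_d9
  set w : Finset (Fin n) → ℝ := fun Y => p ^ Y.card * (1 - p) ^ (n - Y.card) with hw
  have hw0 : ∀ Y, 0 ≤ w Y := fun Y => mul_nonneg (pow_nonneg hp0 _) (pow_nonneg (by linarith) _)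
  -- potential
  set Φ : Finset (Fin n) → ℝ := fun Y =>
    Real.exp (-M) * Real.exp (1 * ((Y ∩ univ).card : ℝ)) +
      ∑ v : Fin n, ∑ A ∈ (B v).powerset.erase ∅,
        Real.exp (A.card : ℝ) * Real.exp ((-1) * ((Y ∩ F A).card : ℝ)) with hΦ
  have hexpect : ∑ Y ∈ (univ : Finset (Fin n)).powerset, w Y * Φ Y ≤
      Real.exp (-M) * Real.exp (p * (univ : Finset (Fin n)).card * (Real.exp 1 - 1)) +
      ∑ v : Fin n, ∑ A ∈ (B v).powerset.erase ∅,
        Real.exp (A.card : ℝ) * Real.exp (p * (F A).card * (Real.exp (-1) - 1)) := by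
    have : ∑ Y ∈ (univ : Finset (Fin n)).powerset, w Y * Φ Y =
        Real.exp (-M) * (∑ Y ∈ (univ : Finset (Fin n)).powerset,
          w Y * Real.exp (1 * ((Y ∩ univ).card : ℝ))) +
        ∑ v : Fin n, ∑ A ∈ (B v).powerset.erase ∅,
          Real.exp (A.card : ℝ) * ∑ Y ∈ (univ : Finset (Fin n)).powerset,
            w Y * Real.exp ((-1) * ((Y ∩ F A).card : ℝ)) := by
      simp only [hΦ, mul_add, Finset.sum_add_distrib, Finset.mul_sum]
      congr 1
      · refine Finset.sum_congr rfl fun _ _ => by ring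
      · rw [Finset.sum_comm]
        refine Finset.sum_congr rfl fun v _ => ?_
        rw [Finset.sum_comm]
        refine Finset.sum_congr rfl fun A _ => ?_
        refine Finset.sum_congr rfl fun Y _ => by ring
    rw [this]
    refine add_le_add (mul_le_mul_of_nonneg_left (mgf p 1 univ hp0 hp1) (Real.exp_pos _).le) ?_
    refine Finset.sum_le_sum fun v _ => Finset.sum_le_sum fun A _ => ?_
    exact mul_le_mul_of_nonneg_left (mgf p (-1) (F A) hp0 hp1) (Real.exp_pos _).le
  have hinv : Real.exp (-1) ≤ 0.4 := by
    rw [Real.exp_neg, inv_le_comm₀ (Real.exp_pos _) (by norm_num)]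
    norm_num at *
    linarith
  have hT1 : Real.exp (-M) * Real.exp (p * (univ : Finset (Fin n)).card * (Real.exp 1 - 1))
      ≤ 0.3 := by
    rw [← Real.exp_add, Finset.card_univ, Fintype.card_fin, hpM]
    have h1 : -M + M / 2 * (Real.exp 1 - 1) ≤ -2.8 := by nlinarith
    have h2 : Real.exp (-2.8) ≤ 0.3 := by
      rw [Real.exp_neg, inv_le_comm₀ (Real.exp_pos _) (by norm_num)]
      have := Real.add_one_le_exp (2.8 : ℝ)
      norm_num at *
      linarith
    exact (Real.exp_le_exp.2 h1).trans h2
  have hterm : ∀ v, ∀ A ∈ (B v).powerset.erase ∅,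
      Real.exp (A.card : ℝ) * Real.exp (p * (F A).card * (Real.exp (-1) - 1)) ≤
        (Real.exp (-5 * Real.log n)) ^ A.card + Real.exp (-5 * L) := by
    intro v A hA
    rw [Finset.mem_erase, Finset.mem_powerset] at hA
    obtain ⟨hne, hAB⟩ := hA
    have hne := Finset.nonempty_iff_ne_empty.2 hne
    have hAL : (A.card : ℝ) ≤ L := le_trans (by exact_mod_cast Finset.card_le_card hAB) (hB v)
    rw [← Real.exp_add, ← Real.exp_nat_mul]
    have hpf : 0 ≤ p * (F A).card := by positivity
    have hA0 : (0 : ℝ) ≤ A.card := by positivity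
    rcases hF v A hAB hne with h | h
    · refine le_trans (Real.exp_le_exp.2 ?_) (le_add_of_nonneg_right (Real.exp_pos _).le)
      have : (A.card : ℝ) * 1 ≤ A.card * Real.log n := mul_le_mul_of_nonneg_left hlog hA0
      nlinarith
    · refine le_trans (Real.exp_le_exp.2 ?_) (le_add_of_nonneg_left (Real.exp_pos _).le)
      nlinarith
  have hx : Real.exp (-5 * Real.log n) = ((n : ℝ) ^ 5)⁻¹ := by
    rw [neg_mul, Real.exp_neg, show (5 : ℝ) * Real.log n = ((5 : ℕ) : ℝ) * Real.log n by norm_num,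
      Real.exp_nat_mul, Real.exp_log (by linarith)]
  have hsum : ∀ v, ∑ A ∈ (B v).powerset.erase ∅,
        Real.exp (A.card : ℝ) * Real.exp (p * (F A).card * (Real.exp (-1) - 1)) ≤
        2 * ((n : ℝ) ^ 4)⁻¹ + Real.exp (-4 * L) := by
    intro v
    refine (Finset.sum_le_sum (hterm v)).trans ?_
    rw [Finset.sum_add_distrib]
    refine add_le_add ?_ ?_
    · have h1 : ∑ A ∈ (B v).powerset, (Real.exp (-5 * Real.log n)) ^ A.card
          = (Real.exp (-5 * Real.log n) + 1) ^ (B v).card := by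
        have := Finset.sum_pow_mul_eq_add_pow (Real.exp (-5 * Real.log n)) 1 (B v)
        simpa using this
      have h2 := Finset.sum_erase_add (B v).powerset
        (fun A => (Real.exp (-5 * Real.log n)) ^ A.card) (Finset.empty_mem_powerset (B v))
      rw [h1] at h2
      simp only [Finset.card_empty, pow_zero] at h2
      have h3 : (Real.exp (-5 * Real.log n) + 1) ^ (B v).card ≤ Real.exp (((n : ℝ) ^ 4)⁻¹) := by
        calc (Real.exp (-5 * Real.log n) + 1) ^ (B v).card
            ≤ (Real.exp (Real.exp (-5 * Real.log n))) ^ (B v).card :=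
              pow_le_pow_left₀ (by positivity) (Real.add_one_le_exp _) _
          _ = Real.exp ((B v).card * Real.exp (-5 * Real.log n)) := by rw [Real.exp_nat_mul]
          _ ≤ _ := by
            rw [Real.exp_le_exp, hx]
            have : ((B v).card : ℝ) ≤ n := by
              have := Finset.card_le_univ (B v)
              rw [Fintype.card_fin] at this
              exact_mod_cast this
            calc ((B v).card : ℝ) * ((n : ℝ) ^ 5)⁻¹ ≤ n * ((n : ℝ) ^ 5)⁻¹ := by gcongr
              _ = _ := by field_simp
      have h4 : ((n : ℝ) ^ 4)⁻¹ ≤ 1 := inv_le_one_of_one_le₀ (one_le_pow₀ (by linarith))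
      have h5 : 0 ≤ ((n : ℝ) ^ 4)⁻¹ := by positivity
      have h6 := Real.abs_exp_sub_one_le (x := ((n : ℝ) ^ 4)⁻¹) (by rwa [abs_of_nonneg h5])
      rw [abs_of_nonneg h5] at h6
      have := le_abs_self (Real.exp ((n : ℝ) ^ 4)⁻¹ - 1)
      linarith
    · rw [Finset.sum_const, nsmul_eq_mul]
      have h1 : (((B v).powerset.erase ∅).card : ℝ) ≤ Real.exp L := by
        calc (((B v).powerset.erase ∅).card : ℝ) ≤ ((B v).powerset.card : ℝ) := by
              exact_mod_cast Finset.card_erase_le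
          _ = 2 ^ (B v).card := by rw [Finset.card_powerset]; push_cast; rfl
          _ ≤ (Real.exp 1) ^ (B v).card := pow_le_pow_left₀ (by norm_num) (by linarith) _
          _ = Real.exp ((B v).card * 1) := by rw [Real.exp_nat_mul]
          _ ≤ _ := by rw [Real.exp_le_exp]; linarith [hB v]
      calc _ ≤ Real.exp L * Real.exp (-5 * L) := by gcongr
        _ = _ := by rw [← Real.exp_add]; congr 1; ring
  have hT2 : ∑ v : Fin n, ∑ A ∈ (B v).powerset.erase ∅,
        Real.exp (A.card : ℝ) * Real.exp (p * (F A).card * (Real.exp (-1) - 1)) ≤ 0.5 := by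
    refine (Finset.sum_le_sum fun v _ => hsum v).trans ?_
    rw [Finset.sum_const, nsmul_eq_mul, Finset.card_univ, Fintype.card_fin, mul_add]
    have h1 : (n : ℝ) * (2 * ((n : ℝ) ^ 4)⁻¹) ≤ 0.25 := by
      have : (n : ℝ) * (2 * ((n : ℝ) ^ 4)⁻¹) = 2 * ((n : ℝ) ^ 3)⁻¹ := by field_simp
      rw [this]
      have : ((n : ℝ) ^ 3)⁻¹ ≤ ((20 : ℝ) ^ 3)⁻¹ := by gcongr
      norm_num at *
      linarith
    have h2 : (n : ℝ) * Real.exp (-4 * L) ≤ 0.25 := by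
      calc (n : ℝ) * Real.exp (-4 * L) = Real.exp (Real.log n + -4 * L) := by
            rw [Real.exp_add, Real.exp_log (by linarith)]
        _ ≤ Real.exp (-4) := Real.exp_le_exp.2 (by linarith)
        _ ≤ 0.25 := by
          rw [Real.exp_neg, inv_le_comm₀ (Real.exp_pos _) (by norm_num)]
          have := Real.add_one_le_exp (4 : ℝ)
          norm_num at *
          linarith
    linarith
  have hlt : ∑ Y ∈ (univ : Finset (Fin n)).powerset, w Y * Φ Y
      < ∑ Y ∈ (univ : Finset (Fin n)).powerset, w Y * 1 := by
    have := wsum (n := n) p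
    simp only [mul_one]
    rw [this]
    linarith
  obtain ⟨Y, -, hY⟩ := Finset.exists_lt_of_sum_lt hlt
  have hY1 : Φ Y < 1 := lt_of_mul_lt_mul_left hY (hw0 Y)
  have hdbl : ∀ v, 0 ≤ ∑ A ∈ (B v).powerset.erase ∅,
        Real.exp (A.card : ℝ) * Real.exp ((-1) * ((Y ∩ F A).card : ℝ)) :=
    fun v => Finset.sum_nonneg fun A _ => by positivity
  refine ⟨Y, ?_, ?_⟩
  · by_contra h
    push Not at h
    have h0 : Real.exp (-M) * Real.exp (1 * ((Y ∩ univ).card : ℝ)) ≤ Φ Y :=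
      le_add_of_nonneg_right (Finset.sum_nonneg fun v _ => hdbl v)
    have : 1 ≤ Real.exp (-M) * Real.exp (1 * ((Y ∩ univ).card : ℝ)) := by
      rw [← Real.exp_add, Finset.inter_univ]
      exact Real.one_le_exp (by linarith)
    linarith
  · intro v A hAB hne
    by_contra h
    push Not at h
    have hA : A ∈ (B v).powerset.erase ∅ := by
      rw [Finset.mem_erase, Finset.mem_powerset]; exact ⟨hne.ne_empty, hAB⟩
    have h0 : Real.exp (A.card : ℝ) * Real.exp ((-1) * ((Y ∩ F A).card : ℝ)) ≤ Φ Y := by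
      calc _ ≤ ∑ A ∈ (B v).powerset.erase ∅,
            Real.exp (A.card : ℝ) * Real.exp ((-1) * ((Y ∩ F A).card : ℝ)) :=
            Finset.single_le_sum (f := fun A => Real.exp (A.card : ℝ) *
              Real.exp ((-1) * ((Y ∩ F A).card : ℝ))) (fun A _ => by positivity) hA
        _ ≤ ∑ v : Fin n, ∑ A ∈ (B v).powerset.erase ∅,
            Real.exp (A.card : ℝ) * Real.exp ((-1) * ((Y ∩ F A).card : ℝ)) :=
            Finset.single_le_sum (f := fun v => ∑ A ∈ (B v).powerset.erase ∅,
              Real.exp (A.card : ℝ) * Real.exp ((-1) * ((Y ∩ F A).card : ℝ)))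
              (fun v _ => hdbl v) (Finset.mem_univ v)
        _ ≤ Φ Y := le_add_of_nonneg_left (by positivity)
    have : 1 ≤ Real.exp (A.card : ℝ) * Real.exp ((-1) * ((Y ∩ F A).card : ℝ)) := by
      rw [← Real.exp_add]
      have : ((Y ∩ F A).card : ℝ) ≤ A.card := by exact_mod_cast h.le
      exact Real.one_le_exp (by linarith)
    linarith

lemma mem_vNhd {n k : ℕ} (G : KGraph n k) (A : Set (Fin n)) (r : ℕ) (y : Fin n)
    (h : y ∈ G.vNhd A r) : ∃ x ∈ A, G.dist x y ≤ (r : ℕ∞) := by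
  by_contra hc
  push Not at hc
  have h1 : ((r + 1 : ℕ) : ℕ∞) ≤ G.setDist A {y} := by
    unfold KGraph.setDist
    refine le_iInf₂ fun x hx => le_iInf₂ fun z hz => ?_
    rw [Set.mem_singleton_iff] at hz
    subst hz
    have := Order.add_one_le_of_lt (hc x hx)
    exact_mod_cast this
  have h2 : ((r + 1 : ℕ) : ℕ∞) ≤ (r : ℕ∞) := h1.trans h
  have h3 : r + 1 ≤ r := by exact_mod_cast h2
  omega

end CopAux

/-- vertex-strategy claim, case (a). -/
theorem exists_cop_set_vertex_strategy_a (n k : ℕ) (hn : 20 ≤ n) (hk : 2 ≤ k)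
    (ξ : ℝ) (hξ0 : 0 < ξ) (hξ1 : ξ ≤ 1)
    (G : KGraph n k) (hG : G.IsExpanding ξ) (j : ℕ) (hj : 2 ≤ j)
    (hd1 : (n : ℝ) ^ ((1 : ℝ) / (2 * (j : ℝ) - 1)) ≤ G.avgDeg)
    (hd2 : G.avgDeg ≤ ((n : ℝ) / k) ^ ((1 : ℝ) / (2 * (j : ℝ) - 2))) :
    ∃ Y : Finset (Fin n),
      (Y.card : ℝ) ≤ 20 * ξ⁻¹ ^ 2 * G.avgDeg ^ (j - 1) *
        ((⌈(n : ℝ) / G.avgDeg ^ (2 * j - 1) * Real.log n⌉ : ℤ) : ℝ) ∧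
      ∀ v : Fin n, ∃ f : G.vNhd {v} (j - 1) → (Y : Set (Fin n)),
        Function.Injective f ∧ ∀ x, G.dist x.1 (f x).1 ≤ (j : ℕ∞) := by
  classical
  obtain ⟨hdk, -, hA2, -⟩ := hG
  set d := G.avgDeg with hd
  have hk2 : (2 : ℝ) ≤ k := by exact_mod_cast hk
  have hd2' : 2 ≤ d := hk2.trans hdk
  have hd0 : 0 < d := by linarith
  have hn0 : (20 : ℝ) ≤ n := by exact_mod_cast hn
  have hnpos : (0 : ℝ) < n := by linarith
  have hlog : 0 < Real.log n := Real.log_pos (by linarith)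
  set q : ℝ := ((⌈(n : ℝ) / d ^ (2 * j - 1) * Real.log n⌉ : ℤ) : ℝ) with hq
  have hq1 : 1 ≤ q := by
    have : (1 : ℤ) ≤ ⌈(n : ℝ) / d ^ (2 * j - 1) * Real.log n⌉ :=
      Int.one_le_ceil_iff.2 (by positivity)
    rw [hq]; exact_mod_cast this
  have hqc : (n : ℝ) / d ^ (2 * j - 1) * Real.log n ≤ q := Int.le_ceil _
  set D := d ^ (j - 1) with hD
  have hξi : 1 ≤ ξ⁻¹ := (one_le_inv₀ hξ0).2 hξ1
  have hD1 : 1 ≤ D := one_le_pow₀ (by linarith)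
  set M := 20 * ξ⁻¹ ^ 2 * D * q with hM
  have hpow : d ^ (2 * j - 1) = D * d ^ j := by
    rw [hD, ← pow_add]; congr 1; omega
  have hM20 : 20 ≤ M := by
    have h1 : 1 ≤ ξ⁻¹ ^ 2 := one_le_pow₀ hξi
    have h2 : 1 ≤ ξ⁻¹ ^ 2 * D := one_le_mul_of_one_le_of_one_le h1 hD1
    have h3 : 1 ≤ ξ⁻¹ ^ 2 * D * q := one_le_mul_of_one_le_of_one_le h2 hq1
    have : M = 20 * (ξ⁻¹ ^ 2 * D * q) := by rw [hM]; ring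
    linarith
  rcases le_or_gt (n : ℝ) M with hMn | hMn
  · refine ⟨Finset.univ, by simpa using hMn, fun v => ⟨fun x => ⟨x.1, by simp⟩, ?_, ?_⟩⟩
    · intro x y hxy
      exact Subtype.ext (by simpa using hxy)
    · intro x
      simp [KGraph.dist]
  -- D is at least 1 + log n / 3
  have hDlog : 1 + Real.log n / 3 ≤ D := by
    have hj' : (2 : ℝ) ≤ j := by exact_mod_cast hj
    have h1 : Real.log n / (2 * j - 1) ≤ Real.log d := by
      have := Real.log_le_log (by positivity) hd1
      rw [Real.log_rpow hnpos] at this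
      calc _ = _ := by ring
        _ ≤ _ := this
    have h2 : Real.log n / 3 ≤ (j - 1) * Real.log d := by
      calc Real.log n / 3 ≤ (j - 1) * (Real.log n / (2 * j - 1)) := by
            rw [mul_div_assoc', div_le_div_iff₀ (by norm_num) (by linarith)]
            nlinarith
        _ ≤ _ := mul_le_mul_of_nonneg_left h1 (by linarith)
    have h3 : D = Real.exp ((j - 1) * Real.log d) := by
      have : ((j : ℝ) - 1) = ((j - 1 : ℕ) : ℝ) := by
        rw [Nat.cast_sub (by omega)]; simp
      rw [this, Real.exp_nat_mul, Real.exp_log hd0]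
    rw [h3]
    have := Real.add_one_le_exp ((j - 1) * Real.log d)
    linarith
  have hDL : D ≤ ξ⁻¹ * D := le_mul_of_one_le_left (by linarith) hξi
  set B : Fin n → Finset (Fin n) := fun v => (G.vNhd {v} (j - 1)).toFinite.toFinset with hBdef
  set F : Finset (Fin n) → Finset (Fin n) :=
    fun A => (G.vNhd (A : Set (Fin n)) j).toFinite.toFinset with hFdef
  have hBcard : ∀ v, ((B v).card : ℝ) ≤ ξ⁻¹ * D := by
    intro v
    have := (hA2 {v} (j - 1) (by omega)).2
    rw [Set.ncard_singleton] at this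
    rw [hBdef]
    simp only
    rw [← Set.ncard_eq_toFinset_card]
    simpa using this
  have hFcard : ∀ A : Finset (Fin n), ξ * min ((A.card : ℝ) * d ^ j) n ≤ ((F A).card : ℝ) := by
    intro A
    have := (hA2 (A : Set (Fin n)) j (by omega)).1
    rw [Set.ncard_coe_finset] at this
    rw [hFdef]
    simp only
    rw [← Set.ncard_eq_toFinset_card]
    exact this
  have hξξ : ξ⁻¹ * ξ = 1 := inv_mul_cancel₀ hξ0.ne'
  obtain ⟨Y, hYM, hY⟩ := CopAux.exists_good hn (M / (2 * n)) M (ξ⁻¹ * D)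
    (by rw [div_le_one (by positivity)]; linarith) hM20 (by field_simp) (hDlog.trans hDL) B hBcard F
    (by
      intro v A hAB hne
      have hp0 : 0 ≤ M / (2 * n) := by positivity
      have hF1 := mul_le_mul_of_nonneg_left (hFcard A) hp0
      rcases le_total ((A.card : ℝ) * d ^ j) n with h | h
      · left
        rw [min_eq_left h] at hF1
        refine le_trans ?_ hF1
        have e1 : M / (2 * n) * (ξ * (A.card * d ^ j)) =
            10 * A.card * (ξ⁻¹ * (q * (D * d ^ j) / n)) * (ξ⁻¹ * ξ) := by
          rw [hM]; field_simp; ring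
        rw [e1, hξξ, mul_one]
        have e2 : Real.log n ≤ q * (D * d ^ j) / n := by
          rw [hpow] at hqc
          rw [le_div_iff₀ hnpos]
          rw [div_mul_eq_mul_div, div_le_iff₀ (by positivity)] at hqc
          linarith
        have e3 : q * (D * d ^ j) / n ≤ ξ⁻¹ * (q * (D * d ^ j) / n) :=
          le_mul_of_one_le_left (by positivity) hξi
        exact mul_le_mul_of_nonneg_left (e2.trans e3) (by positivity)
      · right
        rw [min_eq_right h] at hF1
        refine le_trans ?_ hF1
        have e1 : M / (2 * n) * (ξ * n) = 10 * (ξ⁻¹ * D) * q * (ξ⁻¹ * ξ) := by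
          rw [hM]; field_simp; ring
        rw [e1, hξξ, mul_one]
        exact le_mul_of_one_le_right (by positivity) hq1)
  refine ⟨Y, hYM, fun v => ?_⟩
  have hall := (Finset.all_card_le_biUnion_card_iff_exists_injective
    (fun x : G.vNhd {v} (j - 1) => Y.filter (fun y => G.dist x.1 y ≤ (j : ℕ∞)))).1 (by
      intro s
      rcases s.eq_empty_or_nonempty with rfl | hs
      · simp
      have h1 := hY v (s.map (Function.Embedding.subtype _)) (by
        intro x hx
        rw [Finset.mem_map] at hx
        obtain ⟨a, -, rfl⟩ := hx
        rw [hBdef]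
        simp only [Set.Finite.mem_toFinset]
        exact a.2) (hs.map)
      rw [Finset.card_map] at h1
      refine h1.trans (Finset.card_le_card ?_)
      intro y hy
      rw [Finset.mem_inter, hFdef] at hy
      simp only [Set.Finite.mem_toFinset] at hy
      obtain ⟨x, hx, hxy⟩ := CopAux.mem_vNhd G _ _ _ hy.2
      rw [Finset.mem_coe, Finset.mem_map] at hx
      obtain ⟨a, ha, rfl⟩ := hx
      rw [Finset.mem_biUnion]
      exact ⟨a, ha, Finset.mem_filter.2 ⟨hy.1, hxy⟩⟩)
  obtain ⟨f, hf, hfm⟩ := hall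
  refine ⟨fun x => ⟨f x, Finset.mem_coe.2 (Finset.mem_filter.1 (hfm x)).1⟩, ?_, ?_⟩
  · intro x y hxy
    exact hf (by simpa using hxy)
  · intro x
    exact (Finset.mem_filter.1 (hfm x)).2
end

section
/- Let k = k(n) ≥ 2 and p = p(n) > 0 be sequences such that k = ω(log n), k ≤ 2^{-11}·n, and d̂ ≤ n, where d̂ = p·k·C(n−1,k−1). Then with high probability (probability tending to 1 as n → ∞) the random hypergraph G = G^k(n,p) satisfies: for every subset B ⊆ E(G) of edges and every ε = ε(n) ∈ (0, 1/2] such that (|B|·k/n)^ε ≤ 2^{-5}, the set V_B of vertices covered by B satisfies |V_B| ≥ (1 − ε)·|B|·k. -/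
open scoped BigOperators

section helpers
open Finset

lemma aux_sum_superset {α : Type*} [DecidableEq α] (S B : Finset α) (hB : B ⊆ S) (p : ℝ) :
    ∑ E ∈ S.powerset, (if B ⊆ E then p ^ E.card * (1 - p) ^ (S.card - E.card) else 0)
      = p ^ B.card := by
  have h := Finset.prod_add (fun _ : α => p) (fun i => if i ∈ B then 0 else 1 - p) S
  have h1 : ∏ i ∈ S, (p + if i ∈ B then 0 else 1 - p) = p ^ B.card := by
    have : ∀ i ∈ S, (p + if i ∈ B then 0 else 1 - p) = if i ∈ B then p else 1 := by
      intro i _; split_ifs <;> ring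
    rw [Finset.prod_congr rfl this, Finset.prod_ite, Finset.prod_const, Finset.prod_const_one,
      mul_one, Finset.filter_mem_eq_inter, Finset.inter_eq_right.mpr hB]
  rw [← h1, h]
  refine Finset.sum_congr rfl fun E hE => ?_
  rw [Finset.mem_powerset] at hE
  split_ifs with hBE
  · rw [Finset.prod_const, ← Finset.card_sdiff_of_subset hE]
    congr 1
    rw [← Finset.prod_const]
    refine Finset.prod_congr rfl fun i hi => ?_
    have : i ∉ B := fun hb => (Finset.mem_sdiff.mp hi).2 (hBE hb)
    simp [this]
  · obtain ⟨x, hx, hxE⟩ := Finset.not_subset.mp hBE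
    symm
    apply mul_eq_zero_of_right
    exact Finset.prod_eq_zero (Finset.mem_sdiff.mpr ⟨hB hx, hxE⟩) (by simp [hx])

open Classical in
lemma aux_gh (n k : ℕ) (p : ℝ) (hp : 0 ≤ p) (hp1 : p ≤ 1) (Q : KGraph n k → Prop)
    (bad : Finset (Finset (Fin n)) → Prop)
    (hbad : ∀ G : KGraph n k, ¬ Q G → ∃ B ⊆ G.edges, bad B) :
    1 - ∑ B ∈ (powersetCard k (univ : Finset (Fin n))).powerset.filter bad, p ^ B.card
      ≤ ghProb n k p Q ∧ ghProb n k p Q ≤ 1 := by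
  set S := powersetCard k (univ : Finset (Fin n)) with hS
  have hone := aux_sum_superset S ∅ (empty_subset _) p
  simp only [empty_subset, if_true, card_empty, pow_zero] at hone
  have hW : ∀ E : Finset (Finset (Fin n)), 0 ≤ p ^ E.card * (1 - p) ^ (S.card - E.card) :=
    fun E => mul_nonneg (pow_nonneg hp _) (pow_nonneg (by linarith) _)
  constructor
  · have h2 : ∑ B ∈ S.powerset.filter bad, p ^ B.card = ∑ E ∈ S.powerset,
        ∑ B ∈ S.powerset.filter bad,
          (if B ⊆ E then p ^ E.card * (1 - p) ^ (S.card - E.card) else 0) := by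
      rw [Finset.sum_comm]
      refine Finset.sum_congr rfl fun B hB => ?_
      rw [aux_sum_superset S B (mem_powerset.mp (mem_filter.mp hB).1) p]
    rw [h2, sub_le_iff_le_add]
    refine hone.symm.le.trans ?_
    rw [ghProb, ← Finset.sum_add_distrib]
    refine Finset.sum_le_sum fun E hE => ?_
    have hE' : E ⊆ S := mem_powerset.mp hE
    have hu : ∀ e ∈ E, e.card = k := fun e he => (mem_powersetCard.mp (hE' he)).2
    have hnn : ∀ B ∈ S.powerset.filter bad,
        0 ≤ (if B ⊆ E then p ^ E.card * (1 - p) ^ (S.card - E.card) else 0) := by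
      intro B _; split_ifs
      · exact hW E
      · exact le_rfl
    rw [dif_pos hu]
    by_cases hQ : Q ⟨E, hu⟩
    · rw [if_pos hQ]
      exact le_add_of_nonneg_right (Finset.sum_nonneg hnn)
    · rw [if_neg hQ, zero_add]
      obtain ⟨B, hBE, hb⟩ := hbad _ hQ
      have hBE' : B ⊆ E := hBE
      have := Finset.single_le_sum hnn
        (mem_filter.mpr ⟨mem_powerset.mpr (hBE'.trans hE'), hb⟩)
      rwa [if_pos hBE'] at this
  · rw [← hone, ghProb]
    refine Finset.sum_le_sum fun E hE => ?_
    split_ifs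
    · exact le_rfl
    · exact hW E
    · exact hW E

lemma aux_biUnion {α β : Type*} [DecidableEq α] [DecidableEq β] (T : Finset α)
    (t : α → Finset β) (f : β → ℝ) (hf : ∀ x, 0 ≤ f x) :
    ∑ x ∈ T.biUnion t, f x ≤ ∑ a ∈ T, ∑ x ∈ t a, f x := by
  induction T using Finset.induction_on with
  | empty => simp
  | insert a T ha ih =>
    rw [Finset.biUnion_insert, Finset.sum_insert ha]
    have h := Finset.sum_union_inter (s₁ := t a) (s₂ := T.biUnion t) (f := f)
    have h0 : 0 ≤ ∑ x ∈ t a ∩ T.biUnion t, f x := Finset.sum_nonneg fun x _ => hf x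
    linarith

lemma aux_le_choose (N j : ℕ) (hj : 1 ≤ j) (hjN : j < N) : N ≤ N.choose j := by
  induction N generalizing j with
  | zero => omega
  | succ N ih =>
    obtain ⟨i, rfl⟩ : ∃ i, j = i + 1 := ⟨j - 1, by omega⟩
    rcases Nat.lt_or_ge (i + 1) N with h | h
    · have h1 := ih (i + 1) hj h
      have h2 : 0 < N.choose i := Nat.choose_pos (by omega)
      rw [Nat.choose_succ_succ']
      omega
    · obtain rfl : N = i + 1 := by omega
      rw [Nat.choose_succ_self_right]

lemma aux_desc (m n k : ℕ) (hmn : m ≤ n) :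
    m.descFactorial k * n ^ k ≤ n.descFactorial k * m ^ k := by
  induction k with
  | zero => simp
  | succ i ih =>
    rw [Nat.descFactorial_succ, Nat.descFactorial_succ, pow_succ, pow_succ]
    have h : (m - i) * n ≤ (n - i) * m := by
      rw [Nat.sub_mul, Nat.sub_mul, Nat.mul_comm n m]
      exact Nat.sub_le_sub_left (Nat.mul_le_mul_left _ hmn) _
    calc _ = ((m - i) * n) * (m.descFactorial i * n ^ i) := by ring
      _ ≤ ((n - i) * m) * (n.descFactorial i * m ^ i) := Nat.mul_le_mul h ih
      _ = _ := by ring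

lemma aux_choose (m n k : ℕ) (hn : 0 < n) (hmn : m ≤ n) :
    (m.choose k : ℝ) ≤ n.choose k * ((m : ℝ) / n) ^ k := by
  have h := aux_desc m n k hmn
  rw [Nat.descFactorial_eq_factorial_mul_choose, Nat.descFactorial_eq_factorial_mul_choose,
    mul_assoc, mul_assoc] at h
  have h' : m.choose k * n ^ k ≤ n.choose k * m ^ k :=
    Nat.le_of_mul_le_mul_left h (Nat.factorial_pos k)
  have hn' : (0 : ℝ) < n := by exact_mod_cast hn
  rw [div_pow, ← mul_div_assoc, le_div_iff₀ (by positivity)]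
  exact_mod_cast h'

lemma aux_choose4 (m n : ℕ) (hn : 0 < n) :
    (n.choose m : ℝ) * ((m : ℝ) / n) ^ m ≤ 4 ^ m := by
  have hn' : (0 : ℝ) < n := by exact_mod_cast hn
  have h1 : (n.choose m : ℝ) ≤ (n : ℝ) ^ m / (m.factorial : ℝ) := Nat.choose_le_pow_div m n
  have h2 : (m : ℝ) ^ m / (m.factorial : ℝ) ≤ Real.exp m :=
    Real.pow_div_factorial_le_exp (m : ℝ) (by positivity) m
  have h3 : Real.exp m ≤ 4 ^ m := by
    rw [← Real.exp_one_pow]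
    exact pow_le_pow_left₀ (Real.exp_pos _).le (by linarith [Real.exp_one_lt_d9]) _
  calc _ ≤ (n : ℝ) ^ m / (m.factorial : ℝ) * ((m : ℝ) / n) ^ m := by gcongr
    _ = (m : ℝ) ^ m / (m.factorial : ℝ) := by rw [div_pow]; field_simp
    _ ≤ _ := h2.trans h3

/-- the badness condition on (number of edges, number of covered vertices) -/
def auxP (n k b m : ℕ) : Prop :=
  1 ≤ b ∧ b * k ≤ n ∧ m ≤ n ∧ m ≤ b * k ∧
    ((b * k : ℝ) / n) ^ (b * k - m) ≤ ((1 : ℝ) / 32) ^ (b * k)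

lemma aux_term (n k b m : ℕ) (p : ℝ) (hp : 0 ≤ p) (hn : 0 < n)
    (hpC : p * n.choose k ≤ (n : ℝ) ^ 2) (hk : (n : ℝ) ^ 2 ≤ 2 ^ k) (hP : auxP n k b m) :
    (n.choose m : ℝ) * (p * m.choose k) ^ b ≤ 1 / (n : ℝ) ^ 4 := by
  obtain ⟨hb, hbk, hmn, hmb, hx⟩ := hP
  have hn' : (0 : ℝ) < n := by exact_mod_cast hn
  have hn1 : (1 : ℝ) ≤ n := by exact_mod_cast hn
  have e1 : p * m.choose k ≤ (n : ℝ) ^ 2 * ((m : ℝ) / n) ^ k := by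
    calc _ ≤ p * (n.choose k * ((m : ℝ) / n) ^ k) := by
          gcongr; exact aux_choose m n k hn hmn
      _ = (p * n.choose k) * ((m : ℝ) / n) ^ k := by ring
      _ ≤ _ := by gcongr
  have e2 : ((m : ℝ) / n) ^ (k * b) = ((m : ℝ) / n) ^ m * ((m : ℝ) / n) ^ (b * k - m) := by
    rw [← pow_add]; congr 1; rw [Nat.mul_comm k b]; omega
  have e3 : ((m : ℝ) / n) ^ (b * k - m) ≤ ((1 : ℝ) / 32) ^ (b * k) := by
    refine le_trans ?_ hx
    have : (m : ℝ) ≤ b * k := by exact_mod_cast hmb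
    gcongr
  have e4 : (4 : ℝ) ^ m ≤ 4 ^ (b * k) := pow_le_pow_right₀ (by norm_num) hmb
  calc (n.choose m : ℝ) * (p * m.choose k) ^ b
      ≤ n.choose m * ((n : ℝ) ^ 2 * ((m : ℝ) / n) ^ k) ^ b := by gcongr
    _ = ((n : ℝ) ^ 2) ^ b * ((n.choose m * ((m : ℝ) / n) ^ m) * ((m : ℝ) / n) ^ (b * k - m)) := by
        rw [mul_pow, ← pow_mul ((m : ℝ) / n), e2]; ring
    _ ≤ (2 ^ k) ^ b * (4 ^ (b * k) * ((1 : ℝ) / 32) ^ (b * k)) := by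
        gcongr
        exact (aux_choose4 m n hn).trans e4
    _ = ((1 / (2 ^ k) ^ 2) : ℝ) ^ b := by
        rw [← mul_pow, mul_comm b k, pow_mul _ k b, ← mul_pow, ← mul_pow]
        congr 1
        rw [← pow_mul, mul_comm k 2, pow_mul 2 2 k, ← one_div_pow]
        norm_num
    _ ≤ (1 / (n : ℝ) ^ 4) ^ b := by
        have : (n : ℝ) ^ 4 ≤ (2 ^ k) ^ 2 := by
          calc (n : ℝ) ^ 4 = ((n : ℝ) ^ 2) ^ 2 := by ring
            _ ≤ _ := by gcongr
        gcongr
    _ ≤ (1 / (n : ℝ) ^ 4) ^ 1 := by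
        apply pow_le_pow_of_le_one (by positivity) _ hb
        rw [div_le_one (by positivity)]
        exact one_le_pow₀ hn1
    _ = _ := pow_one _

open Classical in
lemma aux_count (n k : ℕ) (p : ℝ) (hp : 0 ≤ p) (hn : 0 < n) (hk0 : 1 ≤ k)
    (hpC : p * n.choose k ≤ (n : ℝ) ^ 2) (hk : (n : ℝ) ^ 2 ≤ 2 ^ k) :
    ∑ B ∈ (powersetCard k (univ : Finset (Fin n))).powerset.filter
      (fun B => auxP n k B.card (B.biUnion id).card), p ^ B.card ≤ 2 / (n : ℝ) ^ 2 := by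
  have hn' : (0 : ℝ) < n := by exact_mod_cast hn
  have hn1 : (1 : ℝ) ≤ n := by exact_mod_cast hn
  set T := (Icc 1 n ×ˢ (univ : Finset (Fin n)).powerset).filter
    (fun q => auxP n k q.1 q.2.card) with hT
  have hsub : (powersetCard k (univ : Finset (Fin n))).powerset.filter
      (fun B => auxP n k B.card (B.biUnion id).card) ⊆
      T.biUnion (fun q => powersetCard q.1 (powersetCard k q.2)) := by
    intro B hB
    obtain ⟨hBS, hP⟩ := mem_filter.mp hB
    rw [mem_powerset] at hBS
    rw [mem_biUnion]
    refine ⟨(B.card, B.biUnion id), ?_, ?_⟩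
    · rw [hT, mem_filter, mem_product, mem_Icc]
      refine ⟨⟨⟨hP.1, ?_⟩, mem_powerset.mpr (subset_univ _)⟩, hP⟩
      exact (Nat.le_mul_of_pos_right _ hk0).trans hP.2.1
    · rw [mem_powersetCard]
      refine ⟨fun e he => mem_powersetCard.mpr ⟨?_, (mem_powersetCard.mp (hBS he)).2⟩, rfl⟩
      exact Finset.subset_biUnion_of_mem id he
  calc _ ≤ ∑ B ∈ T.biUnion (fun q => powersetCard q.1 (powersetCard k q.2)), p ^ B.card :=
        Finset.sum_le_sum_of_subset_of_nonneg hsub (fun _ _ _ => pow_nonneg hp _)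
    _ ≤ ∑ q ∈ T, ∑ B ∈ powersetCard q.1 (powersetCard k q.2), p ^ B.card := by
        exact aux_biUnion _ _ _ (fun _ => pow_nonneg hp _)
    _ ≤ ∑ q ∈ T, (p * q.2.card.choose k) ^ q.1 := by
        refine Finset.sum_le_sum fun q _ => ?_
        rw [Finset.sum_congr rfl (fun B hB => by rw [(mem_powersetCard.mp hB).2]),
          Finset.sum_const, card_powersetCard, card_powersetCard, nsmul_eq_mul, mul_pow, mul_comm]
        gcongr
        exact_mod_cast Nat.choose_le_pow _ _
    _ = ∑ b ∈ Icc 1 n, ∑ V ∈ (univ : Finset (Fin n)).powerset,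
          (fun m => if auxP n k b m then (p * m.choose k) ^ b else 0) V.card := by
        rw [hT, Finset.sum_filter, Finset.sum_product]
    _ = ∑ b ∈ Icc 1 n, ∑ m ∈ range (n + 1),
          n.choose m • (if auxP n k b m then (p * m.choose k) ^ b else 0) := by
        refine Finset.sum_congr rfl fun b _ => ?_
        have := Finset.sum_powerset_apply_card (x := (univ : Finset (Fin n)))
          (fun m => if auxP n k b m then (p * m.choose k) ^ b else 0)
        rw [card_univ, Fintype.card_fin] at this
        exact this
    _ ≤ ∑ b ∈ Icc 1 n, ∑ m ∈ range (n + 1), 1 / (n : ℝ) ^ 4 := by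
        refine Finset.sum_le_sum fun b _ => Finset.sum_le_sum fun m _ => ?_
        split_ifs with hP
        · rw [nsmul_eq_mul]
          exact aux_term n k b m p hp hn hpC hk hP
        · rw [smul_zero]; positivity
    _ = n * ((n + 1) * (1 / (n : ℝ) ^ 4)) := by simp
    _ ≤ n * ((2 * n) * (1 / (n : ℝ) ^ 4)) := by gcongr; linarith
    _ = _ := by field_simp

lemma aux_bad (n k : ℕ) (hn : 0 < n) (hk0 : 1 ≤ k) (G : KGraph n k)
    (B : Finset (Finset (Fin n))) (hB : B ⊆ G.edges) (ε : ℝ) (h0 : 0 < ε)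
    (hx : ((B.card * k : ℝ) / n) ^ ε ≤ (2 : ℝ) ^ (-5 : ℤ))
    (hlt : ((B.biUnion id).card : ℝ) < (1 - ε) * B.card * k) :
    auxP n k B.card (B.biUnion id).card := by
  have hn' : (0 : ℝ) < n := by exact_mod_cast hn
  have hk' : (0 : ℝ) < k := by exact_mod_cast hk0
  set b := B.card with hb
  set m := (B.biUnion id).card with hm
  have hx' : ((b * k : ℝ) / n) ^ ε ≤ 1 / 32 := hx.trans (by norm_num)
  have hb1 : 1 ≤ b := by
    rcases Nat.eq_zero_or_pos b with h | h
    · rw [h] at hlt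
      simp at hlt
      have : (0 : ℝ) ≤ m := Nat.cast_nonneg _
      linarith
    · exact h
  have hb' : (0 : ℝ) < b := by exact_mod_cast hb1
  have hxpos : 0 < (b * k : ℝ) / n := by positivity
  have hx1 : (b * k : ℝ) / n ≤ 1 := by
    by_contra h
    push Not at h
    have := Real.one_lt_rpow h h0
    linarith
  have hmb : m ≤ b * k := by
    rw [hm, hb]
    exact Finset.card_biUnion_le_card_mul _ _ _ (fun e he => (G.uniform e (hB he)).le)
  refine ⟨hb1, ?_, ?_, hmb, ?_⟩
  · rw [div_le_one hn'] at hx1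
    exact_mod_cast hx1
  · simpa using Finset.card_le_univ (B.biUnion id)
  · rw [← Real.rpow_natCast, ← Real.rpow_natCast (1 / 32)]
    calc _ ≤ ((b * k : ℝ) / n) ^ (ε * ((b * k : ℕ) : ℝ)) := by
          apply Real.rpow_le_rpow_of_exponent_ge hxpos hx1
          rw [Nat.cast_sub hmb]
          push_cast
          linarith
      _ = (((b * k : ℝ) / n) ^ ε) ^ ((b * k : ℕ) : ℝ) := Real.rpow_mul hxpos.le _ _
      _ ≤ _ := Real.rpow_le_rpow (by positivity) hx' (by positivity)

end helpers

/-- whp edge sets of `G^k(n,p)` have small overlap (relative version). -/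
theorem whp_Gknp_edge_set_overlap_small (k : ℕ → ℕ) (p : ℕ → ℝ)
    (hk2 : ∀ n, 2 ≤ k n) (hp : ∀ n, 0 < p n)
    (hk : Filter.Tendsto (fun n => (k n : ℝ) / Real.log n) Filter.atTop Filter.atTop)
    (hkn : ∀ᶠ n in Filter.atTop, (k n : ℝ) ≤ (2 : ℝ) ^ (-11 : ℤ) * n)
    (hdn : ∀ᶠ n in Filter.atTop,
      p n * k n * (((n - 1).choose (k n - 1) : ℕ) : ℝ) ≤ (n : ℝ)) :
    Filter.Tendsto
      (fun n => ghProb n (k n) (p n) (fun G =>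
        ∀ B : Finset (Finset (Fin n)), B ⊆ G.edges →
          ∀ ε : ℝ, 0 < ε → ε ≤ 1 / 2 →
            ((B.card * k n : ℝ) / n) ^ ε ≤ (2 : ℝ) ^ (-5 : ℤ) →
            (1 - ε) * B.card * k n ≤ ((B.biUnion id).card : ℝ)))
      Filter.atTop (nhds 1) := by
  classical
  have hmain : ∀ᶠ n : ℕ in Filter.atTop, 1 - 2 / (n : ℝ) ^ 2 ≤ ghProb n (k n) (p n) (fun G =>
        ∀ B : Finset (Finset (Fin n)), B ⊆ G.edges →
          ∀ ε : ℝ, 0 < ε → ε ≤ 1 / 2 →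
            ((B.card * k n : ℝ) / n) ^ ε ≤ (2 : ℝ) ^ (-5 : ℤ) →
            (1 - ε) * B.card * k n ≤ ((B.biUnion id).card : ℝ)) ∧
      ghProb n (k n) (p n) (fun G =>
        ∀ B : Finset (Finset (Fin n)), B ⊆ G.edges →
          ∀ ε : ℝ, 0 < ε → ε ≤ 1 / 2 →
            ((B.card * k n : ℝ) / n) ^ ε ≤ (2 : ℝ) ^ (-5 : ℤ) →
            (1 - ε) * B.card * k n ≤ ((B.biUnion id).card : ℝ)) ≤ 1 := by
    filter_upwards [hkn, hdn, hk.eventually_ge_atTop 4, Filter.eventually_ge_atTop 3]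
      with n h1 h2 h3 h4
    have hn : 0 < n := by omega
    have hn' : (0 : ℝ) < n := by exact_mod_cast hn
    have hn3 : (3 : ℝ) ≤ n := by exact_mod_cast h4
    have hk2n : (2 : ℝ) ≤ k n := by exact_mod_cast hk2 n
    have hkle : k n + 1 ≤ n := by
      have : (k n : ℝ) < n := by
        have : (2 : ℝ) ^ (-11 : ℤ) = 1 / 2048 := by norm_num
        rw [this] at h1
        linarith
      exact_mod_cast this
    have hpp := hp n
    have hlog : 0 < Real.log n := Real.log_pos (by linarith)
    have hpow : (n : ℝ) ^ 2 ≤ 2 ^ (k n) := by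
      rw [le_div_iff₀ hlog] at h3
      rw [← Real.log_le_log_iff (by positivity) (by positivity), Real.log_pow, Real.log_pow]
      have := Real.log_two_gt_d9
      push_cast
      nlinarith
    have hch : ((n : ℝ) - 1) ≤ ((n - 1).choose (k n - 1) : ℕ) := by
      have h : n - 1 ≤ (n - 1).choose (k n - 1) := by
        have := hk2 n
        exact aux_le_choose _ _ (by omega) (by omega)
      have h' : ((n - 1 : ℕ) : ℝ) ≤ ((n - 1).choose (k n - 1) : ℕ) := by exact_mod_cast h
      rwa [Nat.cast_sub hn, Nat.cast_one] at h'
    have hp1 : p n ≤ 1 := by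
      by_contra hcon
      push Not at hcon
      have : 1 * 2 * ((n : ℝ) - 1) ≤ p n * k n * (((n - 1).choose (k n - 1) : ℕ) : ℝ) := by
        have : (0 : ℝ) ≤ (n : ℝ) - 1 := by linarith
        gcongr
      linarith
    have hpC : p n * n.choose (k n) ≤ (n : ℝ) ^ 2 := by
      have hid : n * (n - 1).choose (k n - 1) = n.choose (k n) * k n := by
        have := Nat.add_one_mul_choose_eq (n - 1) (k n - 1)
        have hkk := hk2 n
        rwa [Nat.sub_add_cancel hn, Nat.sub_add_cancel (by omega)] at this
      have hid' : (n : ℝ) * ((n - 1).choose (k n - 1) : ℕ) = n.choose (k n) * k n := by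
        exact_mod_cast hid
      calc p n * n.choose (k n) = p n * n.choose (k n) * 1 * 1 := by ring
        _ ≤ p n * n.choose (k n) * k n * k n := by gcongr <;> linarith
        _ = p n * k n * (n.choose (k n) * k n) := by ring
        _ = n * (p n * k n * ((n - 1).choose (k n - 1) : ℕ)) := by rw [← hid']; ring
        _ ≤ n * n := by gcongr
        _ = _ := by ring
    have hk1 : 1 ≤ k n := by have := hk2 n; omega
    have hc := aux_count n (k n) (p n) hpp.le hn hk1 hpC hpow
    have hg := aux_gh n (k n) (p n) hpp.le hp1 (fun G =>
        ∀ B : Finset (Finset (Fin n)), B ⊆ G.edges →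
          ∀ ε : ℝ, 0 < ε → ε ≤ 1 / 2 →
            ((B.card * k n : ℝ) / n) ^ ε ≤ (2 : ℝ) ^ (-5 : ℤ) →
            (1 - ε) * B.card * k n ≤ ((B.biUnion id).card : ℝ))
      (fun B => auxP n (k n) B.card (B.biUnion id).card) (by
        intro G hG
        push Not at hG
        obtain ⟨B, hB, ε, h0, _, hx, hlt⟩ := hG
        exact ⟨B, hB, aux_bad n (k n) hn hk1 G B hB ε h0 hx hlt⟩)
    exact ⟨le_trans (by linarith) hg.1, hg.2⟩
  have hlim : Filter.Tendsto (fun n : ℕ => 1 - 2 / (n : ℝ) ^ 2) Filter.atTop (nhds 1) := by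
    have h : Filter.Tendsto (fun n : ℕ => 2 / (n : ℝ) ^ 2) Filter.atTop (nhds 0) :=
      Filter.Tendsto.const_div_atTop
        ((Filter.tendsto_pow_atTop two_ne_zero).comp tendsto_natCast_atTop_atTop) 2
    simpa using h.const_sub 1
  exact tendsto_of_tendsto_of_tendsto_of_le_of_le' hlim tendsto_const_nhds
    (hmain.mono fun _ h => h.1) (hmain.mono fun _ h => h.2)
end

section
/- Let k = k(n) ≥ 2 and p = p(n) > 0 be sequences such that k = ω(log n), k ≤ 2^{-11}·n, and d̂ ≤ n, where d̂ = p·k·C(n−1,k−1). Then with high probability (probability tending to 1 as n → ∞) the random hypergraph G = G^k(n,p) satisfies: for every subset B ⊆ E(G) of edges, the set V_B of vertices covered by B satisfies |V_B| ≥ 2^{-12}·min(|B|·k, n). -/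
open scoped BigOperators

/-- Weight of an edge set. -/
noncomputable def ghW {α : Type*} (U : Finset α) (p : ℝ) (E : Finset α) : ℝ :=
  p ^ E.card * (1 - p) ^ (U.card - E.card)

theorem ghW_nonneg {α : Type*} (U : Finset α) {p : ℝ} (h0 : 0 ≤ p) (h1 : p ≤ 1) (E : Finset α) :
    0 ≤ ghW U p E := by
  unfold ghW
  have : 0 ≤ 1 - p := by linarith
  positivity

theorem ghW_sum {α : Type*} (U : Finset α) (p : ℝ) : ∑ E ∈ U.powerset, ghW U p E = 1 := by
  unfold ghW
  rw [Finset.sum_pow_mul_eq_add_pow]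
  simp

theorem ghW_sum_superset {α : Type*} [DecidableEq α] (U B : Finset α) (hB : B ⊆ U) (p : ℝ) :
    ∑ E ∈ U.powerset with B ⊆ E, ghW U p E = p ^ B.card := by
  have h : ∑ E ∈ U.powerset with B ⊆ E, ghW U p E
      = ∑ F ∈ (U \ B).powerset, p ^ B.card * ghW (U \ B) p F := by
    refine Finset.sum_bij' (fun E _ => E \ B) (fun F _ => F ∪ B) ?_ ?_ ?_ ?_ ?_
    · intro E hE
      simp only [Finset.mem_filter, Finset.mem_powerset] at hE ⊢
      exact Finset.sdiff_subset_sdiff hE.1 le_rfl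
    · intro F hF
      simp only [Finset.mem_filter, Finset.mem_powerset] at hF ⊢
      exact ⟨Finset.union_subset (hF.trans Finset.sdiff_subset) hB, Finset.subset_union_right⟩
    · intro E hE
      simp only [Finset.mem_filter, Finset.mem_powerset] at hE
      exact Finset.sdiff_union_of_subset hE.2
    · intro F hF
      simp only [Finset.mem_powerset] at hF
      have : Disjoint F B := Finset.disjoint_of_subset_left hF Finset.sdiff_disjoint
      rw [Finset.union_sdiff_right]
      exact Finset.sdiff_eq_self_of_disjoint this
    · intro E hE
      simp only [Finset.mem_filter, Finset.mem_powerset] at hE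
      unfold ghW
      have h1 := Finset.card_sdiff_add_card_eq_card hE.2
      have h2 := Finset.card_sdiff_add_card_eq_card hB
      have h3 : U.card - E.card = (U \ B).card - (E \ B).card := by omega
      rw [h3, ← h1, pow_add]
      ring
  rw [h, ← Finset.mul_sum, ghW_sum, mul_one]

theorem choose_mul_pow_le (s n k : ℕ) (h : s ≤ n) :
    s.choose k * n ^ k ≤ s ^ k * n.choose k := by
  have h1 : s.descFactorial k * n ^ k ≤ s ^ k * n.descFactorial k := by
    induction k with
    | zero => simp
    | succ k ih =>
      rw [Nat.descFactorial_succ, Nat.descFactorial_succ, pow_succ, pow_succ]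
      have h2 : (s - k) * n ≤ s * (n - k) := by
        rw [Nat.sub_mul, Nat.mul_sub]
        have := Nat.mul_le_mul_right k h
        have h3 : k * s ≤ k * n := Nat.mul_le_mul_left k h
        have h4 : s * k = k * s := mul_comm _ _
        rw [h4]
        exact Nat.sub_le_sub_left (by omega) _
      calc (s - k) * s.descFactorial k * (n ^ k * n)
          = ((s - k) * n) * (s.descFactorial k * n ^ k) := by ring
        _ ≤ (s * (n - k)) * (s ^ k * n.descFactorial k) := Nat.mul_le_mul h2 ih
        _ = _ := by ring
  rw [Nat.descFactorial_eq_factorial_mul_choose, Nat.descFactorial_eq_factorial_mul_choose] at h1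
  have := Nat.factorial_pos k
  refine Nat.le_of_mul_le_mul_left ?_ this
  calc _ = k.factorial * s.choose k * n ^ k := by ring
    _ ≤ _ := h1
    _ = _ := by ring

theorem choose_le_exp (n s : ℕ) (hs : 0 < s) :
    (n.choose s : ℝ) ≤ (Real.exp 1 * n / s) ^ s := by
  have h1 : (n.choose s : ℝ) ≤ (n : ℝ) ^ s / s.factorial := Nat.choose_le_pow_div s n
  have h2 : (s : ℝ) ^ s / s.factorial ≤ Real.exp s :=
    Real.pow_div_factorial_le_exp (s : ℝ) (by positivity) s
  have hs' : (0 : ℝ) < s := by exact_mod_cast hs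
  have h3 : Real.exp (s : ℝ) = Real.exp 1 ^ s := by rw [← Real.exp_nat_mul, mul_one]
  rw [h3] at h2
  refine h1.trans ?_
  rw [div_pow, mul_pow, le_div_iff₀ (by positivity)]
  calc (n : ℝ) ^ s / s.factorial * (s : ℝ) ^ s = ((s : ℝ) ^ s / s.factorial) * (n : ℝ) ^ s := by ring
    _ ≤ _ := by gcongr

theorem term_bound (n k s b : ℕ) (p : ℝ) (hp : 0 ≤ p) (hk : 2 ≤ k) (hb : 1 ≤ b)
    (hn : 1 ≤ n) (hs : 2048 * s ≤ n) (hsb : 4096 * s ≤ b * k)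
    (hm : p * n.choose k ≤ (n : ℝ) ^ 2) (hkn : (n : ℝ) ^ 4 ≤ 2 ^ k) :
    (n.choose s : ℝ) * ((s.choose k : ℝ) * p) ^ b ≤ 1 / (n : ℝ) ^ 2 := by
  have hn' : (1 : ℝ) ≤ n := by exact_mod_cast hn
  rcases Nat.eq_zero_or_pos s with h0 | hs0
  · subst h0
    rw [Nat.choose_eq_zero_of_lt (by omega : 0 < k)]
    simp [Nat.ne_of_gt (by omega : 0 < b)]
  have hs' : (0 : ℝ) < s := by exact_mod_cast hs0
  have hn0 : (0 : ℝ) < n := by linarith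
  set x : ℝ := s / n with hx
  have hx0 : 0 < x := by positivity
  have hx4 : x ≤ 1 / 4 := by
    rw [hx, div_le_iff₀ hn0]
    have : (2048 : ℝ) * s ≤ n := by exact_mod_cast hs
    linarith
  have h1 : (n.choose s : ℝ) ≤ ((x ^ 2)⁻¹) ^ s := by
    refine (choose_le_exp n s hs0).trans ?_
    refine pow_le_pow_left₀ (by positivity) ?_ _
    have : Real.exp 1 * n / s = Real.exp 1 * x / x ^ 2 := by
      rw [hx]; field_simp
    rw [this, inv_eq_one_div]
    gcongr
    have := Real.exp_one_lt_d9
    nlinarith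
  have h2 : (s.choose k : ℝ) * p ≤ x ^ k * (n : ℝ) ^ 2 := by
    have h := choose_mul_pow_le s n k (by omega)
    have h' : (s.choose k : ℝ) * (n : ℝ) ^ k ≤ (s : ℝ) ^ k * n.choose k := by exact_mod_cast h
    have h3 : (s.choose k : ℝ) ≤ x ^ k * n.choose k := by
      rw [hx, div_pow, div_mul_eq_mul_div, le_div_iff₀ (by positivity)]
      exact h'
    calc (s.choose k : ℝ) * p ≤ x ^ k * n.choose k * p := by gcongr
      _ = x ^ k * (p * n.choose k) := by ring
      _ ≤ _ := by gcongr
  have h4 : ((x ^ 2)⁻¹) ^ s * (x ^ k) ^ b ≤ (1 / 2) ^ (k * b) := by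
    obtain ⟨r, hr⟩ : ∃ r, k * b = 2 * s + r := ⟨k * b - 2 * s, by rw [mul_comm b k] at hsb; omega⟩
    have hr2 : k * b ≤ 2 * r := by rw [mul_comm b k] at hsb; omega
    rw [← pow_mul, hr, pow_add, pow_mul, ← mul_assoc, ← mul_pow, inv_mul_cancel₀ (by positivity),
      one_pow, one_mul, ← hr]
    calc x ^ r ≤ (1 / 4) ^ r := by gcongr
      _ = (1 / 2) ^ (2 * r) := by rw [pow_mul]; norm_num
      _ ≤ _ := pow_le_pow_of_le_one (by norm_num) (by norm_num) hr2
  calc (n.choose s : ℝ) * ((s.choose k : ℝ) * p) ^ b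
      ≤ ((x ^ 2)⁻¹) ^ s * (x ^ k * (n : ℝ) ^ 2) ^ b := by gcongr
    _ = ((x ^ 2)⁻¹) ^ s * (x ^ k) ^ b * ((n : ℝ) ^ 2) ^ b := by rw [mul_pow]; ring
    _ ≤ (1 / 2) ^ (k * b) * ((n : ℝ) ^ 2) ^ b := by gcongr
    _ = ((n : ℝ) ^ 2 / 2 ^ k) ^ b := by rw [pow_mul, ← mul_pow]; congr 1; rw [div_pow]; ring
    _ ≤ (1 / (n : ℝ) ^ 2) ^ b := by
        gcongr ?_ ^ b
        rw [div_le_div_iff₀ (by positivity) (by positivity)]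
        calc _ = (n : ℝ) ^ 4 := by ring
          _ ≤ _ := by linarith
    _ ≤ (1 / (n : ℝ) ^ 2) ^ 1 := by
        refine pow_le_pow_of_le_one (by positivity) ?_ hb
        rw [div_le_one (by positivity)]
        exact one_le_pow₀ hn'
    _ = _ := pow_one _

/-- The good property. -/
def goodE (n k : ℕ) (E : Finset (Finset (Fin n))) : Prop :=
  ∀ B : Finset (Finset (Fin n)), B ⊆ E →
    (2 : ℝ) ^ (-12 : ℤ) * min ((B.card : ℝ) * k) (n : ℝ) ≤ ((B.biUnion id).card : ℝ)

theorem bad_witness (n k : ℕ) (hk : 2 ≤ k) (hkn : k ≤ n) (E : Finset (Finset (Fin n)))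
    (hE : ∀ e ∈ E, e.card = k) (hbad : ¬ goodE n k E) :
    ∃ b ∈ Finset.Icc 1 (n / k + 1),
      ∃ S ∈ Finset.powersetCard (b * k / 4096) (Finset.univ : Finset (Fin n)),
      ∃ B ∈ Finset.powersetCard b (Finset.powersetCard k S), B ⊆ E := by
  unfold goodE at hbad
  push Not at hbad
  obtain ⟨B, hBE, hB⟩ := hbad
  have hz : (2 : ℝ) ^ (-12 : ℤ) = 1 / 4096 := by norm_num
  rw [hz] at hB
  have hmin1 : min ((B.card : ℝ) * k) (n : ℝ) ≤ (B.card : ℝ) * k := min_le_left _ _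
  have hmin2 : min ((B.card : ℝ) * k) (n : ℝ) ≤ n := min_le_right _ _
  have hB1 : 4096 * (B.biUnion id).card < B.card * k := by
    have : 4096 * ((B.biUnion id).card : ℝ) < (B.card : ℝ) * k := by linarith
    exact_mod_cast this
  have hB2 : 4096 * (B.biUnion id).card < n := by
    have : 4096 * ((B.biUnion id).card : ℝ) < n := by linarith
    exact_mod_cast this
  have hdm := Nat.div_add_mod n k
  have hml := Nat.mod_lt n (by omega : 0 < k)
  -- reduce
  obtain ⟨B', hB'B, hb1, hb2, hb3⟩ : ∃ B' ⊆ B, 1 ≤ B'.card ∧ B'.card ≤ n / k + 1 ∧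
      4096 * (B'.biUnion id).card < B'.card * k := by
    by_cases hc : B.card ≤ n / k + 1
    · refine ⟨B, le_rfl, ?_, hc, hB1⟩
      rcases Nat.eq_zero_or_pos B.card with h | h
      · rw [h, zero_mul] at hB1; exact absurd hB1 (Nat.not_lt_zero _)
      · exact h
    · obtain ⟨B', h1, h2⟩ := Finset.exists_subset_card_eq (show n / k + 1 ≤ B.card by omega)
      refine ⟨B', h1, by rw [h2]; exact Nat.le_add_left _ _, h2.le, ?_⟩
      have h3 : (B'.biUnion id).card ≤ (B.biUnion id).card :=
        Finset.card_le_card (Finset.biUnion_subset_biUnion_of_subset_left _ h1)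
      have h4 : (n / k + 1) * k = k * (n / k) + k := by ring
      rw [h2, h4]
      omega
  refine ⟨B'.card, Finset.mem_Icc.2 ⟨hb1, hb2⟩, ?_⟩
  have h5 : B'.card * k ≤ n + k := by
    calc B'.card * k ≤ (n / k + 1) * k := Nat.mul_le_mul_right _ hb2
      _ = k * (n / k) + k := by ring
      _ ≤ _ := by omega
  obtain ⟨S, hS1, hS2⟩ := Finset.exists_superset_card_eq (s := B'.biUnion id)
    (n := B'.card * k / 4096) (by omega) (by rw [Fintype.card_fin]; omega)
  refine ⟨S, Finset.mem_powersetCard.2 ⟨Finset.subset_univ _, hS2⟩, B', ?_, hB'B.trans hBE⟩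
  refine Finset.mem_powersetCard.2 ⟨fun e he => Finset.mem_powersetCard.2 ⟨?_, ?_⟩, rfl⟩
  · exact (Finset.subset_biUnion_of_mem id he).trans hS1
  · exact hE e (hBE (hB'B he))

open Classical in
theorem bad_sum_le (n k : ℕ) (p : ℝ) (h0 : 0 ≤ p) (h1 : p ≤ 1) (hk : 2 ≤ k) (hkn : k ≤ n) :
    ∑ E ∈ (Finset.powersetCard k (Finset.univ : Finset (Fin n))).powerset with ¬ goodE n k E,
      ghW (Finset.powersetCard k (Finset.univ : Finset (Fin n))) p E
    ≤ ∑ b ∈ Finset.Icc 1 (n / k + 1), (n.choose (b * k / 4096) : ℝ) *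
        (((b * k / 4096).choose k : ℝ) * p) ^ b := by
  set U := Finset.powersetCard k (Finset.univ : Finset (Fin n)) with hU
  calc ∑ E ∈ U.powerset with ¬ goodE n k E, ghW U p E
      ≤ ∑ E ∈ U.powerset, ∑ b ∈ Finset.Icc 1 (n / k + 1),
          ∑ S ∈ Finset.powersetCard (b * k / 4096) (Finset.univ : Finset (Fin n)),
          ∑ B ∈ Finset.powersetCard b (Finset.powersetCard k S),
            if B ⊆ E then ghW U p E else 0 := by
        rw [Finset.sum_filter]
        refine Finset.sum_le_sum fun E hE => ?_
        have hw := ghW_nonneg U h0 h1 E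
        have hnn : ∀ B : Finset (Finset (Fin n)), 0 ≤ if B ⊆ E then ghW U p E else 0 := by
          intro B; split_ifs <;> [exact hw; exact le_rfl]
        by_cases hg : ¬ goodE n k E
        · rw [if_pos hg]
          obtain ⟨b, hb, S, hS, B, hB, hBE⟩ := bad_witness n k hk hkn E (fun e he =>
            (Finset.mem_powersetCard.1 (Finset.mem_powerset.1 hE he)).2) hg
          have e1 := Finset.single_le_sum (f := fun B => if B ⊆ E then ghW U p E else 0)
            (fun B _ => hnn B) hB
          have e2 := Finset.single_le_sum
            (f := fun S => ∑ B ∈ Finset.powersetCard b (Finset.powersetCard k S),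
              if B ⊆ E then ghW U p E else 0)
            (fun S _ => Finset.sum_nonneg fun B _ => hnn B) hS
          have e3 := Finset.single_le_sum
            (f := fun b => ∑ S ∈ Finset.powersetCard (b * k / 4096) (Finset.univ : Finset (Fin n)),
              ∑ B ∈ Finset.powersetCard b (Finset.powersetCard k S),
              if B ⊆ E then ghW U p E else 0)
            (fun b _ => Finset.sum_nonneg fun S _ => Finset.sum_nonneg fun B _ => hnn B) hb
          simp only [if_pos hBE] at e1
          exact e1.trans (e2.trans e3)
        · rw [if_neg hg]
          exact Finset.sum_nonneg fun b _ => Finset.sum_nonneg fun S _ =>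
            Finset.sum_nonneg fun B _ => hnn B
    _ = ∑ b ∈ Finset.Icc 1 (n / k + 1),
          ∑ S ∈ Finset.powersetCard (b * k / 4096) (Finset.univ : Finset (Fin n)),
          ∑ B ∈ Finset.powersetCard b (Finset.powersetCard k S),
          ∑ E ∈ U.powerset, if B ⊆ E then ghW U p E else 0 := by
        rw [Finset.sum_comm]
        refine Finset.sum_congr rfl fun b _ => ?_
        rw [Finset.sum_comm]
        refine Finset.sum_congr rfl fun S _ => ?_
        rw [Finset.sum_comm]
    _ ≤ _ := by
        refine Finset.sum_le_sum fun b _ => ?_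
        have key : ∀ S ∈ Finset.powersetCard (b * k / 4096) (Finset.univ : Finset (Fin n)),
            ∑ B ∈ Finset.powersetCard b (Finset.powersetCard k S),
              ∑ E ∈ U.powerset, (if B ⊆ E then ghW U p E else 0)
            ≤ (((b * k / 4096).choose k : ℝ) * p) ^ b := by
          intro S hS
          have hSc := (Finset.mem_powersetCard.1 hS).2
          have : ∀ B ∈ Finset.powersetCard b (Finset.powersetCard k S),
              ∑ E ∈ U.powerset, (if B ⊆ E then ghW U p E else 0) = p ^ b := by
            intro B hB
            obtain ⟨hB1, hB2⟩ := Finset.mem_powersetCard.1 hB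
            rw [← Finset.sum_filter, ghW_sum_superset U B ?_, hB2]
            exact hB1.trans (Finset.powersetCard_mono (Finset.subset_univ S))
          rw [Finset.sum_congr rfl this, Finset.sum_const, Finset.card_powersetCard,
            Finset.card_powersetCard, hSc, nsmul_eq_mul, mul_pow]
          gcongr
          exact_mod_cast Nat.choose_le_pow _ _
        calc _ ≤ ∑ S ∈ Finset.powersetCard (b * k / 4096) (Finset.univ : Finset (Fin n)),
              (((b * k / 4096).choose k : ℝ) * p) ^ b := Finset.sum_le_sum key
          _ = _ := by
            rw [Finset.sum_const, Finset.card_powersetCard, nsmul_eq_mul, Finset.card_fin]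

open Classical in
theorem ghProb_eq (n k : ℕ) (p : ℝ) :
    ghProb n k p (fun G => goodE n k G.edges) = 1 -
    ∑ E ∈ (Finset.powersetCard k (Finset.univ : Finset (Fin n))).powerset with ¬ goodE n k E,
      ghW (Finset.powersetCard k (Finset.univ : Finset (Fin n))) p E := by
  rw [eq_sub_iff_add_eq, ← ghW_sum (Finset.powersetCard k (Finset.univ : Finset (Fin n))) p,
    Finset.sum_filter, ghProb, ← Finset.sum_add_distrib]
  refine Finset.sum_congr rfl fun E hE => ?_
  have h : ∀ e ∈ E, e.card = k := fun e he =>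
    (Finset.mem_powersetCard.1 (Finset.mem_powerset.1 hE he)).2
  rw [dif_pos h]
  by_cases hg : goodE n k E
  · simp [hg, ghW]
  · simp [hg]

theorem main_bound (n k : ℕ) (p : ℝ) (hk : 2 ≤ k) (hp : 0 < p) (hn : 1 ≤ n)
    (hkn : 2048 * k ≤ n) (hlog : (n : ℝ) ^ 4 ≤ 2 ^ k)
    (hd : p * k * (((n - 1).choose (k - 1) : ℕ) : ℝ) ≤ (n : ℝ)) :
    1 - 1 / (n : ℝ) ≤ ghProb n k p (fun G => goodE n k G.edges) ∧
      ghProb n k p (fun G => goodE n k G.edges) ≤ 1 := by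
  classical
  have hn' : (1 : ℝ) ≤ n := by exact_mod_cast hn
  have hk' : (2 : ℝ) ≤ k := by exact_mod_cast hk
  have hch : (n : ℝ) * (n - 1).choose (k - 1) = n.choose k * k := by
    obtain ⟨m, rfl⟩ : ∃ m, n = m + 1 := ⟨n - 1, by omega⟩
    obtain ⟨j, rfl⟩ : ∃ j, k = j + 1 := ⟨k - 1, by omega⟩
    have := Nat.add_one_mul_choose_eq m j
    simp only [Nat.add_sub_cancel]
    exact_mod_cast this
  have hm2 : p * n.choose k * (k : ℝ) ^ 2 ≤ (n : ℝ) ^ 2 := by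
    calc p * n.choose k * (k : ℝ) ^ 2 = p * k * (n.choose k * k) := by ring
      _ = (p * k * (n - 1).choose (k - 1)) * n := by rw [← hch]; ring
      _ ≤ n * n := by gcongr
      _ = _ := by ring
  have hm : p * n.choose k ≤ (n : ℝ) ^ 2 := by
    refine le_trans ?_ hm2
    exact le_mul_of_one_le_right (by positivity) (one_le_pow₀ (by linarith))
  have hp1 : p ≤ 1 := by
    have h1 := choose_mul_pow_le k n k (by omega)
    rw [Nat.choose_self, one_mul] at h1
    have h1' : (n : ℝ) ^ k ≤ (k : ℝ) ^ k * n.choose k := by exact_mod_cast h1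
    have hkn' : (k : ℝ) ≤ n := by exact_mod_cast (by omega : k ≤ n)
    have h2 : (n : ℝ) ^ 2 ≤ (k : ℝ) ^ 2 * n.choose k := by
      have h3 : (k : ℝ) ^ (k - 2) ≤ (n : ℝ) ^ (k - 2) := by gcongr
      have h4 : (n : ℝ) ^ k = (n : ℝ) ^ 2 * (n : ℝ) ^ (k - 2) := by
        rw [← pow_add]; congr 1; omega
      have h5 : (k : ℝ) ^ k = (k : ℝ) ^ 2 * (k : ℝ) ^ (k - 2) := by
        rw [← pow_add]; congr 1; omega
      rw [h4, h5] at h1'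
      have h6 : (0 : ℝ) < (k : ℝ) ^ (k - 2) := by positivity
      refine le_of_mul_le_mul_right ?_ h6
      calc (n : ℝ) ^ 2 * (k : ℝ) ^ (k - 2) ≤ (n : ℝ) ^ 2 * (n : ℝ) ^ (k - 2) := by gcongr
        _ ≤ _ := h1'
        _ = _ := by ring
    have h7 : 0 < (k : ℝ) ^ 2 * n.choose k := lt_of_lt_of_le (by positivity) h2
    refine le_of_mul_le_mul_right ?_ h7
    calc p * ((k : ℝ) ^ 2 * n.choose k) = p * n.choose k * (k : ℝ) ^ 2 := by ring
      _ ≤ _ := hm2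
      _ ≤ _ := h2
      _ = _ := by ring
  rw [ghProb_eq]
  constructor
  · have h1 := bad_sum_le n k p hp.le hp1 hk (by omega)
    have h2 : ∑ b ∈ Finset.Icc 1 (n / k + 1), (n.choose (b * k / 4096) : ℝ) *
        (((b * k / 4096).choose k : ℝ) * p) ^ b ≤
        ∑ b ∈ Finset.Icc 1 (n / k + 1), 1 / (n : ℝ) ^ 2 := by
      refine Finset.sum_le_sum fun b hb => ?_
      obtain ⟨hb1, hb2⟩ := Finset.mem_Icc.1 hb
      have h5 : b * k ≤ n + k := by
        have := Nat.div_mul_le_self n k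
        calc b * k ≤ (n / k + 1) * k := Nat.mul_le_mul_right _ hb2
          _ = (n / k) * k + k := by ring
          _ ≤ _ := by omega
      exact term_bound n k _ b p hp.le hk hb1 hn (by omega) (by omega) hm hlog
    rw [Finset.sum_const, Nat.card_Icc, nsmul_eq_mul] at h2
    have h3 : n / k + 1 ≤ n := by
      have : n / k ≤ n / 2 := Nat.div_le_div_left hk (by norm_num)
      omega
    have h4 : ((n / k + 1 + 1 - 1 : ℕ) : ℝ) * (1 / (n : ℝ) ^ 2) ≤ 1 / n := by
      calc ((n / k + 1 + 1 - 1 : ℕ) : ℝ) * (1 / (n : ℝ) ^ 2) ≤ (n : ℝ) * (1 / (n : ℝ) ^ 2) := by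
            gcongr; simpa using h3
        _ = _ := by field_simp
    linarith
  · have : 0 ≤ ∑ E ∈ (Finset.powersetCard k (Finset.univ : Finset (Fin n))).powerset with
        ¬ goodE n k E, ghW (Finset.powersetCard k (Finset.univ : Finset (Fin n))) p E :=
      Finset.sum_nonneg fun E _ => ghW_nonneg _ hp.le hp1 E
    linarith

/-- whp edge sets of `G^k(n,p)` cover many vertices. -/
theorem whp_Gknp_edge_set_overlap_large (k : ℕ → ℕ) (p : ℕ → ℝ)
    (hk2 : ∀ n, 2 ≤ k n) (hp : ∀ n, 0 < p n)
    (hk : Filter.Tendsto (fun n => (k n : ℝ) / Real.log n) Filter.atTop Filter.atTop)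
    (hkn : ∀ᶠ n in Filter.atTop, (k n : ℝ) ≤ (2 : ℝ) ^ (-11 : ℤ) * n)
    (hdn : ∀ᶠ n in Filter.atTop,
      p n * k n * (((n - 1).choose (k n - 1) : ℕ) : ℝ) ≤ (n : ℝ)) :
    Filter.Tendsto
      (fun n => ghProb n (k n) (p n) (fun G =>
        ∀ B : Finset (Finset (Fin n)), B ⊆ G.edges →
          (2 : ℝ) ^ (-12 : ℤ) * min ((B.card : ℝ) * k n) (n : ℝ)
            ≤ ((B.biUnion id).card : ℝ)))
      Filter.atTop (nhds 1) := by
  have hkl : ∀ᶠ n : ℕ in Filter.atTop, (n : ℝ) ^ 4 ≤ 2 ^ (k n) := by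
    filter_upwards [hk.eventually_ge_atTop 8, Filter.eventually_ge_atTop 2] with n h1 h2
    have hn : (2 : ℝ) ≤ n := by exact_mod_cast h2
    have hl : 0 < Real.log n := Real.log_pos (by linarith)
    rw [le_div_iff₀ hl] at h1
    rw [← Real.log_le_log_iff (by positivity) (by positivity), Real.log_pow, Real.log_pow]
    have := Real.log_two_gt_d9
    have hk0 : (0 : ℝ) ≤ k n := by positivity
    push_cast
    nlinarith
  have hmain : ∀ᶠ n : ℕ in Filter.atTop,
      1 - 1 / (n : ℝ) ≤ ghProb n (k n) (p n) (fun G => goodE n (k n) G.edges) ∧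
      ghProb n (k n) (p n) (fun G => goodE n (k n) G.edges) ≤ 1 := by
    filter_upwards [hkl, hkn, hdn, Filter.eventually_ge_atTop 1] with n h1 h2 h3 h4
    refine main_bound n (k n) (p n) (hk2 n) (hp n) h4 ?_ h1 h3
    have hz : (2 : ℝ) ^ (-11 : ℤ) = 1 / 2048 := by norm_num
    rw [hz] at h2
    have : 2048 * (k n : ℝ) ≤ n := by linarith
    exact_mod_cast this
  refine tendsto_of_tendsto_of_tendsto_of_le_of_le' (g := fun n : ℕ => 1 - 1 / (n : ℝ))
    (h := fun _ => (1 : ℝ)) ?_ tendsto_const_nhds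
    (hmain.mono fun n h => h.1) (hmain.mono fun n h => h.2)
  simpa using tendsto_one_div_atTop_nhds_zero_nat.const_sub (1 : ℝ)
end
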